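/- Fix integers 0 < k < n and an increasing homeomorphism τ : (0,1) → ℝ. For c ∈ 𝒞ⁿ'ᵏ define a loop λ_c : [0,1] → 𝒞ⁿ'ᵏ⁺¹ based at the empty configuration by λ_c(t) = c + τ(t)·e_{k+1} (the translate of c by τ(t) in the (k+1)st coordinate) for t ∈ (0,1), and λ_c(0) = λ_c(1) = ∅. Then each λ_c is a continuous loop, the assignment c ↦ λ_c is a continuous map from 𝒞ⁿ'ᵏ to the loop space Ω𝒞ⁿ'ᵏ⁺¹ (loops based at the empty configuration, with the compact-open topology), and this map is a weak homotopy equivalence, inducing isomorphisms on all homotopy groups. -/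

import Mathlib

/-!
The maps `Pi0Map Λ` and `HomotopyGroupMap (Fin i) Λ c` are bijective as soon as `Λ` has the
*compression property* `CPa m` for all `m`: a map from the `m`-ball to the target whose restriction
to the sphere is lifted to the source can be deformed, relative to the sphere, to a map which lifts
on the whole ball. Loops of configurations are handled in adjoint form, as families over
`ball × [-1,1]` (`CP`). Throughout, `j` is the coordinate with index `k`, called the height.

* A homotopy through maps to the loop space preserves the compression property
  (`CP.of_homotopy`). Translation by `τ` is deformed in this way (`Lh`) to the *sweep* `Qc`, which is
  linear in time in the compressed height coordinate `kap`. The sweep also makes sense for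
  configurations with heights in `(-∞, 1)`; the heights below `0` are then recovered from the sweep
  at time `1`.

* Given a family `b` of configurations, the zoom onto the slab `|x_i| < 1`, `i < j`, pushes all other
  points to infinity. Configurations being finite, each then has, together with its neighbours in
  the family, a height at which there are no points: a *wall* (`Walled`, `walled_zoom`). So only
  walled families have to be treated (`CP_of_walled`).

* A walled family `b` is lifted to a family `c` of configurations with heights below `1`, such
  that the sweep of `c` at time `1` agrees with `b` below the walls, and `c` has all heights in `(0,1)`
  at the end of the time interval (`walled_lift`). The lift is built cell by cell over a fine cubical
  grid (`GExt.box`, `good_cell`). When on passing to the next cell the wall changes, the points of `c`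
  above the lower wall have to be exchanged; they are moved into the region of positive heights and
  then off to infinity in the direction of a coordinate `i < j` (`exists_push`, `cell_core`,
  `cell_solve`). This is where `0 < k` enters.

* Families that agree below walls are homotopic: push everything above the walls to height
  `+∞` (`push_hrel`). Hence `b` is homotopic to the family of sweeps of `c` at time `1`, which in turn
  is homotopic to the family of sweeps of the final slice of `c` (`sweep_hrel`). That slice is the
  compressed lift (`CP_sweep`).

Continuity of all these families is verified by tracking the points of the limit configuration
inside every compact region (`Tracks`).
-/
open Metric Set

noncomputable section

/-- `ℝⁿ` as Euclidean space. -/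
abbrev Euc (n : ℕ) : Type := EuclideanSpace ℝ (Fin n)

/-- The set `𝒞ⁿ` of finite subsets of `ℝⁿ` (including the empty set). -/
def ConfSp (n : ℕ) : Type := {c : Set (Euc n) // c.Finite}

/-- The space of injective `p`-tuples of points of `U ⊆ ℝⁿ`, topologized as a subspace
of the product `(ℝⁿ)ᵖ`. -/
def InjTup (n p : ℕ) (U : Set (Euc n)) : Set (Fin p → Euc n) :=
  {f | Function.Injective f ∧ ∀ i, f i ∈ U}

/-- `V` is an open set of `p`-element subsets of `U`, for the quotient topology induced
by the map sending an injective `p`-tuple in `U` to its underlying `p`-element set. -/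
def IsOpenPSubsets (n p : ℕ) (U : Set (Euc n)) (V : Set (Set (Euc n))) : Prop :=
  (∀ s ∈ V, s ⊆ U ∧ s.ncard = p) ∧
    IsOpen {f : InjTup n p U | Set.range (f : Fin p → Euc n) ∈ V}

/-- The topology on `𝒞ⁿ` generated by the basic sets `C(B,V)`, where `B` is a closed ball
centered at the origin, `V` is an open set of `p`-element subsets of the interior of `B`,
and `C(B,V)` consists of the finite sets `c` with `c ∩ ∂B = ∅` and `c ∩ B ∈ V`. -/
instance ConfSp.topologicalSpace (n : ℕ) : TopologicalSpace (ConfSp n) :=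
  TopologicalSpace.generateFrom
    {S | ∃ (r : ℝ) (_ : 0 < r) (p : ℕ) (V : Set (Set (Euc n))),
      IsOpenPSubsets n p (ball (0 : Euc n) r) V ∧
      S = {c : ConfSp n | c.1 ∩ sphere (0 : Euc n) r = ∅ ∧ c.1 ∩ closedBall (0 : Euc n) r ∈ V}}

/-- The region `ℝᵏ × (0,1)ⁿ⁻ᵏ` inside `ℝⁿ`. -/
def BoxRegion (n k : ℕ) : Set (Euc n) :=
  {x | ∀ i : Fin n, k ≤ (i : ℕ) → x i ∈ Ioo (0 : ℝ) 1}

/-- The subspace `𝒞ⁿ'ᵏ` of `𝒞ⁿ` consisting of configurations contained in `ℝᵏ × (0,1)ⁿ⁻ᵏ`. -/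
def ConfSpk (n k : ℕ) : Type := {c : ConfSp n // c.1 ⊆ BoxRegion n k}

/-- The region `ℝᵏ × (0,a) × (0,1)ⁿ⁻ᵏ⁻¹` inside `ℝⁿ`. -/
def SlabRegion (n k : ℕ) (a : ℝ) : Set (Euc n) :=
  {x | (∀ i : Fin n, (i : ℕ) = k → x i ∈ Ioo 0 a) ∧
    ∀ i : Fin n, k < (i : ℕ) → x i ∈ Ioo (0 : ℝ) 1}

/-- The monoid space `ℳⁿ'ᵏ`: the subspace of `𝒞ⁿ × [0,∞)` of pairs `(c,a)` with
`c ⊆ ℝᵏ × (0,a) × (0,1)ⁿ⁻ᵏ⁻¹`. -/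
def Mon (n k : ℕ) : Type :=
  {q : ConfSp n × ℝ // 0 ≤ q.2 ∧ q.1.1 ⊆ SlabRegion n k q.2}
instance (n k : ℕ) : TopologicalSpace (ConfSpk n k) :=
  inferInstanceAs (TopologicalSpace {c : ConfSp n // c.1 ⊆ BoxRegion n k})

instance (n k : ℕ) : TopologicalSpace (Mon n k) :=
  inferInstanceAs (TopologicalSpace {q : ConfSp n × ℝ // 0 ≤ q.2 ∧ q.1.1 ⊆ SlabRegion n k q.2})
open ContinuousMap

/-- The map on path components induced by a continuous map. -/
def Pi0Map {X Y : Type*} [TopologicalSpace X] [TopologicalSpace Y] (f : C(X, Y)) :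
    ZerothHomotopy X → ZerothHomotopy Y :=
  Quotient.map f (fun a b (h : Joined a b) => show Joined (f a) (f b) from Nonempty.map (fun γ => γ.map f.continuous) h)

/-- The map on generalized loops (relative homotopy classes representatives) induced by
postcomposition with a continuous map. -/
def GenLoopMap {X Y : Type*} [TopologicalSpace X] [TopologicalSpace Y]
    (N : Type*) (f : C(X, Y)) (x : X) (p : GenLoop N X x) : GenLoop N Y (f x) :=
  ⟨f.comp p.1, fun y hy => by
    have h := p.2 y hy
    simp [ContinuousMap.comp_apply, h]⟩

/-- The map on homotopy groups induced by a continuous map. -/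
def HomotopyGroupMap {X Y : Type*} [TopologicalSpace X] [TopologicalSpace Y]
    (N : Type*) (f : C(X, Y)) (x : X) :
    HomotopyGroup N X x → HomotopyGroup N Y (f x) :=
  Quotient.map (GenLoopMap N f x)
    (fun _ _ h => Nonempty.map (fun H => H.compContinuousMap f) h)

/-- The empty configuration, as a point of `𝒞ⁿ'ᵏ`. -/
def emptyConf (n k : ℕ) : ConfSpk n k :=
  ⟨⟨∅, Set.finite_empty⟩, Set.empty_subset _⟩

/-- The translate of a configuration `c ∈ 𝒞ⁿ'ᵏ` by `a·e_{k+1}` (i.e. by `a` in the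
`(k+1)`st coordinate), viewed as a point of `𝒞ⁿ'ᵏ⁺¹`. -/
def translateConf (n k : ℕ) (hkn : k < n) (a : ℝ) (c : ConfSpk n k) : ConfSpk n (k + 1) :=
  ⟨⟨(fun v => v + EuclideanSpace.single (⟨k, hkn⟩ : Fin n) a) '' c.1.1, c.1.2.image _⟩, by
    rintro y ⟨x, hx, rfl⟩ i hi
    have hne : i ≠ (⟨k, hkn⟩ : Fin n) := by
      intro h
      rw [h] at hi
      simp at hi
    have hx' := c.2 hx i (by omega)
    simpa [PiLp.add_apply, EuclideanSpace.single_apply, hne] using hx'⟩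

/-- The loop `λ_c` in `𝒞ⁿ'ᵏ⁺¹` based at the empty configuration, given by
`λ_c(t) = c + τ(t)·e_{k+1}` for `t ∈ (0,1)` and `λ_c(0) = λ_c(1) = ∅`. -/
def rawLoop (n k : ℕ) (hkn : k < n) (τ : (Set.Ioo (0 : ℝ) 1) ≃ₜ ℝ) (c : ConfSpk n k)
    (t : unitInterval) : ConfSpk n (k + 1) :=
  if h : (t : ℝ) ∈ Set.Ioo (0 : ℝ) 1 then
    translateConf n k hkn (τ ⟨(t : ℝ), h⟩) c
  else emptyConf n (k + 1)

open Filter Topology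

/-! ### Convergence of configurations -/

/-- `x` lies in the cube `[-R, R]ⁿ`. -/
def CBd {n : ℕ} (R : ℝ) (x : Euc n) : Prop := ∀ i, |x i| ≤ R

lemma norm_le_of_cbd {n : ℕ} {R : ℝ} {x : Euc n} (h : CBd R x) :
    ‖x‖ ≤ Real.sqrt (∑ _i : Fin n, R ^ 2) := by
  rw [EuclideanSpace.norm_eq]
  apply Real.sqrt_le_sqrt
  apply Finset.sum_le_sum
  intro i _
  have := h i
  rw [Real.norm_eq_abs]
  gcongr

lemma cbd_of_norm_le {n : ℕ} {R : ℝ} {x : Euc n} (h : ‖x‖ ≤ R) : CBd R x := fun i => by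
  have := EuclideanSpace.norm_eq x
  have h2 : |x i| ≤ ‖x‖ := by
    rw [this]
    apply Real.le_sqrt_of_sq_le
    have := Finset.single_le_sum (f := fun i => ‖x i‖ ^ 2) (fun i _ => by positivity) (Finset.mem_univ i)
    simpa using this
  linarith

lemma eventually_ne_of_tendsto {Z α : Type*} [TopologicalSpace α] [T2Space α] {l : Filter Z}
    {f g : Z → α} {a b : α} (hf : Tendsto f l (𝓝 a)) (hg : Tendsto g l (𝓝 b)) (h : a ≠ b) :
    ∀ᶠ z in l, f z ≠ g z :=
  (hf.prodMk_nhds hg).eventually ((isOpen_ne_fun continuous_fst continuous_snd).mem_nhds h)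

/-- A tracking function for `Φ → c₀` along `l`: every point `p` of the limit is followed by a
point `q z p` of `Φ z` converging to it, and inside any cube the configuration `Φ z` eventually
consists of tracked points only. -/
def Tracks {Z : Type*} {n : ℕ} (Φ : Z → ConfSp n) (l : Filter Z) (c0 : ConfSp n)
    (q : Z → Euc n → Euc n) : Prop :=
  (∀ p ∈ c0.1, Tendsto (fun z => q z p) l (𝓝 p)) ∧
  (∀ p ∈ c0.1, ∀ᶠ z in l, q z p ∈ (Φ z).1) ∧
  (∀ R : ℝ, ∀ᶠ z in l, ∀ x ∈ (Φ z).1, CBd R x → ∃ p ∈ c0.1, q z p = x)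

lemma Tracks.tendsto {Z : Type*} {n : ℕ} {Φ : Z → ConfSp n} {l : Filter Z} {c0 : ConfSp n}
    {q : Z → Euc n → Euc n} (h : Tracks Φ l c0 q) : Tendsto Φ l (𝓝 c0) := by
  obtain ⟨h1, h2, h3⟩ := h
  rw [TopologicalSpace.tendsto_nhds_generateFrom_iff]
  rintro S ⟨r, hr, p, V, ⟨hV1, hV2⟩, rfl⟩ ⟨hs, hb⟩
  obtain ⟨hsub, hcard⟩ := hV1 _ hb
  set s0 := c0.1 ∩ closedBall 0 r with hs0
  have hfin : s0.Finite := c0.2.subset inter_subset_left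
  obtain ⟨f0, hinj, hran⟩ : ∃ f : Fin p → Euc n, Function.Injective f ∧ range f = s0 := by
    have : Finite s0 := hfin
    have e : Fin p ≃ s0 := (Finite.equivFinOfCardEq (by rw [← hcard]; rfl)).symm
    exact ⟨fun i => e i, Subtype.val_injective.comp e.injective, by
      rw [show (fun i => (e i : Euc n)) = Subtype.val ∘ e from rfl, range_comp, e.range_eq_univ]
      simp⟩
  obtain ⟨U, hU, hUO⟩ := isOpen_induced_iff.1 hV2
  have hf0m : ∀ i, f0 i ∈ s0 := fun i => hran ▸ mem_range_self i
  have hf0 : f0 ∈ U := by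
    have : (⟨f0, hinj, fun i => hsub (hf0m i)⟩ : InjTup n p (ball 0 r)) ∈ Subtype.val ⁻¹' U := by
      rw [hUO]; change range f0 ∈ V; rw [hran]; exact hb
    exact this
  have ht : Tendsto (fun z i => q z (f0 i)) l (𝓝 f0) :=
    tendsto_pi_nhds.2 fun i => h1 _ (hf0m i).1
  have e1 := ht (hU.mem_nhds hf0)
  have e2 : ∀ᶠ z in l, ∀ i j, i ≠ j → q z (f0 i) ≠ q z (f0 j) := by
    rw [eventually_all]; intro i
    rw [eventually_all]; intro j
    by_cases hij : i = j
    · exact Eventually.of_forall fun z h => absurd hij h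
    · filter_upwards [eventually_ne_of_tendsto (h1 _ (hf0m i).1) (h1 _ (hf0m j).1) (hinj.ne hij)]
        with z hz _ using hz
  have e3 : ∀ᶠ z in l, ∀ i, q z (f0 i) ∈ ball (0 : Euc n) r := by
    rw [eventually_all]; intro i
    exact (h1 _ (hf0m i).1) (isOpen_ball.mem_nhds (hsub (hf0m i)))
  have e4 : ∀ᶠ z in l, ∀ i, q z (f0 i) ∈ (Φ z).1 := by
    rw [eventually_all]; intro i
    exact h2 _ (hf0m i).1
  have e5 : ∀ᶠ z in l, ∀ p ∈ c0.1, p ∉ s0 → r < ‖q z p‖ := by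
    rw [eventually_all_finite c0.2]
    intro p hp
    by_cases hps : p ∈ s0
    · exact Eventually.of_forall fun z h => absurd hps h
    · have : r < ‖p‖ := by
        by_contra hh
        exact hps ⟨hp, by simpa using not_lt.1 hh⟩
      filter_upwards [(h1 p hp).norm.eventually (lt_mem_nhds this)] with z hz _ using hz
  filter_upwards [e1, e2, e3, e4, e5, h3 r] with z z1 z2 z3 z4 z5 z6
  have key : ∀ x ∈ (Φ z).1, ‖x‖ ≤ r → ∃ i, q z (f0 i) = x := by
    intro x hx hxr
    obtain ⟨p, hp, rfl⟩ := z6 x hx (cbd_of_norm_le hxr)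
    by_cases hps : p ∈ s0
    · rw [← hran] at hps
      obtain ⟨i, rfl⟩ := hps
      exact ⟨i, rfl⟩
    · exact absurd hxr (not_le.2 (z5 p hp hps))
  constructor
  · ext x
    simp only [mem_inter_iff, mem_sphere_iff_norm, sub_zero, mem_empty_iff_false, iff_false, not_and]
    intro hx hxr
    obtain ⟨i, rfl⟩ := key x hx hxr.le
    have := z3 i
    simp at this
    linarith
  · have hre : (Φ z).1 ∩ closedBall 0 r = range fun i => q z (f0 i) := by
      ext x
      constructor
      · rintro ⟨hx, hxr⟩
        exact key x hx (by simpa using hxr)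
      · rintro ⟨i, rfl⟩
        exact ⟨z4 i, ball_subset_closedBall (z3 i)⟩
    rw [hre]
    have hi : Function.Injective fun i => q z (f0 i) := by
      intro i j hij
      by_contra hne
      exact z2 i j hne hij
    have : (⟨fun i => q z (f0 i), hi, z3⟩ : InjTup n p (ball 0 r)) ∈ Subtype.val ⁻¹' U := z1
    rw [hUO] at this
    exact this

/-- A radius larger than `R` whose sphere misses a finite set. -/
lemma exists_good_radius {n : ℕ} {c : Set (Euc n)} (hc : c.Finite) (R : ℝ) :
    ∃ r, R < r ∧ 0 < r ∧ c ∩ sphere 0 r = ∅ := by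
  have : ((fun x : Euc n => ‖x‖) '' c).Finite := hc.image _
  obtain ⟨r, hr, hn⟩ := (Ioi_infinite (max R 0)).exists_notMem_finite this
  refine ⟨r, (le_max_left _ _).trans_lt hr, (le_max_right _ _).trans_lt hr, ?_⟩
  ext x
  simp only [mem_inter_iff, mem_sphere_iff_norm, sub_zero, mem_empty_iff_false, iff_false, not_and]
  exact fun hx h => hn ⟨x, hx, h⟩

lemma mem_nhds_conf {n : ℕ} (c0 : ConfSp n) {r : ℝ} (hr : 0 < r)
    (hs : c0.1 ∩ sphere 0 r = ∅) {ε : ℝ} (hε : 0 < ε) :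
    ∀ᶠ c : ConfSp n in 𝓝 c0, (c.1 ∩ closedBall 0 r).ncard = (c0.1 ∩ closedBall 0 r).ncard ∧
      ∀ p ∈ c0.1 ∩ closedBall 0 r, ∃ x ∈ c.1, dist x p < ε := by
  set s0 := c0.1 ∩ closedBall 0 r with hs0
  have hfin : s0.Finite := c0.2.subset inter_subset_left
  let V : Set (Set (Euc n)) := {s | s ⊆ ball 0 r ∧ s.ncard = s0.ncard ∧
    ∀ p ∈ s0, ∃ x ∈ s, dist x p < ε}
  have hV : IsOpenPSubsets n s0.ncard (ball 0 r) V := by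
    refine ⟨fun s hs => ⟨hs.1, hs.2.1⟩, ?_⟩
    have : {f : InjTup n s0.ncard (ball 0 r) | range (f.1 : Fin s0.ncard → Euc n) ∈ V} =
        ⋂ p ∈ s0, ⋃ i, {f | dist (f.1 i) p < ε} := by
      ext f
      simp only [mem_ofPred_eq, mem_iInter, mem_iUnion]
      constructor
      · rintro ⟨_, _, h⟩ p hp
        obtain ⟨x, ⟨i, rfl⟩, hx⟩ := h p hp
        exact ⟨i, hx⟩
      · intro h
        refine ⟨?_, ?_, fun p hp => ?_⟩
        · rintro _ ⟨i, rfl⟩; exact f.2.2 i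
        · rw [← Set.image_univ, ncard_image_of_injective _ f.2.1]; simp
        · obtain ⟨i, hi⟩ := h p hp
          exact ⟨_, ⟨i, rfl⟩, hi⟩
    rw [this]
    refine hfin.isOpen_biInter fun p _ => isOpen_iUnion fun i => ?_
    exact isOpen_lt (((continuous_apply i).comp continuous_subtype_val).dist continuous_const)
      continuous_const
  have hop : IsOpen {c : ConfSp n | c.1 ∩ sphere (0 : Euc n) r = ∅ ∧ c.1 ∩ closedBall (0 : Euc n) r ∈ V} :=
    TopologicalSpace.isOpen_generateFrom_of_mem ⟨r, hr, _, V, hV, rfl⟩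
  have hmem : c0 ∈ {c : ConfSp n | c.1 ∩ sphere (0 : Euc n) r = ∅ ∧ c.1 ∩ closedBall (0 : Euc n) r ∈ V} := by
    refine ⟨hs, ?_, rfl, fun p hp => ⟨p, hp, by simpa using hε⟩⟩
    rintro x ⟨hx, hxr⟩
    rw [mem_ball_zero_iff]
    rw [mem_closedBall_zero_iff] at hxr
    refine lt_of_le_of_ne hxr fun h => ?_
    have : x ∈ c0.1 ∩ sphere 0 r := ⟨hx, by simpa using h⟩
    rw [hs] at this; exact this
  filter_upwards [hop.mem_nhds hmem] with c hc
  refine ⟨hc.2.2.1, fun p hp => ?_⟩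
  obtain ⟨x, hx, hd⟩ := hc.2.2.2 p hp
  exact ⟨x, hx.1, hd⟩

lemma exists_tracks_id {n : ℕ} (c0 : ConfSp n) : ∃ q, Tracks id (𝓝 c0) c0 q := by
  have hq : ∀ (c : ConfSp n) (p : Euc n), ∃ x, c.1.Nonempty → x ∈ c.1 ∧ ∀ y ∈ c.1, dist x p ≤ dist y p := by
    intro c p
    by_cases h : c.1.Nonempty
    · obtain ⟨x, hx, hm⟩ := Set.exists_min_image c.1 (fun x => dist x p) c.2 h
      exact ⟨x, fun _ => ⟨hx, hm⟩⟩
    · exact ⟨0, fun h' => absurd h' h⟩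
  choose q hq using hq
  have key : ∀ p ∈ c0.1, ∀ ε > 0, ∀ᶠ c in 𝓝 c0, q c p ∈ c.1 ∧ dist (q c p) p < ε := by
    intro p hp ε hε
    obtain ⟨r, hpr, hr, hs⟩ := exists_good_radius c0.2 ‖p‖
    filter_upwards [mem_nhds_conf c0 hr hs hε] with c hc
    obtain ⟨x, hx, hd⟩ := hc.2 p ⟨hp, by simpa using hpr.le⟩
    obtain ⟨h1, h2⟩ := hq c p ⟨x, hx⟩
    exact ⟨h1, (h2 x hx).trans_lt hd⟩
  have t1 : ∀ p ∈ c0.1, Tendsto (fun z => q z p) (𝓝 c0) (𝓝 p) := fun p hp =>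
    Metric.tendsto_nhds.2 fun ε hε => (key p hp ε hε).mono fun _ h => h.2
  refine ⟨q, t1, fun p hp => (key p hp 1 one_pos).mono fun _ h => h.1, fun R => ?_⟩
  obtain ⟨r, hRr, hr, hs⟩ := exists_good_radius c0.2 (Real.sqrt (∑ _i : Fin n, R ^ 2))
  set s0 := c0.1 ∩ closedBall 0 r with hs0
  have hfin : s0.Finite := c0.2.subset inter_subset_left
  have e1 : ∀ᶠ c in 𝓝 c0, ∀ p ∈ s0, q c p ∈ c.1 ∩ closedBall 0 r := by
    rw [eventually_all_finite hfin]
    intro p hp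
    have hpb : p ∈ ball (0 : Euc n) r := by
      rw [mem_ball_zero_iff]
      refine lt_of_le_of_ne (by simpa using hp.2) fun h => ?_
      have : p ∈ c0.1 ∩ sphere 0 r := ⟨hp.1, by simpa using h⟩
      rw [hs] at this; exact this
    filter_upwards [key p hp.1 1 one_pos, (t1 p hp.1) (isOpen_ball.mem_nhds hpb)] with c h1 h2
    exact ⟨h1.1, ball_subset_closedBall h2⟩
  have e2 : ∀ᶠ c in 𝓝 c0, ∀ p ∈ s0, ∀ p' ∈ s0, p ≠ p' → q c p ≠ q c p' := by
    rw [eventually_all_finite hfin]; intro p hp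
    rw [eventually_all_finite hfin]; intro p' hp'
    by_cases hij : p = p'
    · exact Eventually.of_forall fun z h => absurd hij h
    · filter_upwards [eventually_ne_of_tendsto (t1 _ hp.1) (t1 _ hp'.1) hij] with z hz _ using hz
  filter_upwards [e1, e2, mem_nhds_conf c0 hr hs one_pos] with c c1 c2 c3 x hx hxR
  have hinj : InjOn (q c) s0 := fun p hp p' hp' h => by
    by_contra hne
    exact c2 p hp p' hp' hne h
  have heq : q c '' s0 = c.1 ∩ closedBall 0 r := by
    apply Set.eq_of_subset_of_ncard_le
    · rintro _ ⟨p, hp, rfl⟩; exact c1 p hp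
    · rw [hinj.ncard_image, c3.1]
    · exact c.2.subset inter_subset_left
  have : x ∈ q c '' s0 := by
    rw [heq]
    exact ⟨hx, by simpa using (norm_le_of_cbd hxR).trans hRr.le⟩
  obtain ⟨p, hp, h⟩ := this
  exact ⟨p, hp.1, h⟩

lemma exists_tracks {Z : Type*} {n : ℕ} {Φ : Z → ConfSp n} {l : Filter Z} {c0 : ConfSp n}
    (h : Tendsto Φ l (𝓝 c0)) : ∃ q, Tracks Φ l c0 q := by
  obtain ⟨q, h1, h2, h3⟩ := exists_tracks_id c0
  exact ⟨fun z => q (Φ z), fun p hp => (h1 p hp).comp h, fun p hp => h.eventually (h2 p hp),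
    fun R => h.eventually (h3 R)⟩

/-- If the limit points `p` avoid a closed condition locally, so do the nearby bounded points. -/
lemma eventually_points {Z : Type*} {n : ℕ} {Φ : Z → ConfSp n} {l : Filter Z} {c0 : ConfSp n}
    (h : Tendsto Φ l (𝓝 c0)) {P : Euc n → Prop} (hP : ∀ p ∈ c0.1, ∀ᶠ x in 𝓝 p, P x) (R : ℝ) :
    ∀ᶠ z in l, ∀ x ∈ (Φ z).1, CBd R x → P x := by
  obtain ⟨q, h1, h2, h3⟩ := exists_tracks h
  have : ∀ᶠ z in l, ∀ p ∈ c0.1, P (q z p) := by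
    rw [eventually_all_finite c0.2]
    exact fun p hp => (h1 p hp).eventually (hP p hp)
  filter_upwards [this, h3 R] with z z1 z2 x hx hxR
  obtain ⟨p, hp, rfl⟩ := z2 x hx hxR
  exact z1 p hp

/-- The empty configuration. -/
def cEmpty (n : ℕ) : ConfSp n := ⟨∅, finite_empty⟩

/-- The union of two configurations. -/
def cUnion {n : ℕ} (c d : ConfSp n) : ConfSp n := ⟨c.1 ∪ d.1, c.2.union d.2⟩

lemma tendsto_cUnion {Z : Type*} {n : ℕ} {Φ Ψ : Z → ConfSp n} {l : Filter Z} {c d : ConfSp n}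
    (h1 : Tendsto Φ l (𝓝 c)) (h2 : Tendsto Ψ l (𝓝 d)) (hd : ∀ p ∈ c.1, p ∉ d.1) :
    Tendsto (fun z => cUnion (Φ z) (Ψ z)) l (𝓝 (cUnion c d)) := by
  classical
  obtain ⟨q, a1, a2, a3⟩ := exists_tracks h1
  obtain ⟨r, b1, b2, b3⟩ := exists_tracks h2
  apply Tracks.tendsto (q := fun z p => if p ∈ c.1 then q z p else r z p)
  have hn : ∀ p ∈ d.1, p ∉ c.1 := fun p hp hc => hd p hc hp
  refine ⟨?_, ?_, ?_⟩
  · rintro p (hp | hp)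
    · simpa [hp] using a1 p hp
    · simpa [hn p hp] using b1 p hp
  · rintro p (hp | hp)
    · simp only [hp, if_true]
      exact (a2 p hp).mono fun z hz => Or.inl hz
    · simp only [hn p hp, if_false]
      exact (b2 p hp).mono fun z hz => Or.inr hz
  · intro R
    filter_upwards [a3 R, b3 R] with z z1 z2
    rintro x (hx | hx) hR
    · obtain ⟨p, hp, h⟩ := z1 x hx hR
      exact ⟨p, Or.inl hp, by simpa [hp] using h⟩
    · obtain ⟨p, hp, h⟩ := z2 x hx hR
      exact ⟨p, Or.inr hp, by simpa [hn p hp] using h⟩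

/-- The part of `c` inside `D`, moved by `φ`. -/
def cTrans {n : ℕ} (φ : Euc n → Euc n) (D : Set (Euc n)) (c : ConfSp n) : ConfSp n :=
  ⟨φ '' (c.1 ∩ D), (c.2.subset inter_subset_left).image _⟩

/-- The basic continuity criterion: points may be moved by a varying partially defined map,
provided points outside the limiting domain are sent to infinity and infinity is preserved. -/
lemma tendsto_trans {Z : Type*} {n : ℕ} {Φ : Z → ConfSp n} {l : Filter Z} {c0 : ConfSp n}
    (h : Tendsto Φ l (𝓝 c0)) {φ : Z → Euc n → Euc n} {D : Z → Set (Euc n)}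
    {φ0 : Euc n → Euc n} {D0 : Set (Euc n)}
    (h1 : ∀ p ∈ c0.1, p ∈ D0 → (∀ᶠ w : Z × Euc n in l ×ˢ 𝓝 p, w.2 ∈ D w.1) ∧
      Tendsto (fun w : Z × Euc n => φ w.1 w.2) (l ×ˢ 𝓝 p) (𝓝 (φ0 p)))
    (h2 : ∀ p ∈ c0.1, p ∉ D0 → ∀ R : ℝ, ∀ᶠ w : Z × Euc n in l ×ˢ 𝓝 p, w.2 ∈ D w.1 →
      ¬ CBd R (φ w.1 w.2))
    (h3 : ∀ R : ℝ, ∃ R' : ℝ, ∀ᶠ z in l, ∀ x ∈ (Φ z).1, x ∈ D z → CBd R (φ z x) → CBd R' x)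
    (h4 : InjOn φ0 (c0.1 ∩ D0)) :
    Tendsto (fun z => cTrans (φ z) (D z) (Φ z)) l (𝓝 (cTrans φ0 D0 c0)) := by
  classical
  obtain ⟨q, a1, a2, a3⟩ := exists_tracks h
  have hw : ∀ w, ∃ p, w ∈ (cTrans φ0 D0 c0).1 → p ∈ c0.1 ∩ D0 ∧ φ0 p = w := by
    intro w
    by_cases hh : w ∈ (cTrans φ0 D0 c0).1
    · obtain ⟨p, hp, e⟩ := hh
      exact ⟨p, fun _ => ⟨hp, e⟩⟩
    · exact ⟨w, fun h' => absurd h' hh⟩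
  choose r hr using hw
  have hr' : ∀ p ∈ c0.1, p ∈ D0 → r (φ0 p) = p := by
    intro p hp hpD
    obtain ⟨u1, u2⟩ := hr (φ0 p) ⟨p, ⟨hp, hpD⟩, rfl⟩
    exact h4 u1 ⟨hp, hpD⟩ u2
  have tq : ∀ p ∈ c0.1, Tendsto (fun z => (z, q z p)) l (l ×ˢ 𝓝 p) := fun p hp =>
    tendsto_id.prodMk (a1 p hp)
  apply Tracks.tendsto (q := fun z w => φ z (q z (r w)))
  refine ⟨?_, ?_, ?_⟩
  · rintro _ ⟨p, ⟨hp, hpD⟩, rfl⟩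
    simp only [hr' p hp hpD]
    exact (h1 p hp hpD).2.comp (tq p hp)
  · rintro _ ⟨p, ⟨hp, hpD⟩, rfl⟩
    simp only [hr' p hp hpD]
    filter_upwards [a2 p hp, (tq p hp).eventually (h1 p hp hpD).1] with z z1 z2
    exact ⟨_, ⟨z1, z2⟩, rfl⟩
  · intro R
    obtain ⟨R', hR'⟩ := h3 R
    have e : ∀ᶠ z in l, ∀ p ∈ c0.1, p ∉ D0 → q z p ∈ D z → ¬ CBd R (φ z (q z p)) := by
      rw [eventually_all_finite c0.2]
      intro p hp
      by_cases hpD : p ∈ D0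
      · exact Eventually.of_forall fun z h => absurd hpD h
      · filter_upwards [(tq p hp).eventually (h2 p hp hpD R)] with z hz _ using hz
    filter_upwards [hR', e, a3 R'] with z z1 z2 z3
    rintro _ ⟨x, ⟨hx, hxD⟩, rfl⟩ hR
    obtain ⟨p, hp, rfl⟩ := z3 x hx (z1 x hx hxD hR)
    by_cases hpD : p ∈ D0
    · exact ⟨φ0 p, ⟨p, ⟨hp, hpD⟩, rfl⟩, by simp only [hr' p hp hpD]⟩
    · exact absurd hR (z2 p hp hpD hxD)

lemma tendsto_cEmpty {Z : Type*} {n : ℕ} {Φ : Z → ConfSp n} {l : Filter Z}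
    (h : ∀ R : ℝ, ∀ᶠ z in l, ∀ x ∈ (Φ z).1, ¬ CBd R x) : Tendsto Φ l (𝓝 (cEmpty n)) := by
  apply Tracks.tendsto (q := fun _ p => p)
  refine ⟨fun p hp => absurd hp (by simp [cEmpty]), fun p hp => absurd hp (by simp [cEmpty]), fun R => ?_⟩
  filter_upwards [h R] with z hz x hx hR
  exact absurd hR (hz x hx)

/-! ### Moving a single coordinate -/

/-- `x` with its `j`th coordinate replaced by `y`. -/
def setC {n : ℕ} (j : Fin n) (x : Euc n) (y : ℝ) : Euc n :=
  WithLp.toLp 2 (Function.update x.ofLp j y)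

@[simp] lemma setC_same {n : ℕ} (j : Fin n) (x : Euc n) (y : ℝ) : setC j x y j = y := by
  simp [setC]

@[simp] lemma setC_ne {n : ℕ} {j i : Fin n} (h : i ≠ j) (x : Euc n) (y : ℝ) :
    setC j x y i = x i := by
  simp [setC, h]

lemma euc_ext {n : ℕ} {x y : Euc n} (h : ∀ i, x i = y i) : x = y := by
  ext i; exact h i

@[simp] lemma setC_setC {n : ℕ} (j : Fin n) (x : Euc n) (y y' : ℝ) :
    setC j (setC j x y) y' = setC j x y' := by
  apply euc_ext; intro i
  by_cases h : i = j
  · subst h; simp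
  · simp [h]

lemma setC_eq_self {n : ℕ} (j : Fin n) (x : Euc n) {y : ℝ} (h : y = x j) : setC j x y = x := by
  apply euc_ext; intro i
  by_cases h' : i = j
  · subst h'; simp [h]
  · simp [h']

lemma setC_inj {n : ℕ} {j : Fin n} {x x' : Euc n} {y y' : ℝ}
    (h : setC j x y = setC j x' y') (hj : x j = x' j) : x = x' := by
  apply euc_ext; intro i
  by_cases h' : i = j
  · subst h'; exact hj
  · have := congrArg (fun w : Euc n => w i) h
    simpa [h'] using this

lemma continuous_setC {n : ℕ} (j : Fin n) : Continuous fun w : Euc n × ℝ => setC j w.1 w.2 := by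
  unfold setC
  apply (PiLp.continuous_toLp 2 _).comp
  exact Continuous.update ((PiLp.continuous_ofLp 2 _).comp continuous_fst) j continuous_snd

lemma continuous_coord {n : ℕ} (j : Fin n) : Continuous fun x : Euc n => x j :=
  (continuous_apply j).comp (PiLp.continuous_ofLp 2 _)

/-- Move the `j`th coordinate by `f`, keeping only the points with `j`th coordinate in `D`. -/
def ytr {n : ℕ} (j : Fin n) (f : ℝ → ℝ) (D : Set ℝ) (c : ConfSp n) : ConfSp n :=
  cTrans (fun x => setC j x (f (x j))) {x | x j ∈ D} c

lemma mem_ytr {n : ℕ} {j : Fin n} {f : ℝ → ℝ} {D : Set ℝ} {c : ConfSp n} {w : Euc n} :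
    w ∈ (ytr j f D c).1 ↔ ∃ x ∈ c.1, x j ∈ D ∧ setC j x (f (x j)) = w := by
  constructor
  · rintro ⟨x, ⟨h1, h2⟩, h3⟩; exact ⟨x, h1, h2, h3⟩
  · rintro ⟨x, h1, h2, h3⟩; exact ⟨x, ⟨h1, h2⟩, h3⟩

lemma tendsto_ytr {Z : Type*} {n : ℕ} {j : Fin n} {Φ : Z → ConfSp n} {l : Filter Z}
    {c0 : ConfSp n} (h : Tendsto Φ l (𝓝 c0)) {f : Z → ℝ → ℝ} {D : Z → Set ℝ}
    {f0 : ℝ → ℝ} {D0 : Set ℝ}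
    (h1 : ∀ p ∈ c0.1, p j ∈ D0 → (∀ᶠ w : Z × ℝ in l ×ˢ 𝓝 (p j), w.2 ∈ D w.1) ∧
      Tendsto (fun w : Z × ℝ => f w.1 w.2) (l ×ˢ 𝓝 (p j)) (𝓝 (f0 (p j))))
    (h2 : ∀ p ∈ c0.1, p j ∉ D0 → ∀ R : ℝ, ∀ᶠ w : Z × ℝ in l ×ˢ 𝓝 (p j), w.2 ∈ D w.1 →
      R < |f w.1 w.2|)
    (h3 : ∀ R : ℝ, ∃ R' : ℝ, ∀ᶠ z in l, ∀ x ∈ (Φ z).1, x j ∈ D z → |f z (x j)| ≤ R → |x j| ≤ R')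
    (h4 : ∀ p ∈ c0.1, ∀ p' ∈ c0.1, p j ∈ D0 → p' j ∈ D0 → f0 (p j) = f0 (p' j) → p j = p' j) :
    Tendsto (fun z => ytr j (f z) (D z) (Φ z)) l (𝓝 (ytr j f0 D0 c0)) := by
  have tj : ∀ p : Euc n, Tendsto (fun w : Z × Euc n => (w.1, w.2 j)) (l ×ˢ 𝓝 p) (l ×ˢ 𝓝 (p j)) :=
    fun p => tendsto_fst.prodMk (((continuous_coord j).tendsto p).comp tendsto_snd)
  apply tendsto_trans h
  · intro p hp hpD
    obtain ⟨u1, u2⟩ := h1 p hp hpD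
    refine ⟨(tj p).eventually u1, ?_⟩
    exact ((continuous_setC j).tendsto (p, f0 (p j))).comp
      (tendsto_snd.prodMk_nhds (u2.comp (tj p)))
  · intro p hp hpD R
    filter_upwards [(tj p).eventually (h2 p hp hpD R)] with w hw hD hR
    have := hR j
    simp only [setC_same] at this
    exact absurd (hw hD) (not_lt.2 this)
  · intro R
    obtain ⟨R', hR'⟩ := h3 R
    refine ⟨max R R', ?_⟩
    filter_upwards [hR'] with z hz x hx hD hb i
    by_cases hi : i = j
    · subst hi
      have := hb i
      simp only [setC_same] at this
      exact (hz x hx hD this).trans (le_max_right _ _)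
    · have := hb i
      simp only [setC_ne hi] at this
      exact this.trans (le_max_left _ _)
  · rintro p ⟨hp, hpD⟩ p' ⟨hp', hpD'⟩ he
    apply setC_inj he
    apply h4 p hp p' hp' hpD hpD'
    have := congrArg (fun w : Euc n => w j) he
    simpa using this

/-! ### The compressed coordinate -/

/-- The increasing homeomorphism `ℝ → (-1, 1)`. -/
def kap (x : ℝ) : ℝ := x / (1 + |x|)

/-- The inverse `(-1, 1) → ℝ` of `kap`. -/
def kinv (v : ℝ) : ℝ := v / (1 - |v|)

lemma abs_kap (x : ℝ) : |kap x| = |x| / (1 + |x|) := by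
  rw [kap, abs_div, abs_of_pos (show (0 : ℝ) < 1 + |x| by positivity)]

lemma abs_kap_lt (x : ℝ) : |kap x| < 1 := by
  rw [abs_kap, div_lt_one (by positivity)]; linarith

@[simp] lemma kinv_kap (x : ℝ) : kinv (kap x) = x := by
  unfold kinv
  rw [abs_kap, kap]
  have : (1 + |x|) ≠ 0 := by positivity
  have h2 : 1 - |x| / (1 + |x|) = 1 / (1 + |x|) := by field_simp; ring
  rw [h2]; field_simp

lemma kap_kinv {v : ℝ} (h : |v| < 1) : kap (kinv v) = v := by
  unfold kap kinv
  have h1 : 0 < 1 - |v| := by linarith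
  rw [abs_div, abs_of_pos h1]
  have : 1 + |v| / (1 - |v|) = 1 / (1 - |v|) := by field_simp; ring
  rw [this]; field_simp

lemma kap_strictMono : StrictMono kap := by
  intro x y h
  unfold kap
  rw [div_lt_div_iff₀ (by positivity) (by positivity)]
  rcases le_total 0 x with hx | hx <;> rcases le_total 0 y with hy | hy <;>
    simp only [abs_of_nonneg, abs_of_nonpos, hx, hy] <;> nlinarith

lemma continuous_kap : Continuous kap := by
  unfold kap
  exact continuous_id.div (by fun_prop) fun x => by positivity

lemma continuousAt_kinv {v : ℝ} (h : |v| < 1) : ContinuousAt kinv v := by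
  unfold kinv
  exact continuousAt_id.div (by fun_prop) (by linarith)

lemma abs_le_of_kinv {v R : ℝ} (h : |v| < 1) (hk : |kinv v| ≤ R) : |v| ≤ 1 - 1 / (1 + |R|) := by
  have hp : 0 < 1 + |R| := by positivity
  have : |kinv v| ≤ |R| := hk.trans (le_abs_self R)
  rw [kinv, abs_div, abs_of_pos (show 0 < 1 - |v| by linarith), div_le_iff₀ (by linarith)] at this
  rw [le_sub_iff_add_le, ← le_sub_iff_add_le', div_le_iff₀ hp]
  nlinarith

lemma kinv_lt_kinv {v w : ℝ} (hv : |v| < 1) (hw : |w| < 1) : kinv v < kinv w ↔ v < w := by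
  rw [← kap_strictMono.lt_iff_lt, kap_kinv hv, kap_kinv hw]

/-- Move the `j`th coordinate so that its compressed value becomes `v`; points with
`|v| ≥ 1` disappear at infinity. -/
def vtr {n : ℕ} (j : Fin n) (v : ℝ → ℝ) (c : ConfSp n) : ConfSp n :=
  ytr j (fun y => kinv (v y)) {y | |v y| < 1} c

lemma mem_vtr {n : ℕ} {j : Fin n} {v : ℝ → ℝ} {c : ConfSp n} {w : Euc n} :
    w ∈ (vtr j v c).1 ↔ ∃ x ∈ c.1, |v (x j)| < 1 ∧ setC j x (kinv (v (x j))) = w := mem_ytr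

lemma tendsto_vtr {Z : Type*} {n : ℕ} {j : Fin n} {Φ : Z → ConfSp n} {l : Filter Z}
    {c0 : ConfSp n} (h : Tendsto Φ l (𝓝 c0)) {v : Z → ℝ → ℝ} {v0 : ℝ → ℝ}
    (h1 : ∀ p ∈ c0.1, Tendsto (fun w : Z × ℝ => v w.1 w.2) (l ×ˢ 𝓝 (p j)) (𝓝 (v0 (p j))))
    (h3 : ∀ δ > 0, ∃ R' : ℝ, ∀ᶠ z in l, ∀ x ∈ (Φ z).1, R' < |x j| → 1 - δ < |v z (x j)|)
    (h4 : ∀ p ∈ c0.1, ∀ p' ∈ c0.1, |v0 (p j)| < 1 → |v0 (p' j)| < 1 →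
      v0 (p j) = v0 (p' j) → p j = p' j) :
    Tendsto (fun z => vtr j (v z) (Φ z)) l (𝓝 (vtr j v0 c0)) := by
  have hpos : ∀ R : ℝ, 0 < 1 / (1 + |R|) := fun R => by positivity
  apply tendsto_ytr h
  · intro p hp hD
    refine ⟨(h1 p hp).abs.eventually (gt_mem_nhds hD), ?_⟩
    exact (continuousAt_kinv hD).tendsto.comp (h1 p hp)
  · intro p hp hD R
    have hD' : 1 ≤ |v0 (p j)| := not_lt.1 hD
    have : 1 - 1 / (1 + |R|) < |v0 (p j)| := by linarith [hpos R]
    filter_upwards [(h1 p hp).abs.eventually (lt_mem_nhds this)] with w hw hwD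
    by_contra hc
    linarith [abs_le_of_kinv hwD (not_lt.1 hc)]
  · intro R
    obtain ⟨R', hR'⟩ := h3 _ (hpos R)
    refine ⟨R', ?_⟩
    filter_upwards [hR'] with z hz x hx hD hk
    by_contra hc
    linarith [hz x hx (not_le.1 hc), abs_le_of_kinv hD hk]
  · intro p hp p' hp' hD hD' he
    apply h4 p hp p' hp' hD hD'
    have := congrArg kap he
    simpa only [kap_kinv hD, kap_kinv hD'] using this

/-! ### Homotopy extension on balls -/

lemma ContinuousOn.glue {α β : Type*} [TopologicalSpace α] [TopologicalSpace β] {f g : α → β}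
    {s t : Set α} (hs : IsClosed s) (ht : IsClosed t) (hf : ContinuousOn f s)
    (hg : ContinuousOn g t) (h : ∀ x ∈ s, x ∈ t → f x = g x) :
    ∃ k : α → β, ContinuousOn k (s ∪ t) ∧ EqOn k f s ∧ EqOn k g t := by
  classical
  have e1 : EqOn (s.piecewise f g) f s := fun x hx => by simp [hx]
  have e2 : EqOn (s.piecewise f g) g t := fun x hx => by
    by_cases hxs : x ∈ s
    · simp [hxs, h x hxs hx]
    · simp [hxs]
  exact ⟨_, (hf.congr e1).union_of_isClosed (hg.congr e2) hs ht, e1, e2⟩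

set_option linter.unusedSectionVars false

section HEP

variable {V : Type*} [NormedAddCommGroup V] [NormedSpace ℝ V] {Z : Type*} [TopologicalSpace Z]

/-- The closed unit ball. -/
abbrev Dk (V : Type*) [NormedAddCommGroup V] : Set V := closedBall 0 1

/-- The unit sphere. -/
abbrev Sp (V : Type*) [NormedAddCommGroup V] : Set V := sphere 0 1

lemma sp_sub : Sp V ⊆ Dk V := sphere_subset_closedBall

/-- `u` is continuous on `A` with values in `T`. -/
def CMap {α : Type*} [TopologicalSpace α] (A : Set α) (T : Set Z) (u : α → Z) : Prop :=
  ContinuousOn u A ∧ ∀ x ∈ A, u x ∈ T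

/-- `K` is a continuous family over `[0,1]` of maps on `A` with values in `T`. -/
def CFam {α : Type*} [TopologicalSpace α] (A : Set α) (T : Set Z) (K : α → ℝ → Z) : Prop :=
  CMap (A ×ˢ Icc (0 : ℝ) 1) T (Function.uncurry K)

lemma CFam.mem {α : Type*} [TopologicalSpace α] {A : Set α} {T : Set Z} {K : α → ℝ → Z}
    (h : CFam A T K) {x : α} (hx : x ∈ A) {θ : ℝ} (hθ : θ ∈ Icc (0 : ℝ) 1) : K x θ ∈ T :=
  h.2 (x, θ) ⟨hx, hθ⟩

lemma CMap.comp {α β : Type*} [TopologicalSpace α] [TopologicalSpace β] {A : Set α} {B : Set β}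
    {T : Set Z} {u : α → Z} (h : CMap A T u) {g : β → α} (hg : ContinuousOn g B)
    (hm : ∀ x ∈ B, g x ∈ A) : CMap B T (fun x => u (g x)) :=
  ⟨h.1.comp hg hm, fun x hx => h.2 _ (hm x hx)⟩

lemma CMap.congr {α : Type*} [TopologicalSpace α] {A : Set α}
    {T : Set Z} {u v : α → Z} (h : CMap A T u) (hv : ∀ x ∈ A, v x = u x) : CMap A T v :=
  ⟨h.1.congr hv, fun x hx => hv x hx ▸ h.2 x hx⟩

lemma CMap.mono {α : Type*} [TopologicalSpace α] {A B : Set α}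
    {T T' : Set Z} {u : α → Z} (h : CMap A T u) (hB : B ⊆ A) (hT : T ⊆ T') : CMap B T' u :=
  ⟨h.1.mono hB, fun x hx => hT (h.2 x (hB hx))⟩

lemma CFam.at {α : Type*} [TopologicalSpace α] {A : Set α} {T : Set Z} {K : α → ℝ → Z}
    (h : CFam A T K) {θ : ℝ} (hθ : θ ∈ Icc (0 : ℝ) 1) : CMap A T (fun x => K x θ) :=
  CMap.comp h (g := fun x => (x, θ)) (by fun_prop) fun _ hx => ⟨hx, hθ⟩

lemma CMap.glue {α : Type*} [TopologicalSpace α] {f g : α → Z} {T : Set Z}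
    {s t : Set α} (hs : IsClosed s) (ht : IsClosed t) (hf : CMap s T f)
    (hg : CMap t T g) (h : ∀ x ∈ s, x ∈ t → f x = g x) :
    ∃ k : α → Z, CMap (s ∪ t) T k ∧ EqOn k f s ∧ EqOn k g t := by
  obtain ⟨k, k1, k2, k3⟩ := ContinuousOn.glue hs ht hf.1 hg.1 h
  refine ⟨k, ⟨k1, ?_⟩, k2, k3⟩
  rintro x (hx | hx)
  · rw [k2 hx]; exact hf.2 x hx
  · rw [k3 hx]; exact hg.2 x hx

/-- Homotopy extension for the pair (ball, sphere). -/
theorem hep {T : Set Z} {u : V → Z} {K : V → ℝ → Z} (hu : CMap (Dk V) T u)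
    (hK : CFam (Sp V) T K) (h : ∀ x ∈ Sp V, K x 1 = u x) :
    ∃ L : V → ℝ → Z, CFam (Dk V) T L ∧ (∀ x ∈ Dk V, L x 1 = u x) ∧
      ∀ x ∈ Sp V, ∀ θ ∈ Icc (0 : ℝ) 1, L x θ = K x θ := by
  let A : Set (V × ℝ) := {w | (2 - w.2) * ‖w.1‖ ≤ 1} ∩ Dk V ×ˢ Icc 0 1
  let B : Set (V × ℝ) := {w | 1 ≤ (2 - w.2) * ‖w.1‖} ∩ Dk V ×ˢ Icc 0 1
  have hcl : IsClosed (Dk V ×ˢ Icc (0 : ℝ) 1) := isClosed_closedBall.prod isClosed_Icc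
  have hA : IsClosed A := (isClosed_le (by fun_prop) continuous_const).inter hcl
  have hB : IsClosed B := (isClosed_le continuous_const (by fun_prop)).inter hcl
  have hf : CMap A T (fun w : V × ℝ => u ((2 - w.2) • w.1)) := by
    refine hu.comp (by fun_prop) ?_
    rintro ⟨x, θ⟩ ⟨h1, h2, h3⟩
    simp only [mem_closedBall_zero_iff, norm_smul, Real.norm_eq_abs]
    rw [abs_of_nonneg (by linarith [h3.2])]
    exact h1
  have hpos : ∀ w ∈ B, 0 < ‖w.1‖ := by
    rintro ⟨x, θ⟩ ⟨h1, h2, h3⟩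
    refine (norm_nonneg x).lt_of_ne fun h0 => ?_
    simp only [mem_ofPred_eq, ← h0] at h1
    linarith
  have hBm : ∀ w ∈ B, (‖w.1‖⁻¹ • w.1, 2 - (2 - w.2) * ‖w.1‖) ∈ Sp V ×ˢ Icc (0 : ℝ) 1 := by
    rintro ⟨x, θ⟩ hw
    have hp := hpos _ hw
    obtain ⟨h1, h2, h3⟩ := hw
    simp only [mem_ofPred_eq] at h1
    simp only [mem_closedBall_zero_iff] at h2
    obtain ⟨h3, h4⟩ := h3
    simp only at h3 h4 hp
    refine ⟨?_, ?_, ?_⟩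
    · simp [norm_smul, hp.ne']
    · simp only; nlinarith
    · simp only; linarith
  have hg : CMap B T (fun w : V × ℝ => K (‖w.1‖⁻¹ • w.1) (2 - (2 - w.2) * ‖w.1‖)) := by
    refine CMap.comp hK (g := fun w : V × ℝ => (‖w.1‖⁻¹ • w.1, 2 - (2 - w.2) * ‖w.1‖)) ?_ hBm
    refine ContinuousOn.prodMk ?_ (by fun_prop)
    exact (ContinuousOn.inv₀ (by fun_prop) fun w hw => (hpos w hw).ne').smul (by fun_prop)
  obtain ⟨k, k1, k2, k3⟩ := CMap.glue hA hB hf hg (by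
    rintro ⟨x, θ⟩ h1 h2
    have hp := hpos _ h2
    have he : (2 - θ) * ‖x‖ = 1 := le_antisymm h1.1 h2.1
    have hm := (hBm _ h2).1
    simp only at hp hm ⊢
    rw [he, show (2 : ℝ) - 1 = 1 by norm_num, h _ hm, eq_inv_of_mul_eq_one_left he])
  have hAB : A ∪ B = Dk V ×ˢ Icc (0 : ℝ) 1 := by
    ext w
    simp only [A, B, mem_union, mem_inter_iff, mem_ofPred_eq]
    constructor
    · rintro (h | h) <;> exact h.2
    · intro h
      rcases le_total ((2 - w.2) * ‖w.1‖) 1 with h' | h'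
      · exact Or.inl ⟨h', h⟩
      · exact Or.inr ⟨h', h⟩
  rw [hAB] at k1
  refine ⟨fun x θ => k (x, θ), k1, ?_, ?_⟩
  · intro x hx
    have hn : ‖x‖ ≤ 1 := by simpa using hx
    have : (x, (1 : ℝ)) ∈ A := ⟨by simp only [mem_ofPred_eq]; linarith, hx, by simp⟩
    simp only [k2 this]
    norm_num
  · intro x hx θ hθ
    have hn : ‖x‖ = 1 := by simpa using hx
    have : (x, θ) ∈ B := ⟨by simp only [mem_ofPred_eq, hn]; linarith [hθ.2], sp_sub hx, hθ⟩
    simp only [k3 this, hn]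
    norm_num

/-- `b` and `b'` are homotopic on the ball relative to the sphere, through maps into `T`. -/
def HRel (T : Set Z) (b b' : V → Z) : Prop :=
  ∃ H : V → ℝ → Z, CFam (Dk V) T H ∧ (∀ x ∈ Dk V, H x 0 = b x) ∧ (∀ x ∈ Dk V, H x 1 = b' x) ∧
    ∀ x ∈ Sp V, ∀ h ∈ Icc (0 : ℝ) 1, H x h = b x

lemma HRel.congr {T : Set Z} {b b' d d' : V → Z} (h : HRel T b b') (h1 : ∀ x ∈ Dk V, d x = b x)
    (h2 : ∀ x ∈ Dk V, d' x = b' x) : HRel T d d' := by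
  obtain ⟨H, H1, H2, H3, H4⟩ := h
  exact ⟨H, H1, fun x hx => (H2 x hx).trans (h1 x hx).symm,
    fun x hx => (H3 x hx).trans (h2 x hx).symm,
    fun x hx h hh => (H4 x hx h hh).trans (h1 x (sp_sub hx)).symm⟩

lemma HRel.refl {T : Set Z} {b : V → Z} (h : CMap (Dk V) T b) : HRel T b b :=
  ⟨fun x _ => b x, h.comp (g := Prod.fst) (by fun_prop) fun _ hw => hw.1, fun _ _ => rfl,
    fun _ _ => rfl, fun _ _ _ _ => rfl⟩

lemma HRel.trans {T : Set Z} {b b' b'' : V → Z} (h : HRel T b b') (h' : HRel T b' b'') :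
    HRel T b b'' := by
  obtain ⟨H, H1, H2, H3, H4⟩ := h
  obtain ⟨G, G1, G2, G3, G4⟩ := h'
  have hcl : IsClosed (Dk V ×ˢ Icc (0 : ℝ) 1) := isClosed_closedBall.prod isClosed_Icc
  obtain ⟨k, k1, k2, k3⟩ := CMap.glue (T := T)
    (s := {w : V × ℝ | w.2 ≤ 1 / 2} ∩ Dk V ×ˢ Icc (0 : ℝ) 1)
    (t := {w : V × ℝ | 1 / 2 ≤ w.2} ∩ Dk V ×ˢ Icc (0 : ℝ) 1)
    ((isClosed_le (by fun_prop) continuous_const).inter hcl)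
    ((isClosed_le continuous_const (by fun_prop)).inter hcl)
    (f := fun w => H w.1 (2 * w.2)) (g := fun w => G w.1 (2 * w.2 - 1))
    (CMap.comp H1 (g := fun w : V × ℝ => (w.1, 2 * w.2)) (by fun_prop) (by
      rintro ⟨x, t⟩ ⟨h1, h2, h3, h4⟩
      simp only [mem_ofPred_eq] at h1 h3
      exact ⟨h2, by simp only; linarith, by simp only; linarith⟩))
    (CMap.comp G1 (g := fun w : V × ℝ => (w.1, 2 * w.2 - 1)) (by fun_prop) (by
      rintro ⟨x, t⟩ ⟨h1, h2, h3, h4⟩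
      simp only [mem_ofPred_eq] at h1 h4
      exact ⟨h2, by simp only; linarith, by simp only; linarith⟩)) (by
      rintro ⟨x, t⟩ ⟨h1, h2, h3⟩ ⟨h4, -⟩
      have : t = 1 / 2 := le_antisymm h1 h4
      subst this
      norm_num
      rw [H3 x h2, G2 x h2])
  have hun : Dk V ×ˢ Icc (0 : ℝ) 1 ⊆ ({w : V × ℝ | w.2 ≤ 1 / 2} ∩ Dk V ×ˢ Icc (0 : ℝ) 1) ∪
      ({w : V × ℝ | 1 / 2 ≤ w.2} ∩ Dk V ×ˢ Icc (0 : ℝ) 1) := by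
    intro w hw
    rcases le_total w.2 (1 / 2) with h | h
    · exact Or.inl ⟨h, hw⟩
    · exact Or.inr ⟨h, hw⟩
  refine ⟨fun x t => k (x, t), k1.mono hun subset_rfl, ?_, ?_, ?_⟩
  · intro x hx
    have := k2 (x := (x, 0)) ⟨by norm_num, hx, by simp⟩
    simp only [this, mul_zero, H2 x hx]
  · intro x hx
    have := k3 (x := (x, 1)) ⟨by norm_num, hx, by simp⟩
    simp only [this]
    norm_num [G3 x hx]
  · intro x hx t ht
    rcases le_total t (1 / 2) with h | h
    · have := k2 (x := (x, t)) ⟨h, sp_sub hx, ht⟩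
      simp only [this]
      exact H4 x hx _ ⟨by linarith [ht.1], by linarith⟩
    · have := k3 (x := (x, t)) ⟨h, sp_sub hx, ht⟩
      simp only [this]
      rw [G4 x hx _ ⟨by linarith, by linarith [ht.2]⟩, ← H3 x (sp_sub hx)]
      exact H4 x hx 1 (by simp)

lemma mem_dk_prod {s : V} {t : ℝ} : (s, t) ∈ Dk (V × ℝ) ↔ s ∈ Dk V ∧ t ∈ Icc (-1 : ℝ) 1 := by
  simp [Prod.norm_def, abs_le]

lemma mem_sp_prod {s : V} {t : ℝ} : (s, t) ∈ Sp (V × ℝ) ↔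
    (s ∈ Dk V ∧ (t = -1 ∨ t = 1)) ∨ (s ∈ Sp V ∧ t ∈ Icc (-1 : ℝ) 1) := by
  simp only [mem_sphere_iff_norm, sub_zero, Prod.norm_def, Real.norm_eq_abs,
    mem_closedBall_zero_iff, mem_Icc, ← abs_le]
  constructor
  · intro h
    rcases max_choice ‖s‖ |t| with h' | h' <;> rw [h'] at h
    · right; exact ⟨h, by rw [← h, ← h']; exact le_max_right _ _⟩
    · left; refine ⟨by rw [← h, ← h']; exact le_max_left _ _, ?_⟩
      rcases abs_choice t with h2 | h2 <;> rw [h2] at h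
      · exact Or.inr h
      · left; linarith
  · rintro (⟨h1, rfl | rfl⟩ | ⟨h1, h2⟩)
    · simpa using h1
    · simpa using h1
    · rw [h1]; exact max_eq_left h2

/-- The cylinder trick: two families of maps on the ball agreeing on the sphere; if they are
homotopic relative to the sphere at the end, they are so at the beginning. -/
theorem cyl {T : Set Z} {b t : V → ℝ → Z} (hb : CFam (Dk V) T b) (ht : CFam (Dk V) T t)
    (hbt : ∀ x ∈ Sp V, ∀ ψ ∈ Icc (0 : ℝ) 1, b x ψ = t x ψ)
    (h : HRel T (fun x => b x 1) (fun x => t x 1)) :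
    HRel T (fun x => b x 0) (fun x => t x 0) := by
  obtain ⟨H, H1, H2, H3, H4⟩ := h
  let A : Set ((V × ℝ) × ℝ) := {w | w.1.2 ≤ 0} ∩ Sp (V × ℝ) ×ˢ Icc 0 1
  let B : Set ((V × ℝ) × ℝ) := {w | 0 ≤ w.1.2} ∩ Sp (V × ℝ) ×ˢ Icc 0 1
  have hcl : IsClosed (Sp (V × ℝ) ×ˢ Icc (0 : ℝ) 1) := isClosed_sphere.prod isClosed_Icc
  have hA : IsClosed A := (isClosed_le (by fun_prop) continuous_const).inter hcl
  have hB : IsClosed B := (isClosed_le continuous_const (by fun_prop)).inter hcl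
  have hAB : A ∪ B = Sp (V × ℝ) ×ˢ Icc (0 : ℝ) 1 := by
    ext w
    simp only [A, B, mem_union, mem_inter_iff, mem_ofPred_eq]
    constructor
    · rintro (h | h) <;> exact h.2
    · intro h
      rcases le_total w.1.2 0 with h' | h'
      · exact Or.inl ⟨h', h⟩
      · exact Or.inr ⟨h', h⟩
  have hD : ∀ w : V × ℝ, w ∈ Dk (V × ℝ) → w.1 ∈ Dk V := fun w hw => (mem_dk_prod.1 hw).1
  obtain ⟨k, k1, k2, k3⟩ := CMap.glue (T := T) hA hB
    (f := fun w => b w.1.1 w.2) (g := fun w => t w.1.1 w.2)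
    (CMap.comp hb (g := fun w : (V × ℝ) × ℝ => (w.1.1, w.2)) (by fun_prop)
      fun w hw => ⟨hD w.1 (sp_sub hw.2.1), hw.2.2⟩)
    (CMap.comp ht (g := fun w : (V × ℝ) × ℝ => (w.1.1, w.2)) (by fun_prop)
      fun w hw => ⟨hD w.1 (sp_sub hw.2.1), hw.2.2⟩) (by
      rintro ⟨⟨s, τ⟩, ψ⟩ h1 h2
      have h0 : τ = 0 := le_antisymm h1.1 h2.1
      rcases mem_sp_prod.1 h1.2.1 with h3 | h3
      · rcases h3.2 with h4 | h4 <;> rw [h0] at h4 <;> norm_num at h4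
      · exact hbt _ h3.1 _ h1.2.2)
  rw [hAB] at k1
  have half : ∀ τ ∈ Icc (-1 : ℝ) 1, (1 + τ) / 2 ∈ Icc (0 : ℝ) 1 := fun τ hτ =>
    ⟨by linarith [hτ.1], by linarith [hτ.2]⟩
  have hu : CMap (Dk (V × ℝ)) T (fun w => H w.1 ((1 + w.2) / 2)) :=
    CMap.comp H1 (g := fun w : V × ℝ => (w.1, (1 + w.2) / 2)) (by fun_prop)
      fun w hw => ⟨(mem_dk_prod.1 hw).1, half _ (mem_dk_prod.1 hw).2⟩
  have kA : ∀ s τ ψ, τ ≤ 0 → (s, τ) ∈ Sp (V × ℝ) → ψ ∈ Icc (0 : ℝ) 1 → k ((s, τ), ψ) = b s ψ :=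
    fun s τ ψ h1 h2 h3 => k2 (x := ((s, τ), ψ)) ⟨h1, h2, h3⟩
  have kB : ∀ s τ ψ, 0 ≤ τ → (s, τ) ∈ Sp (V × ℝ) → ψ ∈ Icc (0 : ℝ) 1 → k ((s, τ), ψ) = t s ψ :=
    fun s τ ψ h1 h2 h3 => k3 (x := ((s, τ), ψ)) ⟨h1, h2, h3⟩
  have i0 : (0 : ℝ) ∈ Icc (0 : ℝ) 1 := by simp
  have i1 : (1 : ℝ) ∈ Icc (0 : ℝ) 1 := by simp
  obtain ⟨L, L1, L2, L3⟩ := hep (K := fun w ψ => k (w, ψ)) hu k1 (by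
    rintro ⟨s, τ⟩ hw
    rcases mem_sp_prod.1 hw with ⟨h1, rfl | rfl⟩ | ⟨h1, h2⟩
    · rw [kA _ _ _ (by norm_num) hw i1]; norm_num [H2 s h1]
    · rw [kB _ _ _ (by norm_num) hw i1]; norm_num [H3 s h1]
    · have : k ((s, τ), 1) = b s 1 := by
        rcases le_total τ 0 with h | h
        · rw [kA _ _ _ h hw i1]
        · rw [kB _ _ _ h hw i1, hbt s h1 _ i1]
      rw [this]; exact (H4 s h1 _ (half _ h2)).symm)
  have two : ∀ h ∈ Icc (0 : ℝ) 1, 2 * h - 1 ∈ Icc (-1 : ℝ) 1 := fun τ hτ =>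
    ⟨by linarith [hτ.1], by linarith [hτ.2]⟩
  refine ⟨fun s h => L (s, 2 * h - 1) 0, ?_, ?_, ?_, ?_⟩
  · exact CMap.comp L1 (g := fun w : V × ℝ => ((w.1, 2 * w.2 - 1), 0)) (by fun_prop)
      fun w hw => ⟨mem_dk_prod.2 ⟨hw.1, two _ hw.2⟩, i0⟩
  · intro s hs
    have : (s, (2 * 0 - 1 : ℝ)) ∈ Sp (V × ℝ) := mem_sp_prod.2 (Or.inl ⟨hs, by norm_num⟩)
    change L (s, 2 * 0 - 1) 0 = b s 0
    rw [L3 _ this _ i0, kA _ _ _ (by norm_num) this i0]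
  · intro s hs
    have : (s, (2 * 1 - 1 : ℝ)) ∈ Sp (V × ℝ) := mem_sp_prod.2 (Or.inl ⟨hs, by norm_num⟩)
    change L (s, 2 * 1 - 1) 0 = t s 0
    rw [L3 _ this _ i0, kB _ _ _ (by norm_num) this i0]
  · intro s hs h hh
    have : (s, 2 * h - 1) ∈ Sp (V × ℝ) := mem_sp_prod.2 (Or.inr ⟨hs, two _ hh⟩)
    change L (s, 2 * h - 1) 0 = b s 0
    rw [L3 _ this _ i0]
    rcases le_total (2 * h - 1) 0 with h' | h'
    · rw [kA _ _ _ h' this i0]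
    · rw [kB _ _ _ h' this i0, hbt s hs _ i0]

/-- A map into loops (parametrized by `[-1,1]`, based at `e`) has the compression property
for the ball of `V`: families of loops over the ball, lifted over the sphere, lift up to a
homotopy relative to the sphere. -/
def CP (V : Type*) [NormedAddCommGroup V] (e : Z) (TX TY : Set Z) (Λ : Z → ℝ → Z) : Prop :=
  ∀ (a : V → Z) (b : V × ℝ → Z), CMap (Sp V) TX a → CMap (Dk (V × ℝ)) TY b →
    (∀ s ∈ Sp V, ∀ t ∈ Icc (-1 : ℝ) 1, b (s, t) = Λ (a s) t) →
    (∀ s ∈ Dk V, b (s, -1) = e ∧ b (s, 1) = e) →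
    ∃ g : V → Z, CMap (Dk V) TX g ∧ (∀ s ∈ Sp V, g s = a s) ∧
      HRel TY (fun w : V × ℝ => Λ (g w.1) w.2) b

/-- A lifting problem deformed through lifting problems: a solution at the end yields a
solution at the beginning. -/
theorem lift_deform {e : Z} {TX TY : Set Z} {Λ : ℝ → Z → ℝ → Z}
    (hΛ : CMap (Icc (0 : ℝ) 1 ×ˢ TX ×ˢ Icc (-1 : ℝ) 1) TY
      (fun w : ℝ × Z × ℝ => Λ w.1 w.2.1 w.2.2))
    (hΛe : ∀ h ∈ Icc (0 : ℝ) 1, ∀ c ∈ TX, Λ h c (-1) = e ∧ Λ h c 1 = e)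
    {A : V → ℝ → Z} {B : V × ℝ → ℝ → Z} (hA : CFam (Sp V) TX A) (hB : CFam (Dk (V × ℝ)) TY B)
    (hAB : ∀ s ∈ Sp V, ∀ t ∈ Icc (-1 : ℝ) 1, ∀ h ∈ Icc (0 : ℝ) 1, B (s, t) h = Λ h (A s h) t)
    (hBe : ∀ s ∈ Dk V, ∀ h ∈ Icc (0 : ℝ) 1, B (s, -1) h = e ∧ B (s, 1) h = e)
    {g1 : V → Z} (hg1 : CMap (Dk V) TX g1) (hgA : ∀ s ∈ Sp V, g1 s = A s 1)
    (hH : HRel TY (fun w : V × ℝ => Λ 1 (g1 w.1) w.2) (fun w => B w 1)) :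
    ∃ g : V → Z, CMap (Dk V) TX g ∧ (∀ s ∈ Sp V, g s = A s 0) ∧
      HRel TY (fun w : V × ℝ => Λ 0 (g w.1) w.2) (fun w => B w 0) := by
  have i0 : (0 : ℝ) ∈ Icc (0 : ℝ) 1 := by simp
  have i1 : (1 : ℝ) ∈ Icc (0 : ℝ) 1 := by simp
  obtain ⟨L, L1, L2, L3⟩ := hep hg1 hA fun x hx => (hgA x hx).symm
  refine ⟨fun s => L s 0, L1.at i0, fun s hs => L3 s hs 0 i0, ?_⟩
  refine cyl (b := fun w ψ => Λ ψ (L w.1 ψ) w.2) (t := B) ?_ hB ?_ ?_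
  · refine CMap.comp hΛ (g := fun w : (V × ℝ) × ℝ => (w.2, L w.1.1 w.2, w.1.2)) ?_ ?_
    · refine continuousOn_snd.prodMk (ContinuousOn.prodMk ?_ (by fun_prop))
      exact L1.1.comp (f := fun w : (V × ℝ) × ℝ => (w.1.1, w.2)) (by fun_prop)
        fun w hw => ⟨(mem_dk_prod.1 hw.1).1, hw.2⟩
    · exact fun w hw => ⟨hw.2, L1.mem (mem_dk_prod.1 hw.1).1 hw.2, (mem_dk_prod.1 hw.1).2⟩
  · rintro ⟨s, t⟩ hw ψ hψ
    rcases mem_sp_prod.1 hw with ⟨h1, rfl | rfl⟩ | ⟨h1, h2⟩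
    · simp only [(hΛe ψ hψ _ (L1.mem h1 hψ)).1, (hBe s h1 ψ hψ).1]
    · simp only [(hΛe ψ hψ _ (L1.mem h1 hψ)).2, (hBe s h1 ψ hψ).2]
    · simp only [L3 s h1 ψ hψ, hAB s h1 t h2 ψ hψ]
  · exact hH.congr (fun w hw => by simp only [L2 _ (mem_dk_prod.1 hw).1]) fun _ _ => rfl

/-- The compression property is invariant under homotopies of the map. -/
theorem CP.of_homotopy {e : Z} {TX TY : Set Z} {Λ : ℝ → Z → ℝ → Z}
    (hΛ : CMap (Icc (0 : ℝ) 1 ×ˢ TX ×ˢ Icc (-1 : ℝ) 1) TY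
      (fun w : ℝ × Z × ℝ => Λ w.1 w.2.1 w.2.2))
    (hΛe : ∀ h ∈ Icc (0 : ℝ) 1, ∀ c ∈ TX, Λ h c (-1) = e ∧ Λ h c 1 = e)
    (he : e ∈ TY) (h1 : CP V e TX TY (Λ 1)) : CP V e TX TY (Λ 0) := by
  intro a b ha hb hab hbe
  have i0 : (0 : ℝ) ∈ Icc (0 : ℝ) 1 := by simp
  have i1 : (1 : ℝ) ∈ Icc (0 : ℝ) 1 := by simp
  have flip : ∀ h ∈ Icc (0 : ℝ) 1, 1 - h ∈ Icc (0 : ℝ) 1 := fun h hh =>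
    ⟨by linarith [hh.2], by linarith [hh.1]⟩
  -- the boundary homotopy: `Λ_{1-θ} ∘ a` over the sides, constant on the ends
  let P : Set ((V × ℝ) × ℝ) := {w | w.1.1 ∈ Sp V ∧ w.1.2 ∈ Icc (-1 : ℝ) 1 ∧ w.2 ∈ Icc (0 : ℝ) 1}
  let Q : Set ((V × ℝ) × ℝ) := {w | w.1.1 ∈ Dk V ∧ (w.1.2 ∈ ({-1, 1} : Set ℝ)) ∧ w.2 ∈ Icc (0 : ℝ) 1}
  have hP : IsClosed P :=
    (isClosed_sphere.preimage (by fun_prop : Continuous fun w : (V × ℝ) × ℝ => w.1.1)).inter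
    ((isClosed_Icc.preimage (by fun_prop : Continuous fun w : (V × ℝ) × ℝ => w.1.2)).inter
    (isClosed_Icc.preimage continuous_snd))
  have hQ : IsClosed Q :=
    (isClosed_closedBall.preimage (by fun_prop : Continuous fun w : (V × ℝ) × ℝ => w.1.1)).inter
    (((by simp : ({-1, 1} : Set ℝ).Finite).isClosed.preimage
      (by fun_prop : Continuous fun w : (V × ℝ) × ℝ => w.1.2)).inter
    (isClosed_Icc.preimage continuous_snd))
  obtain ⟨k, k1, k2, k3⟩ := CMap.glue (T := TY) hP hQ
    (f := fun w => Λ (1 - w.2) (a w.1.1) w.1.2) (g := fun _ => e)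
    (by
      refine CMap.comp hΛ (g := fun w : (V × ℝ) × ℝ => (1 - w.2, a w.1.1, w.1.2)) ?_ ?_
      · refine ContinuousOn.prodMk (by fun_prop) (ContinuousOn.prodMk ?_ (by fun_prop))
        exact ha.1.comp (f := fun w : (V × ℝ) × ℝ => w.1.1) (by fun_prop) fun w hw => hw.1
      · exact fun w hw => ⟨flip _ hw.2.2, ha.2 _ hw.1, hw.2.1⟩)
    ⟨continuousOn_const, fun _ _ => he⟩ (by
      rintro ⟨⟨s, t⟩, h⟩ h1 h2
      obtain ⟨u1, u2⟩ := hΛe (1 - h) (flip _ h1.2.2) (a s) (ha.2 s h1.1)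
      rcases h2.2.1 with h3 | h3
      · simp only at h3 ⊢; rw [h3, u1]
      · simp only [mem_singleton_iff] at h3 ⊢; rw [h3, u2])
  have hsub : Sp (V × ℝ) ×ˢ Icc (0 : ℝ) 1 ⊆ P ∪ Q := by
    rintro ⟨⟨s, t⟩, h⟩ ⟨hw, hh⟩
    rcases mem_sp_prod.1 hw with ⟨h1, h2⟩ | ⟨h1, h2⟩
    · exact Or.inr ⟨h1, by simpa using h2, hh⟩
    · exact Or.inl ⟨h1, h2, hh⟩
  have kP : ∀ s ∈ Sp V, ∀ t ∈ Icc (-1 : ℝ) 1, ∀ h ∈ Icc (0 : ℝ) 1,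
      k ((s, t), h) = Λ (1 - h) (a s) t := fun s hs t ht h hh =>
    k2 (x := ((s, t), h)) ⟨hs, ht, hh⟩
  have kQ : ∀ s ∈ Dk V, ∀ t : ℝ, (t = -1 ∨ t = 1) → ∀ h ∈ Icc (0 : ℝ) 1,
      k ((s, t), h) = e := fun s hs t ht h hh =>
    k3 (x := ((s, t), h)) ⟨hs, by simpa using ht, hh⟩
  obtain ⟨L, L1, L2, L3⟩ := hep (K := fun w h => k (w, h)) hb (k1.mono hsub subset_rfl) (by
    rintro ⟨s, t⟩ hw
    rcases mem_sp_prod.1 hw with ⟨h1, h2⟩ | ⟨h1, h2⟩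
    · rw [kQ s h1 t h2 1 i1]
      rcases h2 with rfl | rfl
      · exact (hbe s h1).1.symm
      · exact (hbe s h1).2.symm
    · rw [kP s h1 t h2 1 i1, hab s h1 t h2]; simp)
  have Lend : ∀ s ∈ Dk V, ∀ h ∈ Icc (0 : ℝ) 1, L (s, -1) h = e ∧ L (s, 1) h = e := by
    intro s hs h hh
    rw [L3 (s, -1) (mem_sp_prod.2 (Or.inl ⟨hs, by simp⟩)) h hh,
      L3 (s, 1) (mem_sp_prod.2 (Or.inl ⟨hs, by simp⟩)) h hh]
    exact ⟨kQ s hs _ (by simp) h hh, kQ s hs _ (by simp) h hh⟩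
  have Lside : ∀ s ∈ Sp V, ∀ t ∈ Icc (-1 : ℝ) 1, ∀ h ∈ Icc (0 : ℝ) 1,
      L (s, t) h = Λ (1 - h) (a s) t := by
    intro s hs t ht h hh
    rw [L3 (s, t) (mem_sp_prod.2 (Or.inr ⟨hs, ht⟩)) h hh, kP s hs t ht h hh]
  obtain ⟨g1, G1, G2, G3⟩ := h1 a (fun w => L w 0) ha (L1.at i0)
    (fun s hs t ht => by rw [Lside s hs t ht 0 i0]; simp) (fun s hs => Lend s hs 0 i0)
  obtain ⟨g, g2, g3, g4⟩ := lift_deform hΛ hΛe (A := fun s _ => a s) (B := fun w h => L w (1 - h))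
    (ha.comp (g := Prod.fst) (by fun_prop) fun w hw => hw.1)
    (CMap.comp L1 (g := fun w : (V × ℝ) × ℝ => (w.1, 1 - w.2)) (by fun_prop)
      fun w hw => ⟨hw.1, flip _ hw.2⟩)
    (fun s hs t ht h hh => by rw [Lside s hs t ht _ (flip h hh)]; simp)
    (fun s hs h hh => Lend s hs _ (flip h hh)) G1 G2 (by simpa using G3)
  exact ⟨g, g2, g3, g4.congr (fun _ _ => rfl) fun x hx => by simp [L2 x hx]⟩

end HEP

/-! ### From the compression property to homotopy groups -/

lemma mem_dk_pi {N : Type*} [Fintype N] {x : N → ℝ} : x ∈ Dk (N → ℝ) ↔ ∀ j, |x j| ≤ 1 := by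
  rw [mem_closedBall_zero_iff, pi_norm_le_iff_of_nonneg zero_le_one]; rfl

lemma mem_sp_pi {N : Type*} [Fintype N] {x : N → ℝ} :
    x ∈ Sp (N → ℝ) ↔ (∀ j, |x j| ≤ 1) ∧ ∃ j, |x j| = 1 := by
  rw [← mem_dk_pi, mem_closedBall_zero_iff, mem_sphere_zero_iff_norm]
  constructor
  · intro h
    refine ⟨h.le, ?_⟩
    by_contra! hne
    have hle := mem_dk_pi.1 (show x ∈ Dk (N → ℝ) by simp [h])
    have : ‖x‖ < 1 := (pi_norm_lt_iff one_pos).2 fun j => lt_of_le_of_ne (hle j) (hne j)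
    linarith
  · rintro ⟨h1, j, hj⟩
    refine le_antisymm h1 ?_
    rw [← hj]; exact norm_le_pi_norm x j

/-- `[-1,1] → [0,1]`, clamped outside. -/
def toI (x : ℝ) : unitInterval := projIcc 0 1 zero_le_one ((1 + x) / 2)

lemma continuous_toI : Continuous toI := continuous_projIcc.comp (by fun_prop)

@[simp] lemma toI_two (t : unitInterval) : toI (2 * (t : ℝ) - 1) = t := by
  unfold toI
  rw [show (1 + (2 * (t : ℝ) - 1)) / 2 = t by ring]
  simp

lemma two_mem (t : unitInterval) : 2 * (t : ℝ) - 1 ∈ Icc (-1 : ℝ) 1 :=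
  ⟨by linarith [t.2.1], by linarith [t.2.2]⟩

lemma coe_toI {x : ℝ} (h : x ∈ Icc (-1 : ℝ) 1) : (toI x : ℝ) = (1 + x) / 2 := by
  unfold toI
  rw [projIcc_of_mem zero_le_one (⟨by linarith [h.1], by linarith [h.2]⟩ : (1 + x) / 2 ∈ Icc (0 : ℝ) 1)]

@[simp] lemma toI_one : toI 1 = 1 := by
  apply Subtype.ext; rw [coe_toI (by norm_num)]; norm_num

@[simp] lemma toI_neg_one : toI (-1) = 0 := by
  apply Subtype.ext; rw [coe_toI (by norm_num)]; norm_num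

/-- The cube `[-1,1]^N` onto the cube `[0,1]^N`. -/
def toCube {N : Type*} (x : N → ℝ) : N → unitInterval := fun j => toI (x j)

/-- The cube `[0,1]^N` onto the cube `[-1,1]^N`. -/
def ofCube {N : Type*} (y : N → unitInterval) : N → ℝ := fun j => 2 * (y j : ℝ) - 1

lemma continuous_toCube {N : Type*} : Continuous (toCube (N := N)) :=
  continuous_pi fun j => continuous_toI.comp (continuous_apply j)

lemma continuous_ofCube {N : Type*} : Continuous (ofCube (N := N)) := by
  unfold ofCube
  exact continuous_pi fun j => by fun_prop

@[simp] lemma toCube_ofCube {N : Type*} (y : N → unitInterval) : toCube (ofCube y) = y := by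
  funext j; simp [toCube, ofCube]

lemma ofCube_dk {N : Type*} [Fintype N] (y : N → unitInterval) : ofCube y ∈ Dk (N → ℝ) :=
  mem_dk_pi.2 fun j => abs_le.2 (two_mem (y j))

lemma ofCube_sp {N : Type*} [Fintype N] {y : N → unitInterval} (h : y ∈ Cube.boundary N) :
    ofCube y ∈ Sp (N → ℝ) := by
  obtain ⟨j, hj⟩ := h
  refine mem_sp_pi.2 ⟨mem_dk_pi.1 (ofCube_dk y), j, ?_⟩
  rcases hj with hj | hj <;> simp [ofCube, hj] <;> norm_num

lemma toCube_boundary {N : Type*} {x : N → ℝ} (h : ∃ j, |x j| = 1) :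
    toCube x ∈ Cube.boundary N := by
  obtain ⟨j, hj⟩ := h
  refine ⟨j, ?_⟩
  rcases (abs_eq zero_le_one).1 hj with hj | hj
  · right; simp [toCube, hj]
  · left; simp [toCube, hj]

section

variable {X P : Type*} [TopologicalSpace X] [TopologicalSpace P]

/-- The compression property of a continuous map for cubes of dimension `m`. -/
def CPa (m : ℕ) (f : C(X, P)) : Prop :=
  ∀ (a : (Fin m → ℝ) → X) (b : (Fin m → ℝ) → P), ContinuousOn a (Sp _) → ContinuousOn b (Dk _) →
    (∀ s ∈ Sp (Fin m → ℝ), b s = f (a s)) →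
    ∃ g : (Fin m → ℝ) → X, ContinuousOn g (Dk _) ∧ (∀ s ∈ Sp (Fin m → ℝ), g s = a s) ∧
      HRel univ (fun s => f (g s)) b

lemma cmap_univ {α β : Type*} [TopologicalSpace α] [TopologicalSpace β] {A : Set α} {u : α → β} :
    CMap A univ u ↔ ContinuousOn u A := ⟨fun h => h.1, fun h => ⟨h, fun _ _ => mem_univ _⟩⟩

/-- The key case of injectivity: two maps on the `i`-cube which agree on the boundary with a
constant, and whose images are homotopic relative to the boundary, are homotopic relative
to the boundary. -/
lemma CPa.lift_homotopy {i : ℕ} {f : C(X, P)} (h : CPa (i + 1) f)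
    {q0 q1 : C(Fin i → unitInterval, X)}
    (hq : ∀ y ∈ Cube.boundary (Fin i), q0 y = q1 y)
    (H : (f.comp q0).HomotopyRel (f.comp q1) (Cube.boundary (Fin i))) :
    q0.HomotopicRel q1 (Cube.boundary (Fin i)) := by
  have ct : Continuous fun x : Fin (i + 1) → ℝ => toCube (Fin.tail x) :=
    continuous_toCube.comp (continuous_pi fun j => continuous_apply _)
  have hcl : IsClosed (Sp (Fin (i + 1) → ℝ)) := isClosed_sphere
  have htail : ∀ x ∈ Sp (Fin (i + 1) → ℝ), |x 0| ≠ 1 → toCube (Fin.tail x) ∈ Cube.boundary (Fin i) := by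
    intro x hx h0
    obtain ⟨_, j, hj⟩ := mem_sp_pi.1 hx
    apply toCube_boundary
    induction j using Fin.cases with
    | zero => exact absurd hj h0
    | succ j => exact ⟨j, hj⟩
  obtain ⟨a, a1, a2, a3⟩ := ContinuousOn.glue
    (s := {x | x 0 ≤ 0} ∩ Sp (Fin (i + 1) → ℝ)) (t := {x | 0 ≤ x 0} ∩ Sp (Fin (i + 1) → ℝ))
    ((isClosed_le (by fun_prop) continuous_const).inter hcl)
    ((isClosed_le continuous_const (by fun_prop)).inter hcl)
    (f := fun x => q0 (toCube (Fin.tail x))) (g := fun x => q1 (toCube (Fin.tail x)))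
    (q0.continuous.comp ct).continuousOn (q1.continuous.comp ct).continuousOn (by
      rintro x ⟨h1, hx⟩ ⟨h2, -⟩
      have h0 : x 0 = 0 := le_antisymm h1 h2
      exact hq _ (htail x hx (by simp [h0])))
  have hun : Sp (Fin (i + 1) → ℝ) ⊆ ({x | x 0 ≤ 0} ∩ Sp (Fin (i + 1) → ℝ)) ∪
      ({x | 0 ≤ x 0} ∩ Sp (Fin (i + 1) → ℝ)) := by
    intro x hx
    rcases le_total (x 0) 0 with h | h
    · exact Or.inl ⟨h, hx⟩
    · exact Or.inr ⟨h, hx⟩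
  have aside : ∀ x ∈ Sp (Fin (i + 1) → ℝ), toCube (Fin.tail x) ∈ Cube.boundary (Fin i) →
      a x = q0 (toCube (Fin.tail x)) := by
    intro x hx hb
    rcases hun hx with h | h
    · exact a2 h
    · rw [a3 h, hq _ hb]
  have cb : Continuous fun x : Fin (i + 1) → ℝ => H (toI (x 0), toCube (Fin.tail x)) :=
    H.continuous.comp ((continuous_toI.comp (continuous_apply 0)).prodMk ct)
  obtain ⟨g, g1, g2, -⟩ := h a _ (a1.mono hun) cb.continuousOn (by
    intro x hx
    by_cases h0 : |x 0| = 1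
    · rcases (abs_eq zero_le_one).1 h0 with h0 | h0
      · rw [h0, a3 ⟨by simp [h0], hx⟩]; simp
      · rw [h0, a2 ⟨by simp [h0], hx⟩]; simp
    · have hb := htail x hx h0
      rw [H.eq_fst _ hb, aside x hx hb]; rfl)
  have hdk : ∀ w : unitInterval × (Fin i → unitInterval),
      (Fin.cons (2 * (w.1 : ℝ) - 1) (ofCube w.2) : Fin (i + 1) → ℝ) ∈ Dk (Fin (i + 1) → ℝ) := by
    intro w
    rw [mem_dk_pi]
    intro j
    induction j using Fin.cases with
    | zero => simpa [abs_le] using two_mem w.1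
    | succ j => simpa using mem_dk_pi.1 (ofCube_dk w.2) j
  have hsp : ∀ w : unitInterval × (Fin i → unitInterval), (w.1 = 0 ∨ w.1 = 1 ∨
      w.2 ∈ Cube.boundary (Fin i)) →
      (Fin.cons (2 * (w.1 : ℝ) - 1) (ofCube w.2) : Fin (i + 1) → ℝ) ∈ Sp (Fin (i + 1) → ℝ) := by
    intro w hw
    refine mem_sp_pi.2 ⟨mem_dk_pi.1 (hdk w), ?_⟩
    rcases hw with h | h | h
    · exact ⟨0, by simp [h]⟩
    · exact ⟨0, by simp [h]; norm_num⟩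
    · obtain ⟨j, hj⟩ := (mem_sp_pi.1 (ofCube_sp h)).2
      exact ⟨j.succ, by simpa using hj⟩
  refine ⟨⟨⟨⟨fun w => g (Fin.cons (2 * (w.1 : ℝ) - 1) (ofCube w.2)), ?_⟩, ?_, ?_⟩, ?_⟩⟩
  · refine g1.comp_continuous ?_ hdk
    refine continuous_pi fun j => ?_
    induction j using Fin.cases with
    | zero => simp only [Fin.cons_zero]; fun_prop
    | succ j =>
      simp only [Fin.cons_succ]
      exact (continuous_apply j).comp (continuous_ofCube.comp continuous_snd)
  · intro y
    have := hsp (0, y) (by simp)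
    simp only at this ⊢
    rw [g2 _ this, a2 ⟨by simp, this⟩]
    simp
  · intro y
    have := hsp (1, y) (by simp)
    simp only at this ⊢
    rw [g2 _ this, a3 ⟨by norm_num, this⟩]
    simp
  · intro t y hy
    have := hsp (t, y) (by simp [hy])
    change g _ = q0 y
    simp only at this ⊢
    rw [g2 _ this, aside _ this (by simpa using hy)]
    simp

theorem CPa.homotopyGroup_bijective {i : ℕ} {f : C(X, P)} (h : CPa i f) (h' : CPa (i + 1) f)
    (c : X) : Function.Bijective (HomotopyGroupMap (Fin i) f c) := by
  constructor
  · intro u v huv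
    induction u using Quotient.inductionOn with | _ q0
    induction v using Quotient.inductionOn with | _ q1
    apply Quotient.sound
    obtain ⟨H⟩ : (f.comp q0.1).HomotopicRel (f.comp q1.1) (Cube.boundary (Fin i)) :=
      Quotient.exact huv
    exact h'.lift_homotopy (fun y hy => by rw [q0.2 y hy, q1.2 y hy]) H
  · intro u
    induction u using Quotient.inductionOn with | _ q
    obtain ⟨g, g1, g2, H, H1, H2, H3, H4⟩ := h (fun _ => c) (fun x => q.1 (toCube x))
      continuousOn_const (q.1.continuous.comp continuous_toCube).continuousOn
      (fun s hs => q.2 _ (toCube_boundary (mem_sp_pi.1 hs).2))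
    let r : GenLoop (Fin i) X c := ⟨⟨fun y => g (ofCube y),
      g1.comp_continuous continuous_ofCube fun y => ofCube_dk y⟩,
      fun y hy => g2 _ (ofCube_sp hy)⟩
    refine ⟨Quotient.mk _ r, Quotient.sound ?_⟩
    refine ⟨⟨⟨⟨fun w => H (ofCube w.2) w.1, ?_⟩, ?_, ?_⟩, ?_⟩⟩
    · exact H1.1.comp_continuous (f := fun w : unitInterval × (Fin i → unitInterval) =>
        (ofCube w.2, (w.1 : ℝ))) ((continuous_ofCube.comp continuous_snd).prodMk (by fun_prop))
        fun w => ⟨ofCube_dk _, w.1.2⟩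
    · exact fun y => H2 _ (ofCube_dk y)
    · intro y
      refine (H3 _ (ofCube_dk y)).trans ?_
      simp only [toCube_ofCube]
    · intro t y hy
      exact H4 _ (ofCube_sp hy) t t.2

theorem CPa.pi0_bijective [Nonempty X] {f : C(X, P)} (h : CPa 0 f) (h' : CPa 1 f) :
    Function.Bijective (Pi0Map f) := by
  constructor
  · intro u v huv
    induction u using Quotient.inductionOn with | _ x0
    induction v using Quotient.inductionOn with | _ x1
    apply Quotient.sound
    obtain ⟨γ⟩ : Joined (f x0) (f x1) := Quotient.exact huv
    have hb : ∀ y : Fin 0 → unitInterval, y ∉ Cube.boundary (Fin 0) := fun y ⟨j, _⟩ => j.elim0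
    obtain ⟨H⟩ := h'.lift_homotopy (q0 := .const _ x0) (q1 := .const _ x1)
      (fun y hy => absurd hy (hb y))
      ⟨⟨⟨fun w => γ w.1, by fun_prop⟩, fun y => by simp, fun y => by simp⟩,
        fun t y hy => absurd hy (hb y)⟩
    exact ⟨⟨⟨fun t => H (t, fun j => j.elim0), by fun_prop⟩, by simp, by simp⟩⟩
  · intro u
    induction u using Quotient.inductionOn with | _ p
    have hsp : ∀ s, s ∉ Sp (Fin 0 → ℝ) := fun s hs => by
      obtain ⟨_, j, _⟩ := mem_sp_pi.1 hs; exact j.elim0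
    obtain ⟨x⟩ := ‹Nonempty X›
    obtain ⟨g, g1, g2, H, H1, H2, H3, H4⟩ := h (fun _ => x) (fun _ => p)
      continuousOn_const continuousOn_const fun s hs => absurd hs (hsp s)
    have h0 : (0 : Fin 0 → ℝ) ∈ Dk (Fin 0 → ℝ) := by simp
    refine ⟨Quotient.mk _ (g 0), Quotient.sound ?_⟩
    exact ⟨⟨⟨fun t => H 0 t, H1.1.comp_continuous (f := fun t : unitInterval =>
      ((0 : Fin 0 → ℝ), (t : ℝ))) (by fun_prop) fun t => ⟨h0, t.2⟩⟩, by simpa using H2 0 h0,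
      by simpa using H3 0 h0⟩⟩

end

/-! ### Regions and cuts -/

lemma conf_ext {n : ℕ} {c d : ConfSp n} (h : ∀ x, x ∈ c.1 ↔ x ∈ d.1) : c = d :=
  Subtype.ext (Set.ext h)

lemma mem_cEmpty {n : ℕ} {x : Euc n} : x ∈ (cEmpty n).1 ↔ False := Iff.rfl

lemma mem_cUnion {n : ℕ} {c d : ConfSp n} {x : Euc n} :
    x ∈ (cUnion c d).1 ↔ x ∈ c.1 ∨ x ∈ d.1 := Iff.rfl

/-- Configurations whose points have `j`th coordinate in `A` and all later coordinates in
`(0,1)`. -/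
def ER {n : ℕ} (j : Fin n) (A : Set ℝ) : Set (ConfSp n) :=
  {c | ∀ x ∈ c.1, x j ∈ A ∧ ∀ i, j < i → x i ∈ Ioo (0 : ℝ) 1}

lemma ER.mono {n : ℕ} {j : Fin n} {A B : Set ℝ} (h : A ⊆ B) : ER j A ⊆ ER j B :=
  fun _ hc x hx => ⟨h (hc x hx).1, (hc x hx).2⟩

lemma cEmpty_mem_ER {n : ℕ} (j : Fin n) (A : Set ℝ) : cEmpty n ∈ ER j A :=
  fun x hx => absurd hx (by simp [cEmpty])

lemma cUnion_mem_ER {n : ℕ} {j : Fin n} {A : Set ℝ} {c d : ConfSp n} (hc : c ∈ ER j A)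
    (hd : d ∈ ER j A) : cUnion c d ∈ ER j A := by
  rintro x (hx | hx)
  · exact hc x hx
  · exact hd x hx

lemma ytr_mem_ER {n : ℕ} {j : Fin n} {f : ℝ → ℝ} {D A B : Set ℝ} {c : ConfSp n}
    (hc : c ∈ ER j A) (h : ∀ y ∈ A, y ∈ D → f y ∈ B) : ytr j f D c ∈ ER j B := by
  intro w hw
  obtain ⟨x, hx, hD, rfl⟩ := mem_ytr.1 hw
  refine ⟨by simpa using h _ (hc x hx).1 hD, fun i hi => ?_⟩
  rw [setC_ne hi.ne']
  exact (hc x hx).2 i hi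

lemma vtr_mem_ER {n : ℕ} {j : Fin n} {v : ℝ → ℝ} {A : Set ℝ} {c : ConfSp n}
    (hc : c ∈ ER j A) : vtr j v c ∈ ER j univ :=
  ytr_mem_ER hc fun _ _ _ => mem_univ _

lemma vtr_congr {n : ℕ} {j : Fin n} {v v' : ℝ → ℝ} {c : ConfSp n}
    (h : ∀ x ∈ c.1, v (x j) = v' (x j) ∨ (1 ≤ |v (x j)| ∧ 1 ≤ |v' (x j)|)) :
    vtr j v c = vtr j v' c := by
  apply conf_ext; intro w
  simp only [mem_vtr]
  constructor
  · rintro ⟨x, hx, h1, h2⟩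
    rcases h x hx with h' | h'
    · exact ⟨x, hx, h' ▸ h1, h' ▸ h2⟩
    · linarith [h'.1]
  · rintro ⟨x, hx, h1, h2⟩
    rcases h x hx with h' | h'
    · exact ⟨x, hx, h'.symm ▸ h1, h'.symm ▸ h2⟩
    · linarith [h'.2]

lemma vtr_eq_empty {n : ℕ} {j : Fin n} {v : ℝ → ℝ} {c : ConfSp n}
    (h : ∀ x ∈ c.1, 1 ≤ |v (x j)|) : vtr j v c = cEmpty n := by
  apply conf_ext; intro w
  simp only [mem_vtr, mem_cEmpty, iff_false]
  rintro ⟨x, hx, h1, -⟩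
  linarith [h x hx]

/-- The points with `j`th coordinate in `A`. -/
def cut {n : ℕ} (j : Fin n) (A : Set ℝ) (c : ConfSp n) : ConfSp n :=
  ⟨{x | x ∈ c.1 ∧ x j ∈ A}, c.2.subset fun _ h => h.1⟩

lemma mem_cut {n : ℕ} {j : Fin n} {A : Set ℝ} {c : ConfSp n} {x : Euc n} :
    x ∈ (cut j A c).1 ↔ x ∈ c.1 ∧ x j ∈ A := Iff.rfl

lemma cut_eq_ytr {n : ℕ} (j : Fin n) (A : Set ℝ) (c : ConfSp n) : cut j A c = ytr j id A c := by
  apply conf_ext; intro w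
  rw [mem_cut, mem_ytr]
  constructor
  · rintro ⟨h1, h2⟩; exact ⟨w, h1, h2, setC_eq_self _ _ rfl⟩
  · rintro ⟨x, h1, h2, h3⟩
    rw [setC_eq_self j x (y := id (x j)) rfl] at h3
    exact h3 ▸ ⟨h1, h2⟩

lemma tendsto_cut {Z : Type*} {n : ℕ} {j : Fin n} {Φ : Z → ConfSp n} {l : Filter Z}
    {c0 : ConfSp n} (h : Tendsto Φ l (𝓝 c0)) {A : Set ℝ}
    (hA : ∀ p ∈ c0.1, p j ∉ frontier A) :
    Tendsto (fun z => cut j A (Φ z)) l (𝓝 (cut j A c0)) := by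
  simp only [cut_eq_ytr]
  apply tendsto_ytr h
  · intro p hp hD
    have : p j ∈ interior A := by
      by_contra hi
      exact hA p hp ⟨subset_closure hD, hi⟩
    exact ⟨tendsto_snd.eventually (mem_interior_iff_mem_nhds.1 this), tendsto_snd⟩
  · intro p hp hD R
    have : p j ∉ closure A := fun hi => hA p hp ⟨hi, fun h' => hD (interior_subset h')⟩
    have h2 : ∀ᶠ y in 𝓝 (p j), y ∉ closure A := isClosed_closure.isOpen_compl.mem_nhds this
    filter_upwards [tendsto_snd.eventually h2] with w hw hw'
    exact absurd (subset_closure hw') hw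
  · exact fun R => ⟨R, Eventually.of_forall fun z x _ _ h => h⟩
  · exact fun _ _ _ _ _ _ h => h

/-! ### The scanning map -/

/-- The sweep: at time `r` the point at height `y < 1` is seen at compressed height
`2r/(1-y) - 1`, if this is less than `1`. -/
def Qc {n : ℕ} (j : Fin n) (c : ConfSp n) (r : ℝ) : ConfSp n :=
  vtr j (fun y => 2 * r / (1 - y) - 1) c

lemma tendsto_Qc {Z : Type*} {n : ℕ} {j : Fin n} {Φ : Z → ConfSp n} {l : Filter Z}
    {c0 : ConfSp n} {r : Z → ℝ} {r0 : ℝ} (h : Tendsto Φ l (𝓝 c0))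
    (hr : Tendsto r l (𝓝 r0) ∨ c0 = cEmpty n) (hr1 : ∀ᶠ z in l, r z ∈ Icc (0 : ℝ) 1)
    (hE : ∀ᶠ z in l, Φ z ∈ ER j (Iio 1)) (hc0 : c0 ∈ ER j (Iio 1)) :
    Tendsto (fun z => Qc j (Φ z) (r z)) l (𝓝 (Qc j c0 r0)) := by
  apply tendsto_vtr h
  · intro p hp
    rcases hr with hr | rfl
    · have h1 : p j < 1 := (hc0 p hp).1
      refine ((tendsto_const_nhds.mul (hr.comp tendsto_fst)).div
        (tendsto_const_nhds.sub tendsto_snd) ?_).sub_const 1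
      linarith
    · exact absurd hp (by simp [cEmpty])
  · intro δ hδ
    refine ⟨2 / δ + 1, ?_⟩
    filter_upwards [hr1, hE] with z hz hz2 x hx hR
    have h1 : x j < 1 := (hz2 x hx).1
    have h2 : 0 < 2 / δ := by positivity
    have h3 : x j < 0 := by
      by_contra h'
      rw [abs_of_nonneg (not_lt.1 h')] at hR
      linarith
    rw [abs_of_neg h3] at hR
    have h4 : 2 * r z / (1 - x j) < δ := by
      rw [div_lt_iff₀ (by linarith)]
      have : 2 < δ * (1 - x j) := by
        rw [← div_lt_iff₀' hδ]; linarith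
      linarith [hz.2]
    have := neg_abs_le (2 * r z / (1 - x j) - 1)
    linarith
  · intro p hp p' hp' h1 h2 he
    have a1 : p j < 1 := (hc0 p hp).1
    have a2 : p' j < 1 := (hc0 p' hp').1
    have hr0 : r0 ≠ 0 := by rintro rfl; simp at h1
    have b1 : (1 - p j) ≠ 0 := by linarith
    have b2 : (1 - p' j) ≠ 0 := by linarith
    have := sub_left_injective he
    rw [div_eq_div_iff b1 b2] at this
    have := mul_left_cancel₀ (mul_ne_zero two_ne_zero hr0) this
    linarith

lemma Qc_mem {n : ℕ} {j : Fin n} {A : Set ℝ} {c : ConfSp n} (hc : c ∈ ER j A) (r : ℝ) :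
    Qc j c r ∈ ER j univ := vtr_mem_ER hc

lemma Qc_zero {n : ℕ} (j : Fin n) (c : ConfSp n) : Qc j c 0 = cEmpty n :=
  vtr_eq_empty fun x _ => by simp

lemma Qc_empty {n : ℕ} (j : Fin n) (r : ℝ) : Qc j (cEmpty n) r = cEmpty n :=
  vtr_eq_empty fun x hx => absurd hx (by simp [cEmpty])

lemma Qc_one {n : ℕ} {j : Fin n} {c : ConfSp n} (hc : c ∈ ER j (Ioo 0 1)) :
    Qc j c 1 = cEmpty n := by
  apply vtr_eq_empty
  intro x hx
  obtain ⟨h1, h2⟩ := (hc x hx).1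
  refine le_trans ?_ (le_abs_self _)
  rw [le_sub_iff_add_le, le_div_iff₀ (by linarith)]
  linarith

/-- Rescaling of heights about `1` by the factor `1/r`; everything disappears at `r = 0`. -/
def sc {n : ℕ} (j : Fin n) (c : ConfSp n) (r : ℝ) : ConfSp n :=
  ytr j (fun y => 1 - (1 - y) / r) {_y | 0 < r} c

lemma tendsto_sc {Z : Type*} {n : ℕ} {j : Fin n} {Φ : Z → ConfSp n} {l : Filter Z}
    {c0 : ConfSp n} {r : Z → ℝ} {r0 : ℝ} (h : Tendsto Φ l (𝓝 c0))
    (hr : Tendsto r l (𝓝 r0)) (hr0 : 0 ≤ r0)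
    (hE : ∀ᶠ z in l, Φ z ∈ ER j (Ioo 0 1)) (hc0 : c0 ∈ ER j (Ioo 0 1)) :
    Tendsto (fun z => sc j (Φ z) (r z)) l (𝓝 (sc j c0 r0)) := by
  apply tendsto_ytr h
  · intro p hp hD
    have hD : 0 < r0 := hD
    refine ⟨(hr.comp tendsto_fst).eventually (lt_mem_nhds hD), ?_⟩
    exact tendsto_const_nhds.sub ((tendsto_const_nhds.sub tendsto_snd).div
      (hr.comp tendsto_fst) hD.ne')
  · intro p hp hD R
    have hD : r0 = 0 := le_antisymm (not_lt.1 hD) hr0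
    subst hD
    have hp1 : p j < 1 := (hc0 p hp).1.2
    have e1 : Tendsto (fun w : Z × ℝ => (|R| + 1) * r w.1 - (1 - w.2)) (l ×ˢ 𝓝 (p j))
        (𝓝 ((|R| + 1) * 0 - (1 - p j))) :=
      (tendsto_const_nhds.mul (hr.comp tendsto_fst)).sub (tendsto_const_nhds.sub tendsto_snd)
    filter_upwards [e1.eventually (gt_mem_nhds
      (show (|R| + 1) * 0 - (1 - p j) < 0 by linarith))] with w hw hw2
    have hw2 : 0 < r w.1 := hw2
    have : |R| + 1 < (1 - w.2) / r w.1 := by rw [lt_div_iff₀ hw2]; linarith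
    have := neg_abs_le (1 - (1 - w.2) / r w.1)
    linarith [le_abs_self R]
  · refine fun R => ⟨1, ?_⟩
    filter_upwards [hE] with z hz x hx _ _
    have := (hz x hx).1
    rw [abs_of_pos this.1]; exact this.2.le
  · intro p hp p' hp' hD _ he
    have hD : 0 < r0 := hD
    have he : 1 - (1 - p j) / r0 = 1 - (1 - p' j) / r0 := he
    rw [sub_right_inj, div_left_inj' hD.ne'] at he
    linarith

lemma sc_mem {n : ℕ} {j : Fin n} {c : ConfSp n} (hc : c ∈ ER j (Iio 1)) (r : ℝ) :
    sc j c r ∈ ER j (Iio 1) := by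
  refine ytr_mem_ER hc fun y hy hD => ?_
  have hD : 0 < r := hD
  have hy : y < 1 := hy
  have : 0 < (1 - y) / r := div_pos (by linarith) hD
  simp only [mem_Iio]; linarith

lemma sc_zero {n : ℕ} (j : Fin n) (c : ConfSp n) : sc j c 0 = cEmpty n := by
  apply conf_ext; intro w
  simp only [sc, mem_ytr, mem_cEmpty, iff_false]
  rintro ⟨x, -, h, -⟩
  exact lt_irrefl (0 : ℝ) h

lemma sc_one {n : ℕ} (j : Fin n) (c : ConfSp n) : sc j c 1 = c := by
  apply conf_ext; intro w
  simp only [sc, mem_ytr]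
  have h1 : ∀ x : Euc n, setC j x (1 - (1 - x j) / 1) = x := fun x => setC_eq_self _ _ (by simp)
  constructor
  · rintro ⟨x, h, -, rfl⟩; rwa [h1]
  · exact fun h => ⟨w, h, (one_pos : (0 : ℝ) < 1), h1 w⟩

lemma Qc_sc {n : ℕ} (j : Fin n) {c : ConfSp n} {r : ℝ} (hr : 0 ≤ r) (r' : ℝ)
    (hc : c ∈ ER j (Iio 1)) : Qc j (sc j c r) r' = Qc j c (r * r') := by
  rcases hr.eq_or_lt with rfl | hr
  · rw [sc_zero, zero_mul, Qc_zero, Qc_empty]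
  have key : ∀ x ∈ c.1, 2 * r' / (1 - (1 - (1 - x j) / r)) - 1 = 2 * (r * r') / (1 - x j) - 1 := by
    intro x hx
    have h1 : x j < 1 := (hc x hx).1
    have h2 : (1 - x j) ≠ 0 := by linarith
    have h3 : 1 - (1 - (1 - x j) / r) = (1 - x j) / r := by ring
    rw [h3]; field_simp
  apply conf_ext; intro w
  simp only [Qc, mem_vtr, sc, mem_ytr]
  constructor
  · rintro ⟨_, ⟨x, hx, -, rfl⟩, h1, h2⟩
    simp only [setC_same, setC_setC, key x hx] at h1 h2
    exact ⟨x, hx, h1, h2⟩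
  · rintro ⟨x, hx, h1, h2⟩
    refine ⟨_, ⟨x, hx, hr, rfl⟩, ?_⟩
    simp only [setC_same, setC_setC, key x hx]
    exact ⟨h1, h2⟩

/-- The height `y < 0` whose image under the sweep at time `1` is `u`. -/
def binv (u : ℝ) : ℝ := 1 - 2 / (1 + kap u)

lemma one_add_kap_pos (u : ℝ) : 0 < 1 + kap u := by
  linarith [(abs_lt.1 (abs_kap_lt u)).1]

lemma kap_eq_binv (u : ℝ) : 2 * 1 / (1 - binv u) - 1 = kap u := by
  have := one_add_kap_pos u
  have h : 1 - binv u = 2 / (1 + kap u) := by unfold binv; ring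
  rw [h]; field_simp; ring

lemma binv_neg (u : ℝ) : binv u < 0 := by
  have := one_add_kap_pos u
  have h2 := (abs_lt.1 (abs_kap_lt u)).2
  have : 1 < 2 / (1 + kap u) := by rw [lt_div_iff₀ this]; linarith
  unfold binv; linarith

lemma binv_strictMono : StrictMono binv := by
  intro u v h
  have := one_add_kap_pos u
  have h2 := kap_strictMono h
  have : 2 / (1 + kap v) < 2 / (1 + kap u) :=
    div_lt_div_of_pos_left two_pos this (by linarith)
  unfold binv; linarith

lemma continuous_binv : Continuous binv := by
  unfold binv
  exact continuous_const.sub (continuous_const.div (continuous_const.add continuous_kap)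
    fun u => (one_add_kap_pos u).ne')

lemma abs_bv_lt {y : ℝ} (h : y < 0) : |2 * 1 / (1 - y) - 1| < 1 := by
  have h1 : 0 < 2 * 1 / (1 - y) := div_pos (by norm_num) (by linarith)
  have h2 : 2 * 1 / (1 - y) < 2 := by rw [div_lt_iff₀ (by linarith)]; linarith
  rw [abs_lt]; constructor <;> linarith

lemma binv_kinv {y : ℝ} (h : y < 0) : binv (kinv (2 * 1 / (1 - y) - 1)) = y := by
  have h0 : (1 - y) ≠ 0 := by linarith
  unfold binv
  rw [kap_kinv (abs_bv_lt h)]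
  field_simp; ring

/-- The lower half `{y < 0}` of a configuration can be read off from the end of its sweep. -/
lemma mem_Qc_one {n : ℕ} {j : Fin n} {c : ConfSp n} (hc : c ∈ ER j (Iio 1)) {x : Euc n} :
    x ∈ (Qc j c 1).1 ↔ setC j x (binv (x j)) ∈ c.1 := by
  rw [Qc, mem_vtr]
  constructor
  · rintro ⟨x, hx, h1, rfl⟩
    have hx1 : x j < 1 := (hc x hx).1
    have h0 : x j < 0 := by
      have := (abs_lt.1 h1).2
      rw [sub_lt_iff_lt_add, div_lt_iff₀ (by linarith)] at this
      linarith
    simpa [-mul_one, binv_kinv h0, setC_eq_self] using hx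
  · intro h
    refine ⟨_, h, ?_⟩
    simp only [setC_same, kap_eq_binv, setC_setC, kinv_kap]
    exact ⟨abs_kap_lt _, setC_eq_self _ _ rfl⟩

/-- The part in the heights `A` of the configuration whose sweep ends in `c`. -/
def bicut {n : ℕ} (j : Fin n) (A : Set ℝ) (c : ConfSp n) : ConfSp n :=
  ytr j binv {u | binv u ∈ A} c

lemma mem_bicut {n : ℕ} {j : Fin n} {A : Set ℝ} {c : ConfSp n} {w : Euc n} :
    w ∈ (bicut j A c).1 ↔ w j ∈ A ∧ ∃ x ∈ c.1, setC j x (binv (x j)) = w := by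
  rw [bicut, mem_ytr]
  constructor
  · rintro ⟨x, h1, h2, rfl⟩; exact ⟨by simpa using h2, x, h1, rfl⟩
  · rintro ⟨h2, x, h1, rfl⟩; exact ⟨x, h1, by simpa using h2, rfl⟩

lemma bicut_mem {n : ℕ} {j : Fin n} {A : Set ℝ} {c : ConfSp n} (hc : c ∈ ER j univ) :
    bicut j A c ∈ ER j A :=
  ytr_mem_ER hc fun _ _ h => h

lemma bicut_empty {n : ℕ} (j : Fin n) (A : Set ℝ) : bicut j A (cEmpty n) = cEmpty n := by
  apply conf_ext; intro w
  rw [mem_bicut]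
  simp [mem_cEmpty]

lemma tendsto_bicut {Z : Type*} {n : ℕ} {j : Fin n} {Φ : Z → ConfSp n} {l : Filter Z}
    {c0 : ConfSp n} (h : Tendsto Φ l (𝓝 c0)) {A : Set ℝ} {b : ℝ} (hb : b < 0)
    (hAb : A ⊆ Iio b) (hA : ∀ p ∈ c0.1, binv (p j) ∉ frontier A) :
    Tendsto (fun z => bicut j A (Φ z)) l (𝓝 (bicut j A c0)) := by
  apply tendsto_ytr h
  · intro p hp hD
    have : binv (p j) ∈ interior A := by
      by_contra hi
      exact hA p hp ⟨subset_closure hD, hi⟩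
    have hc : Tendsto (fun w : Z × ℝ => binv w.2) (l ×ˢ 𝓝 (p j)) (𝓝 (binv (p j))) :=
      (continuous_binv.tendsto _).comp tendsto_snd
    exact ⟨hc.eventually (mem_interior_iff_mem_nhds.1 this), hc⟩
  · intro p hp hD R
    have : binv (p j) ∉ closure A := fun hi =>
      hA p hp ⟨hi, fun h' => hD (show binv (p j) ∈ A from interior_subset h')⟩
    have h2 : ∀ᶠ y in 𝓝 (binv (p j)), y ∉ closure A :=
      isClosed_closure.isOpen_compl.mem_nhds this
    have hc : Tendsto (fun w : Z × ℝ => binv w.2) (l ×ˢ 𝓝 (p j)) (𝓝 (binv (p j))) :=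
      (continuous_binv.tendsto _).comp tendsto_snd
    filter_upwards [hc.eventually h2] with w hw hw'
    exact absurd (subset_closure hw') hw
  · intro R
    obtain ⟨u1, h1⟩ : ∃ u, binv u = b := ⟨_, binv_kinv hb⟩
    obtain ⟨u2, h2⟩ : ∃ u, binv u = -(|R| + 1) :=
      ⟨_, binv_kinv (by linarith [abs_nonneg R])⟩
    refine ⟨max |u1| |u2|, Eventually.of_forall fun z x _ hx hR => ?_⟩
    have a1 : x j < u1 := by
      rw [← binv_strictMono.lt_iff_lt, h1]; exact hAb hx
    have a2 : u2 < x j := by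
      rw [← binv_strictMono.lt_iff_lt, h2]
      linarith [neg_abs_le (binv (x j)), le_abs_self R]
    exact abs_le_max_abs_abs a2.le a1.le |>.trans (by rw [max_comm])
  · exact fun _ _ _ _ _ _ h => binv_strictMono.injective h

/-! ### From translation by `τ` to the sweep -/

/-- The compressed height at time `r` of a point translated from `y` by `τ(r)`, with the limits
`∓1` for `r ≤ 0` and `r ≥ 1`. -/
def Av (τ : (Ioo (0 : ℝ) 1) ≃ₜ ℝ) (r y : ℝ) : ℝ :=
  if h : r ∈ Ioo (0 : ℝ) 1 then kap (y + τ ⟨r, h⟩) else if r ≤ 0 then -1 else 1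

lemma exists_kap_gt {δ : ℝ} (h : 0 < δ) : ∃ M : ℝ, 1 - δ < kap M ∧ kap (-M) < -(1 - δ) := by
  refine ⟨1 / δ, ?_⟩
  have h1 : 1 - δ < kap (1 / δ) := by
    unfold kap
    have : 0 < 1 / δ := by positivity
    rw [abs_of_pos this, lt_div_iff₀ (by positivity)]
    field_simp
    nlinarith
  refine ⟨h1, ?_⟩
  have : kap (-(1 / δ)) = -kap (1 / δ) := by simp [kap, neg_div]
  rw [this]; linarith

lemma Av_bounds (τ : (Ioo (0 : ℝ) 1) ≃ₜ ℝ) (r y : ℝ) : |Av τ r y| ≤ 1 := by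
  unfold Av
  split_ifs
  · exact (abs_kap_lt _).le
  · simp
  · simp

lemma lh_bot (τ : (Ioo (0 : ℝ) 1) ≃ₜ ℝ) (h y : ℝ) :
    (1 - h) * Av τ ((1 + -1) / 2) y + h * min 1 (2 * ((1 + -1) / 2) / (1 - y) - 1) = -1 := by
  have h1 : Av τ ((1 + -1) / 2) y = -1 := by simp [Av]
  have h2 : 2 * ((1 + -1) / 2) / (1 - y) - 1 = -1 := by simp
  rw [h1, h2, min_eq_right (by norm_num)]; ring

lemma lh_top (τ : (Ioo (0 : ℝ) 1) ≃ₜ ℝ) (h : ℝ) {y : ℝ} (hy : y ∈ Ioo (0 : ℝ) 1) :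
    (1 - h) * Av τ ((1 + 1) / 2) y + h * min 1 (2 * ((1 + 1) / 2) / (1 - y) - 1) = 1 := by
  obtain ⟨h1, h2⟩ := hy
  have : 1 ≤ 2 * ((1 + 1) / 2) / (1 - y) - 1 := by
    rw [le_sub_iff_add_le, le_div_iff₀ (by linarith)]; linarith
  have h1 : Av τ ((1 + 1) / 2) y = 1 := by norm_num [Av]
  rw [min_eq_left this, h1]; ring

lemma continuous_Av {τ : (Ioo (0 : ℝ) 1) ≃ₜ ℝ} (hτ : StrictMono τ) :
    Continuous fun w : ℝ × ℝ => Av τ w.1 w.2 := by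
  rw [continuous_iff_continuousAt]
  rintro ⟨r0, y0⟩
  by_cases h0 : r0 ∈ Ioo (0 : ℝ) 1
  · have ho : IsOpen {w : ℝ × ℝ | w.1 ∈ Ioo (0 : ℝ) 1} := isOpen_Ioo.preimage continuous_fst
    refine ContinuousOn.continuousAt (s := {w : ℝ × ℝ | w.1 ∈ Ioo (0 : ℝ) 1}) ?_ (ho.mem_nhds h0)
    rw [continuousOn_iff_continuous_domRestrict]
    have : Continuous fun w : {w : ℝ × ℝ | w.1 ∈ Ioo (0 : ℝ) 1} =>
        kap (w.1.2 + τ ⟨w.1.1, w.2⟩) := by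
      refine continuous_kap.comp (.add (by fun_prop) (τ.continuous.comp ?_))
      exact Continuous.subtype_mk (by fun_prop) _
    refine this.congr fun w => ?_
    have hw : w.1.1 ∈ Ioo (0 : ℝ) 1 := w.2
    change _ = Av τ w.1.1 w.1.2
    rw [Av, dif_pos hw]
  rw [Metric.continuousAt_iff']
  intro δ hδ
  obtain ⟨M, M1, M2⟩ := exists_kap_gt (half_pos hδ)
  by_cases h1 : r0 ≤ 0
  · have e0 : Av τ r0 y0 = -1 := by simp [Av, h0, h1]
    simp only [e0]
    set r1 := τ.symm (-M - y0 - 1) with hr1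
    have a1 : ∀ᶠ w : ℝ × ℝ in 𝓝 (r0, y0), w.1 < r1 :=
      (continuous_fst.tendsto (r0, y0)).eventually (gt_mem_nhds (h1.trans_lt r1.2.1))
    have a2 : ∀ᶠ w : ℝ × ℝ in 𝓝 (r0, y0), w.2 < y0 + 1 :=
      (continuous_snd.tendsto (r0, y0)).eventually (gt_mem_nhds (by simp))
    filter_upwards [a1, a2] with w hw1 hw2
    rw [Real.dist_eq, abs_lt]
    unfold Av
    split_ifs with c1 c2
    · have b1 := (abs_lt.1 (abs_kap_lt (w.2 + τ ⟨w.1, c1⟩))).1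
      have b2 : τ ⟨w.1, c1⟩ < τ r1 := hτ hw1
      rw [hr1, τ.apply_symm_apply] at b2
      have b3 : kap (w.2 + τ ⟨w.1, c1⟩) < kap (-M) := kap_strictMono (by linarith)
      constructor <;> linarith
    · constructor <;> linarith
    · exact absurd ⟨not_le.1 c2, hw1.trans r1.2.2⟩ c1
  · have h2 : 1 ≤ r0 := by
      by_contra h2; exact h0 ⟨not_le.1 h1, not_le.1 h2⟩
    have e0 : Av τ r0 y0 = 1 := by simp [Av, h0, h1]
    simp only [e0]
    set r1 := τ.symm (M - y0 + 1) with hr1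
    have a1 : ∀ᶠ w : ℝ × ℝ in 𝓝 (r0, y0), r1 < w.1 :=
      (continuous_fst.tendsto (r0, y0)).eventually (lt_mem_nhds (r1.2.2.trans_le h2))
    have a2 : ∀ᶠ w : ℝ × ℝ in 𝓝 (r0, y0), y0 - 1 < w.2 :=
      (continuous_snd.tendsto (r0, y0)).eventually (lt_mem_nhds (by simp))
    filter_upwards [a1, a2] with w hw1 hw2
    rw [Real.dist_eq, abs_lt]
    unfold Av
    split_ifs with c1 c2
    · have b1 := (abs_lt.1 (abs_kap_lt (w.2 + τ ⟨w.1, c1⟩))).2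
      have b2 : τ r1 < τ ⟨w.1, c1⟩ := hτ hw1
      rw [hr1, τ.apply_symm_apply] at b2
      have b3 : kap M < kap (w.2 + τ ⟨w.1, c1⟩) := kap_strictMono (by linarith)
      constructor <;> linarith
    · linarith [r1.2.1]
    · constructor <;> linarith

/-- Interpolation, in compressed heights, between translation by `τ` (at `h = 0`) and the
sweep (at `h = 1`), in the time parameter `t ∈ [-1,1]`. -/
def Lh {n : ℕ} (τ : (Ioo (0 : ℝ) 1) ≃ₜ ℝ) (j : Fin n) (h : ℝ) (c : ConfSp n) (t : ℝ) : ConfSp n :=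
  vtr j (fun y => (1 - h) * Av τ ((1 + t) / 2) y + h * min 1 (2 * ((1 + t) / 2) / (1 - y) - 1)) c

lemma Lh_one {n : ℕ} (τ : (Ioo (0 : ℝ) 1) ≃ₜ ℝ) (j : Fin n) :
    Lh τ j 1 = fun c t => Qc j c ((1 + t) / 2) := by
  funext c t
  apply vtr_congr
  intro x _
  rcases le_total 1 (2 * ((1 + t) / 2) / (1 - x j) - 1) with h | h
  · right; rw [min_eq_left h]; exact ⟨by simp, h.trans (le_abs_self _)⟩
  · left; rw [min_eq_right h]; ring

lemma Lh_ends {n : ℕ} (τ : (Ioo (0 : ℝ) 1) ≃ₜ ℝ) (j : Fin n) (h : ℝ) {c : ConfSp n}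
    (hc : c ∈ ER j (Ioo 0 1)) : Lh τ j h c (-1) = cEmpty n ∧ Lh τ j h c 1 = cEmpty n := by
  constructor
  · apply vtr_eq_empty
    intro x hx
    simp only [lh_bot]; simp
  · apply vtr_eq_empty
    intro x hx
    simp only [lh_top τ h (hc x hx).1]; simp

lemma continuous_Lh {n : ℕ} {τ : (Ioo (0 : ℝ) 1) ≃ₜ ℝ} (hτ : StrictMono τ) (j : Fin n) :
    CMap (Icc (0 : ℝ) 1 ×ˢ ER j (Ioo 0 1) ×ˢ Icc (-1 : ℝ) 1) (ER j univ)
      (fun w : ℝ × ConfSp n × ℝ => Lh τ j w.1 w.2.1 w.2.2) := by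
  refine ⟨?_, fun w hw => vtr_mem_ER hw.2.1⟩
  rintro ⟨h0, c0, t0⟩ ⟨hh, hc, ht⟩
  simp only at hh hc ht
  set l := 𝓝[Icc (0 : ℝ) 1 ×ˢ ER j (Ioo 0 1) ×ˢ Icc (-1 : ℝ) 1] (h0, c0, t0) with hl
  have hid : Tendsto (fun w : ℝ × ConfSp n × ℝ => w) l (𝓝 (h0, c0, t0)) := tendsto_id'.2 inf_le_left
  have th : Tendsto (fun w : ℝ × ConfSp n × ℝ => w.1) l (𝓝 h0) :=
    (continuous_fst.tendsto _).comp hid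
  have tc : Tendsto (fun w : ℝ × ConfSp n × ℝ => w.2.1) l (𝓝 c0) :=
    ((continuous_fst.comp continuous_snd).tendsto _).comp hid
  have tt : Tendsto (fun w : ℝ × ConfSp n × ℝ => w.2.2) l (𝓝 t0) :=
    ((continuous_snd.comp continuous_snd).tendsto _).comp hid
  apply tendsto_vtr tc
  · intro p hp
    obtain ⟨p1, p2⟩ := (hc p hp).1
    have tA : Tendsto (fun w : (ℝ × ConfSp n × ℝ) × ℝ => Av τ ((1 + w.1.2.2) / 2) w.2)
        (l ×ˢ 𝓝 (p j)) (𝓝 (Av τ ((1 + t0) / 2) (p j))) :=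
      ((continuous_Av hτ).tendsto ((1 + t0) / 2, p j)).comp
        ((((tt.comp tendsto_fst).const_add 1).div_const 2).prodMk_nhds tendsto_snd)
    refine (((th.comp tendsto_fst).const_sub 1).mul tA).add ((th.comp tendsto_fst).mul
      (tendsto_const_nhds.min ((Tendsto.div ?_ (tendsto_snd.const_sub 1) (by linarith)).sub_const 1)))
    exact (((tt.comp tendsto_fst).const_add 1).div_const 2).const_mul 2
  · refine fun δ _ => ⟨1, ?_⟩
    filter_upwards [self_mem_nhdsWithin] with w hw x hx h1
    obtain ⟨p1, p2⟩ := (hw.2.1 x hx).1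
    rw [abs_of_pos p1] at h1
    linarith
  · intro p hp p' hp' h1 h2 he
    by_contra hne
    wlog hlt : p j < p' j generalizing p p'
    · exact this p' hp' p hp h2 h1 he.symm (Ne.symm hne)
        (lt_of_le_of_ne (not_lt.1 hlt) (Ne.symm hne))
    obtain ⟨a1, a2⟩ := (hc p hp).1
    obtain ⟨b1, b2⟩ := (hc p' hp').1
    have ht1 : t0 ≠ -1 := by
      rintro rfl
      simp only [lh_bot] at h1; simp at h1
    have ht2 : t0 ≠ 1 := by
      rintro rfl
      simp only [lh_top τ _ (hc p hp).1] at h1; simp at h1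
    have hr : (1 + t0) / 2 ∈ Ioo (0 : ℝ) 1 := by
      have := lt_of_le_of_ne ht.1 (Ne.symm ht1)
      have := lt_of_le_of_ne ht.2 ht2
      constructor <;> linarith
    have hB : 2 * ((1 + t0) / 2) / (1 - p j) < 2 * ((1 + t0) / 2) / (1 - p' j) :=
      div_lt_div_of_pos_left (by linarith [hr.1]) (by linarith) (by linarith)
    have hBm : min 1 (2 * ((1 + t0) / 2) / (1 - p j) - 1) ≤
        min 1 (2 * ((1 + t0) / 2) / (1 - p' j) - 1) := min_le_min le_rfl (by linarith)
    have hA : Av τ ((1 + t0) / 2) (p j) < Av τ ((1 + t0) / 2) (p' j) := by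
      simp only [Av, hr, dif_pos]
      exact kap_strictMono (by linarith)
    rcases hh.2.eq_or_lt with rfl | hh1
    · simp only [sub_self, zero_mul, one_mul, zero_add] at he h2
      have h3 := (abs_lt.1 h2).2
      rw [← he] at h3
      have h4 : min 1 (2 * ((1 + t0) / 2) / (1 - p j) - 1) = 2 * ((1 + t0) / 2) / (1 - p j) - 1 :=
        min_eq_right (by rcases min_lt_iff.1 h3 with h | h <;> linarith)
      rw [he] at h3
      have h5 : min 1 (2 * ((1 + t0) / 2) / (1 - p' j) - 1) = 2 * ((1 + t0) / 2) / (1 - p' j) - 1 :=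
        min_eq_right (by rcases min_lt_iff.1 h3 with h | h <;> linarith)
      linarith
    · have := mul_lt_mul_of_pos_left hA (sub_pos.2 hh1)
      have := mul_le_mul_of_nonneg_left hBm hh.1
      linarith

/-! ### Zooming in on the slab `|x_i| < 1`, `i < j` -/

/-- Stretch the coordinates before the `j`th one. -/
def zm {n : ℕ} (j : Fin n) (h : ℝ) (x : Euc n) : Euc n :=
  WithLp.toLp 2 fun i => if i < j then x i / (1 - h * |x i|) else x i

lemma zm_lt {n : ℕ} {j i : Fin n} (hi : i < j) (h : ℝ) (x : Euc n) :
    zm j h x i = x i / (1 - h * |x i|) := by simp [zm, hi]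

lemma zm_ge {n : ℕ} {j i : Fin n} (hi : j ≤ i) (h : ℝ) (x : Euc n) :
    zm j h x i = x i := by simp [zm, not_lt.2 hi]

lemma zm_setC {n : ℕ} (j : Fin n) (h : ℝ) (x : Euc n) (y : ℝ) :
    zm j h (setC j x y) = setC j (zm j h x) y := by
  apply euc_ext; intro i
  by_cases hi : i = j
  · subst hi; rw [zm_ge le_rfl]; simp
  · rw [setC_ne hi]
    by_cases h2 : i < j
    · rw [zm_lt h2, zm_lt h2, setC_ne hi]
    · rw [zm_ge (not_lt.1 h2), zm_ge (not_lt.1 h2), setC_ne hi]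

/-- The zoom: stretch the coordinates before the `j`th one, so that for `h > 0` the points with
some `|x_i| ≥ 1/h` disappear at infinity. -/
def zoom {n : ℕ} (j : Fin n) (h : ℝ) (c : ConfSp n) : ConfSp n :=
  cTrans (zm j h) {x | ∀ i, i < j → h * |x i| < 1} c

lemma mem_zoom {n : ℕ} {j : Fin n} {h : ℝ} {c : ConfSp n} {w : Euc n} :
    w ∈ (zoom j h c).1 ↔ ∃ x ∈ c.1, (∀ i, i < j → h * |x i| < 1) ∧ zm j h x = w := by
  constructor
  · rintro ⟨x, ⟨h1, h2⟩, h3⟩; exact ⟨x, h1, h2, h3⟩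
  · rintro ⟨x, h1, h2, h3⟩; exact ⟨x, ⟨h1, h2⟩, h3⟩

lemma zoom_zero {n : ℕ} (j : Fin n) (c : ConfSp n) : zoom j 0 c = c := by
  have : ∀ x : Euc n, zm j 0 x = x := by
    intro x; apply euc_ext; intro i; simp [zm]
  apply conf_ext; intro w
  rw [mem_zoom]
  simp [this]

lemma zoom_mem {n : ℕ} {j : Fin n} {A : Set ℝ} {c : ConfSp n} (hc : c ∈ ER j A) (h : ℝ) :
    zoom j h c ∈ ER j A := by
  intro w hw
  obtain ⟨x, hx, -, rfl⟩ := mem_zoom.1 hw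
  refine ⟨by rw [zm_ge le_rfl]; exact (hc x hx).1, fun i hi => ?_⟩
  rw [zm_ge hi.le]; exact (hc x hx).2 i hi

lemma zoom_vtr {n : ℕ} (j : Fin n) (h : ℝ) (v : ℝ → ℝ) (c : ConfSp n) :
    zoom j h (vtr j v c) = vtr j v (zoom j h c) := by
  apply conf_ext; intro w
  simp only [mem_zoom, mem_vtr]
  constructor
  · rintro ⟨_, ⟨x, hx, h1, rfl⟩, h2, rfl⟩
    refine ⟨zm j h x, ⟨x, hx, fun i hi => ?_, rfl⟩, ?_⟩
    · simpa [hi.ne] using h2 i hi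
    · rw [zm_ge le_rfl, zm_setC]; exact ⟨h1, rfl⟩
  · rintro ⟨_, ⟨x, hx, h2, rfl⟩, h1, rfl⟩
    rw [zm_ge le_rfl] at h1 ⊢
    refine ⟨_, ⟨x, hx, h1, rfl⟩, fun i hi => ?_, zm_setC _ _ _ _⟩
    rw [setC_ne hi.ne]; exact h2 i hi

lemma zoom_empty {n : ℕ} (j : Fin n) (h : ℝ) : zoom j h (cEmpty n) = cEmpty n := by
  apply conf_ext; intro w
  rw [mem_zoom]; simp [mem_cEmpty]

lemma zdiv_inj {h u v : ℝ} (hu : h * |u| < 1) (hv : h * |v| < 1)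
    (e : u / (1 - h * |u|) = v / (1 - h * |v|)) : u = v := by
  rw [div_eq_div_iff (by linarith) (by linarith)] at e
  rcases le_total 0 u with a | a <;> rcases le_total 0 v with b | b
  · rw [abs_of_nonneg a, abs_of_nonneg b] at e; linarith
  · rw [abs_of_nonneg a, abs_of_nonpos b] at *
    have : 0 ≤ u * (1 - h * -v) := mul_nonneg a (by linarith)
    have : v * (1 - h * u) ≤ 0 := mul_nonpos_of_nonpos_of_nonneg b (by linarith)
    have h1 : u * (1 - h * -v) = 0 := by linarith
    have h2 : v * (1 - h * u) = 0 := by linarith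
    rcases mul_eq_zero.1 h1 with h | h <;> rcases mul_eq_zero.1 h2 with h' | h' <;> linarith
  · rw [abs_of_nonpos a, abs_of_nonneg b] at *
    have : 0 ≤ v * (1 - h * -u) := mul_nonneg b (by linarith)
    have : u * (1 - h * v) ≤ 0 := mul_nonpos_of_nonpos_of_nonneg a (by linarith)
    have h1 : v * (1 - h * -u) = 0 := by linarith
    have h2 : u * (1 - h * v) = 0 := by linarith
    rcases mul_eq_zero.1 h1 with h | h <;> rcases mul_eq_zero.1 h2 with h' | h' <;> linarith
  · rw [abs_of_nonpos a, abs_of_nonpos b] at e; linarith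

lemma tendsto_zoom {Z : Type*} {n : ℕ} {j : Fin n} {Φ : Z → ConfSp n} {l : Filter Z}
    {c0 : ConfSp n} {r : Z → ℝ} {r0 : ℝ} (h : Tendsto Φ l (𝓝 c0))
    (hr : Tendsto r l (𝓝 r0)) (hr1 : ∀ᶠ z in l, 0 ≤ r z) :
    Tendsto (fun z => zoom j (r z) (Φ z)) l (𝓝 (zoom j r0 c0)) := by
  have tx : ∀ p : Euc n, ∀ i, Tendsto (fun w : Z × Euc n => w.2 i) (l ×ˢ 𝓝 p) (𝓝 (p i)) :=
    fun p i => ((continuous_coord i).tendsto p).comp tendsto_snd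
  have td : ∀ p : Euc n, ∀ i, Tendsto (fun w : Z × Euc n => r w.1 * |w.2 i|) (l ×ˢ 𝓝 p)
      (𝓝 (r0 * |p i|)) := fun p i => (hr.comp tendsto_fst).mul (tx p i).abs
  apply tendsto_trans h
  · intro p hp hD
    refine ⟨?_, ?_⟩
    · have : ∀ i, ∀ᶠ w : Z × Euc n in l ×ˢ 𝓝 p, i < j → r w.1 * |w.2 i| < 1 := by
        intro i
        by_cases hi : i < j
        · filter_upwards [(td p i).eventually (gt_mem_nhds (hD i hi))] with w hw _ using hw
        · exact Eventually.of_forall fun w h => absurd h hi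
      filter_upwards [eventually_all.2 this] with w hw using hw
    · refine ((PiLp.continuous_toLp 2 _).tendsto _).comp (tendsto_pi_nhds.2 fun i => ?_)
      by_cases hi : i < j
      · simp only [hi, if_true]
        exact (tx p i).div ((td p i).const_sub 1) (by linarith [hD i hi])
      · simp only [hi, if_false]
        exact tx p i
  · intro p hp hD R
    have hD : ∃ i, i < j ∧ 1 ≤ r0 * |p i| := by
      by_contra hc
      push Not at hc
      exact hD hc
    obtain ⟨i, hi, hd⟩ := hD
    have hpi : 0 < |p i| := by
      refine (abs_nonneg _).lt_of_ne fun h0 => ?_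
      rw [← h0] at hd; linarith
    have e1 : Tendsto (fun w : Z × Euc n => (|R| + 1) * (1 - r w.1 * |w.2 i|) - |w.2 i|)
        (l ×ˢ 𝓝 p) (𝓝 ((|R| + 1) * (1 - r0 * |p i|) - |p i|)) :=
      (((td p i).const_sub 1).const_mul _).sub (tx p i).abs
    have e2 : (|R| + 1) * (1 - r0 * |p i|) - |p i| < 0 := by
      have : (|R| + 1) * (1 - r0 * |p i|) ≤ 0 :=
        mul_nonpos_of_nonneg_of_nonpos (by positivity) (by linarith)
      linarith
    filter_upwards [e1.eventually (gt_mem_nhds e2)] with w hw hwD hb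
    have b1 := hb i
    have b2 := hwD i hi
    rw [zm_lt hi, abs_div, abs_of_pos (a := 1 - r w.1 * |w.2 i|) (by linarith),
      div_le_iff₀ (by linarith)] at b1
    have : R * (1 - r w.1 * |w.2 i|) ≤ |R| * (1 - r w.1 * |w.2 i|) :=
      mul_le_mul_of_nonneg_right (le_abs_self R) (by linarith)
    linarith
  · refine fun R => ⟨R, ?_⟩
    filter_upwards [hr1] with z hz x hx hD hb i
    by_cases hi : i < j
    · have b1 := hb i
      have b2 := hD i hi
      rw [zm_lt hi, abs_div, abs_of_pos (a := 1 - r z * |x i|) (by linarith)] at b1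
      refine le_trans ?_ b1
      rw [le_div_iff₀ (by linarith)]
      have := mul_nonneg hz (abs_nonneg (x i))
      nlinarith [abs_nonneg (x i)]
    · have b1 := hb i
      rwa [zm_ge (not_lt.1 hi)] at b1
  · rintro p ⟨hp, hD⟩ p' ⟨hp', hD'⟩ he
    apply euc_ext; intro i
    have := congrArg (fun w : Euc n => w i) he
    by_cases hi : i < j
    · simp only [zm_lt hi] at this
      exact zdiv_inj (hD i hi) (hD' i hi) this
    · simpa only [zm_ge (not_lt.1 hi)] using this

lemma CMap.zoom {α : Type*} [TopologicalSpace α] {n : ℕ} {j : Fin n} {S : Set α} {B : Set ℝ}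
    {u : α → ConfSp n} (hu : CMap S (ER j B) u) : CFam S (ER j B) fun x h => zoom j h (u x) := by
  refine ⟨?_, fun w hw => zoom_mem (hu.2 _ hw.1) _⟩
  rintro ⟨x, h⟩ ⟨hx, hh⟩
  have h1 : Tendsto (fun w : α × ℝ => w.1) (𝓝[S ×ˢ Icc 0 1] (x, h)) (𝓝[S] x) :=
    tendsto_nhdsWithin_iff.2 ⟨(continuous_fst.tendsto (x, h)).mono_left inf_le_left,
        by filter_upwards [self_mem_nhdsWithin] with w hw using hw.1⟩
  have h2 : Tendsto (fun w : α × ℝ => w.2) (𝓝[S ×ˢ Icc 0 1] (x, h)) (𝓝 h) :=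
    (continuous_snd.tendsto (x, h)).mono_left inf_le_left
  refine tendsto_zoom (Φ := fun w : α × ℝ => u w.1) ((hu.1 x hx).tendsto.comp h1) h2 ?_
  filter_upwards [self_mem_nhdsWithin] with w hw using hw.2.1

/-- `F` has local walls: near each parameter there is a height avoided by `F`. -/
def Walled {α : Type*} [TopologicalSpace α] {n : ℕ} (j : Fin n) (A : Set α) (F : α → ConfSp n) :
    Prop :=
  ∀ z0 ∈ A, ∃ a : ℝ, ∀ᶠ z in 𝓝[A] z0, ∀ x ∈ (F z).1, x j ≠ a

lemma walled_zoom {α : Type*} [TopologicalSpace α] {n : ℕ} {j : Fin n} {A : Set α}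
    {F : α → ConfSp n} (hF : CMap A (ER j univ) F) : Walled j A fun z => zoom j 1 (F z) := by
  intro z0 hz0
  obtain ⟨a, ha⟩ := Set.Infinite.exists_notMem_finite (Set.infinite_univ (α := ℝ))
    ((F z0).2.image fun x : Euc n => x j)
  refine ⟨a, ?_⟩
  have h1 := eventually_points (hF.1 z0 hz0) (P := fun x => x j ≠ a)
    (fun p hp => (continuous_coord j).continuousAt.eventually_ne fun h => ha.2 ⟨p, hp, h⟩)
    (max 1 |a|)
  filter_upwards [h1, self_mem_nhdsWithin] with z hz hzA w hw hwa
  obtain ⟨x, hx, hD, rfl⟩ := mem_zoom.1 hw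
  rw [zm_ge le_rfl] at hwa
  refine hz x hx (fun i => ?_) hwa
  rcases lt_trichotomy i j with hi | rfl | hi
  · exact le_max_of_le_left (by linarith [hD i hi])
  · rw [hwa]; exact le_max_right _ _
  · have := (hF.2 z hzA x hx).2 i hi
    rw [abs_of_pos this.1]
    exact le_max_of_le_left this.2.le

/-- It suffices to solve lifting problems with local walls. -/
theorem CP_of_walled {V : Type*} [NormedAddCommGroup V] [NormedSpace ℝ V] {n : ℕ} (j : Fin n)
    (hw : ∀ (a : V → ConfSp n) (b : V × ℝ → ConfSp n), CMap (Sp V) (ER j (Ioo 0 1)) a →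
      CMap (Dk (V × ℝ)) (ER j univ) b → Walled j (Dk (V × ℝ)) b →
      (∀ s ∈ Sp V, ∀ t ∈ Icc (-1 : ℝ) 1, b (s, t) = Qc j (a s) ((1 + t) / 2)) →
      (∀ s ∈ Dk V, b (s, -1) = cEmpty n ∧ b (s, 1) = cEmpty n) →
      ∃ g : V → ConfSp n, CMap (Dk V) (ER j (Ioo 0 1)) g ∧ (∀ s ∈ Sp V, g s = a s) ∧
        HRel (ER j univ) (fun w : V × ℝ => Qc j (g w.1) ((1 + w.2) / 2)) b) :
    CP V (cEmpty n) (ER j (Ioo 0 1)) (ER j univ) (fun c t => Qc j c ((1 + t) / 2)) := by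
  intro a b ha hb hab hbe
  have i1 : (1 : ℝ) ∈ Icc (0 : ℝ) 1 := by simp
  have hzQ : ∀ (c : ConfSp n) (h r : ℝ), zoom j h (Qc j c r) = Qc j (zoom j h c) r :=
    fun c h r => zoom_vtr _ _ _ _
  have hA := ha.zoom
  have hB := hb.zoom
  have hAB : ∀ s ∈ Sp V, ∀ t ∈ Icc (-1 : ℝ) 1, ∀ h ∈ Icc (0 : ℝ) 1,
      zoom j h (b (s, t)) = Qc j (zoom j h (a s)) ((1 + t) / 2) := by
    intro s hs t ht h _
    rw [hab s hs t ht, hzQ]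
  have hBe : ∀ s ∈ Dk V, ∀ h ∈ Icc (0 : ℝ) 1, zoom j h (b (s, -1)) = cEmpty n ∧
      zoom j h (b (s, 1)) = cEmpty n := by
    intro s hs h _
    rw [(hbe s hs).1, (hbe s hs).2, zoom_empty]; simp
  obtain ⟨g1, G1, G2, G3⟩ := hw _ _ (hA.at i1) (hB.at i1) (walled_zoom hb)
    (fun s hs t ht => hAB s hs t ht 1 i1) (fun s hs => hBe s hs 1 i1)
  have hΛ : ContinuousOn (fun w : ℝ × ConfSp n × ℝ => Qc j w.2.1 ((1 + w.2.2) / 2))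
      (Icc (0 : ℝ) 1 ×ˢ ER j (Ioo 0 1) ×ˢ Icc (-1 : ℝ) 1) := by
    rintro ⟨h0, c0, t0⟩ ⟨hh, hc, ht⟩
    refine tendsto_Qc (Φ := fun w : ℝ × ConfSp n × ℝ => w.2.1) (r := fun w => (1 + w.2.2) / 2)
      ?_ (.inl ?_) ?_ ?_ (ER.mono (fun y hy => hy.2) hc)
    · exact (((continuous_fst.comp continuous_snd).tendsto (h0, c0, t0))).mono_left inf_le_left
    · exact ((by fun_prop : Continuous fun w : ℝ × ConfSp n × ℝ => (1 + w.2.2) / 2).tendsto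
        (h0, c0, t0)).mono_left inf_le_left
    · filter_upwards [self_mem_nhdsWithin] with w hw
      have := hw.2.2
      constructor <;> linarith [this.1, this.2]
    · filter_upwards [self_mem_nhdsWithin] with w hw
      exact ER.mono (fun y hy => hy.2) hw.2.1
  obtain ⟨g, g2, g3, g4⟩ := lift_deform (Λ := fun _ c t => Qc j c ((1 + t) / 2)) (e := cEmpty n)
    (TX := ER j (Ioo 0 1)) ⟨hΛ, fun w hw => Qc_mem hw.2.1 _⟩
    (fun h _ c hc => ⟨by simp [Qc_zero], by norm_num [Qc_one hc]⟩) hA hB hAB hBe G1 G2 G3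
  exact ⟨g, g2, fun s hs => (g3 s hs).trans (zoom_zero _ _),
      g4.congr (fun _ _ => rfl) fun x _ => (zoom_zero _ _).symm⟩

/-! ### Filling a single cell -/

lemma vtr_kap {n : ℕ} (j : Fin n) {v : ℝ → ℝ} (c : ConfSp n) (h : ∀ x ∈ c.1, v (x j) = kap (x j)) :
    vtr j v c = c := by
  apply conf_ext; intro w
  rw [mem_vtr]
  constructor
  · rintro ⟨x, hx, -, rfl⟩
    rwa [h x hx, kinv_kap, setC_eq_self _ _ rfl]
  · intro hw
    exact ⟨w, hw, by rw [h w hw]; exact abs_kap_lt _, by rw [h w hw, kinv_kap, setC_eq_self _ _ rfl]⟩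

lemma vtr_mem_ER_of_lt {n : ℕ} {i j : Fin n} (hij : i < j) {v : ℝ → ℝ} {A : Set ℝ} {c : ConfSp n}
    (hc : c ∈ ER j A) : vtr i v c ∈ ER j A := by
  intro w hw
  obtain ⟨x, hx, -, rfl⟩ := mem_vtr.1 hw
  refine ⟨by rw [setC_ne hij.ne']; exact (hc x hx).1, fun i' hi' => ?_⟩
  rw [setC_ne (hij.trans hi').ne']
  exact (hc x hx).2 i' hi'

lemma CMap.cUnion {α : Type*} [TopologicalSpace α] {n : ℕ} {j : Fin n} {A : Set α}
    {S S' T : Set ℝ} {f g : α → ConfSp n} (hf : CMap A (ER j S) f) (hg : CMap A (ER j S') g)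
    (hd : ∀ y ∈ S, y ∉ S') (h1 : S ⊆ T) (h2 : S' ⊆ T) :
    CMap A (ER j T) fun x => cUnion (f x) (g x) :=
  ⟨fun x hx => tendsto_cUnion (hf.1 x hx) (hg.1 x hx) fun p hp hp' =>
    hd _ (hf.2 x hx p hp).1 (hg.2 x hx p hp').1,
  fun x hx => cUnion_mem_ER (ER.mono h1 (hf.2 x hx)) (ER.mono h2 (hg.2 x hx))⟩

/-- A family over a ball can be contracted to its value at the centre and then pushed off to
infinity in the direction of a coordinate before `j`. -/
lemma exists_push {V : Type*} [NormedAddCommGroup V] [NormedSpace ℝ V] {n : ℕ} {i j : Fin n}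
    (hij : i < j) {S : Set ℝ} {m : V → ConfSp n} (hm : CMap (Dk V) (ER j S) m) :
    ∃ M : V → ℝ → ConfSp n, CFam (Dk V) (ER j S) M ∧ (∀ s ∈ Dk V, M s 0 = m s) ∧
      ∀ s ∈ Dk V, M s 1 = cEmpty n := by
  let f : V × ℝ → V := fun w => max 0 (1 - 2 * w.2) • w.1
  let q : V × ℝ → ℝ := fun w => max 0 (2 * w.2 - 1)
  have fc : Continuous f := by fun_prop
  have qc : Continuous q := by fun_prop
  have fm : ∀ w ∈ Dk V ×ˢ Icc (0 : ℝ) 1, f w ∈ Dk V := by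
    rintro ⟨s, ψ⟩ ⟨hs, hψ⟩
    simp only [mem_closedBall_zero_iff, f, norm_smul, Real.norm_eq_abs] at hs ⊢
    have h1 : |max 0 (1 - 2 * ψ)| ≤ 1 := by
      rw [abs_of_nonneg (le_max_left _ _)]
      exact max_le zero_le_one (by linarith [hψ.1])
    exact mul_le_one₀ h1 (norm_nonneg _) hs
  have hfq : ∀ w, q w = 0 ∨ f w = 0 := by
    rintro ⟨s, ψ⟩
    rcases le_total ψ (1 / 2) with h | h
    · left; exact max_eq_left (by linarith)
    · right
      simp only [f]
      rw [max_eq_left (by linarith), zero_smul]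
  have hmf : CMap (Dk V ×ˢ Icc (0 : ℝ) 1) (ER j S) fun w => m (f w) := hm.comp fc.continuousOn fm
  refine ⟨fun s ψ => vtr i (fun y => kap y + (1 - kap y) * q (s, ψ)) (m (f (s, ψ))),
    ⟨?_, fun w hw => vtr_mem_ER_of_lt hij (hmf.2 w hw)⟩, fun s hs => ?_, fun s hs => ?_⟩
  · intro w0 hw0
    refine tendsto_vtr (Φ := fun w => m (f w)) (hmf.1 w0 hw0)
      (v := fun w y => kap y + (1 - kap y) * q w) (v0 := fun y => kap y + (1 - kap y) * q w0) ?_ ?_ ?_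
    · intro p hp
      have h1 : Tendsto (fun w : (V × ℝ) × ℝ => kap w.2)
          (𝓝[Dk V ×ˢ Icc (0 : ℝ) 1] w0 ×ˢ 𝓝 (p i)) (𝓝 (kap (p i))) :=
        (continuous_kap.tendsto _).comp tendsto_snd
      have h2 : Tendsto (fun w : (V × ℝ) × ℝ => q w.1)
          (𝓝[Dk V ×ˢ Icc (0 : ℝ) 1] w0 ×ˢ 𝓝 (p i)) (𝓝 (q w0)) :=
        ((qc.tendsto _).mono_left inf_le_left).comp tendsto_fst
      exact h1.add ((h1.const_sub 1).mul h2)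
    · intro δ hδ
      obtain ⟨M, M1, M2⟩ := exists_kap_gt hδ
      obtain ⟨B, hB⟩ := ((m 0).2.image fun x : Euc n => |x i|).bddAbove
      refine ⟨max M B, Eventually.of_forall fun w x hx hR => ?_⟩
      rcases hfq w with h | h
      · simp only [h, mul_zero, add_zero]
        have hM : M < |x i| := (le_max_left _ _).trans_lt hR
        rcases lt_abs.1 hM with h' | h'
        · have := kap_strictMono h'
          linarith [le_abs_self (kap (x i))]
        · have := kap_strictMono (show x i < -M by linarith)
          linarith [neg_abs_le (kap (x i))]
      · simp only [h] at hx
        have := hB ⟨x, hx, rfl⟩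
        have := (le_max_right M B).trans_lt hR
        simp only at *
        linarith
    · intro p hp p' hp' h1 h2 he
      have hk := abs_lt.1 (abs_kap_lt (p i))
      have e1 : (1 - kap (p i)) * (1 - q w0) = (1 - kap (p' i)) * (1 - q w0) := by
        simp only at he; linarith
      have hq : 1 - q w0 ≠ 0 := by
        intro h0
        have : q w0 = 1 := by linarith
        simp only [this, mul_one] at h1
        norm_num at h1
      have := mul_right_cancel₀ hq e1
      exact kap_strictMono.injective (by linarith)
  · have h1 : f (s, 0) = s := by simp [f]
    have h2 : q (s, 0) = 0 := by simp [q]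
    simp only [h1, h2]
    exact vtr_kap _ _ fun x _ => by simp
  · have h2 : q (s, 1) = 1 := by norm_num [q]
    simp only [h2]
    exact vtr_eq_empty fun x _ => by norm_num

/-- Contraction of heights towards `1` by the factor `q`. -/
def mu {n : ℕ} (j : Fin n) (q : ℝ) (c : ConfSp n) : ConfSp n :=
  ytr j (fun y => 1 - (1 - y) * q) univ c

lemma mu_one {n : ℕ} (j : Fin n) (c : ConfSp n) : mu j 1 c = c := by
  apply conf_ext; intro w
  have h1 : ∀ x : Euc n, setC j x (1 - (1 - x j) * 1) = x := fun x => setC_eq_self _ _ (by ring)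
  rw [mu, mem_ytr]
  simp [-mul_one, h1]

lemma tendsto_mu {Z : Type*} {n : ℕ} {j : Fin n} {Φ : Z → ConfSp n} {l : Filter Z}
    {c0 : ConfSp n} {q : Z → ℝ} {q0 ρ : ℝ} (h : Tendsto Φ l (𝓝 c0)) (hq : Tendsto q l (𝓝 q0))
    (hρ : 0 < ρ) (hq1 : ∀ᶠ z in l, ρ ≤ q z) (hq0 : ρ ≤ q0) :
    Tendsto (fun z => mu j (q z) (Φ z)) l (𝓝 (mu j q0 c0)) := by
  apply tendsto_ytr h
  · refine fun p hp _ => ⟨by simp, ?_⟩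
    exact ((tendsto_snd.const_sub 1).mul (hq.comp tendsto_fst)).const_sub 1
  · exact fun p hp h => absurd (mem_univ _) h
  · refine fun R => ⟨1 + (R + 1) / ρ, ?_⟩
    filter_upwards [hq1] with z hz x _ _ hR
    have h1 : |1 - x j| * q z ≤ R + 1 := by
      rw [← abs_of_pos (hρ.trans_le hz), ← abs_mul]
      calc |(1 - x j) * q z| = |1 - (1 - (1 - x j) * q z)| := by ring_nf
        _ ≤ |(1 : ℝ)| + |1 - (1 - x j) * q z| := abs_sub _ _
        _ ≤ _ := by rw [abs_one]; linarith
    have h2 : |1 - x j| ≤ (R + 1) / ρ := by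
      rw [le_div_iff₀ hρ]
      exact (mul_le_mul_of_nonneg_left hz (abs_nonneg _)).trans h1
    calc |x j| = |1 - (1 - x j)| := by ring_nf
      _ ≤ |(1 : ℝ)| + |1 - x j| := abs_sub _ _
      _ ≤ _ := by rw [abs_one]; linarith
  · intro p hp p' hp' _ _ he
    have : (1 - p j) * q0 = (1 - p' j) * q0 := by linarith
    have := mul_right_cancel₀ (hρ.trans_le hq0).ne' this
    linarith

/-- The bottom and the sides of the cylinder. -/
def Jset (V : Type*) [NormedAddCommGroup V] : Set (V × ℝ) :=
  {w | w.1 ∈ Dk V ∧ w.2 ∈ Icc (-1 : ℝ) 1 ∧ (w.2 = -1 ∨ w.1 ∈ Sp V)}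

lemma isClosed_Jset (V : Type*) [NormedAddCommGroup V] : IsClosed (Jset V) := by
  refine (isClosed_closedBall.preimage continuous_fst).inter
    ((isClosed_Icc.preimage continuous_snd).inter (IsClosed.union ?_ ?_))
  · exact isClosed_eq continuous_snd continuous_const
  · exact isClosed_sphere.preimage continuous_fst

/-- Filling one cell. A family `c` on the bottom and the sides extends over the cylinder so
that, on the top, the part at heights in `(ℓ, ℓ')` is the prescribed family `m` and no point has
height `ℓ'`. -/
theorem cell_core {V : Type*} [NormedAddCommGroup V] [NormedSpace ℝ V] {n : ℕ} {i j : Fin n}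
    (hij : i < j) {l l' : ℝ} (hl : l ≤ l') (hl' : l' < 1) {c : V × ℝ → ConfSp n}
    {m g0 : V → ConfSp n} (hc : CMap (Jset V) (ER j (Ioo l 1)) c)
    (hm : CMap (Dk V) (ER j (Ioo l l')) m) (hg0 : CMap (Sp V) (ER j (Ioo l' 1)) g0)
    (hcm : ∀ s ∈ Sp V, c (s, 1) = cUnion (m s) (g0 s)) :
    ∃ (W : V × ℝ → ConfSp n) (g : V → ConfSp n), CMap (Dk (V × ℝ)) (ER j (Ioo l 1)) W ∧
      (∀ w ∈ Jset V, W w = c w) ∧ CMap (Dk V) (ER j (Ioo l' 1)) g ∧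
      ∀ s ∈ Dk V, W (s, 1) = cUnion (m s) (g s) := by
  have i0 : (0 : ℝ) ∈ Icc (0 : ℝ) 1 := by simp
  have i1 : (1 : ℝ) ∈ Icc (0 : ℝ) 1 := by simp
  have hflip : ∀ θ ∈ Icc (0 : ℝ) 1, 1 - θ ∈ Icc (0 : ℝ) 1 := fun θ h =>
    ⟨by linarith [h.2], by linarith [h.1]⟩
  have hd : ∀ y ∈ Ioo l l', y ∉ Ioo l' 1 := fun y h h' => lt_asymm h.2 h'.1
  have s1 : Ioo l l' ⊆ Ioo l 1 := Ioo_subset_Ioo_right hl'.le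
  have s2 : Ioo l' 1 ⊆ Ioo l 1 := Ioo_subset_Ioo_left hl
  obtain ⟨M, M1, M2, M3⟩ := exists_push hij hm
  -- transport the bottom along the sides
  obtain ⟨L1, A1, A2, A3⟩ := hep (V := V) (T := ER j (Ioo l 1)) (u := fun s => c (s, -1))
    (K := fun s θ => c (s, 1 - 2 * θ))
    (hc.comp (by fun_prop) fun s hs => ⟨hs, by norm_num, .inl rfl⟩)
    (CMap.comp hc (g := fun w : V × ℝ => (w.1, 1 - 2 * w.2)) (by fun_prop) fun w hw =>
      ⟨sp_sub hw.1, ⟨by simp only; linarith [hw.2.2], by simp only; linarith [hw.2.1]⟩, .inr hw.1⟩)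
    (fun s hs => by norm_num)
  have u1 : ∀ s ∈ Sp V, L1 s 0 = cUnion (m s) (g0 s) := fun s hs => by
    rw [A3 s hs 0 i0]; simpa using hcm s hs
  -- remove `m` from the boundary
  obtain ⟨L2, B1, B2, B3⟩ := hep (V := V) (T := ER j (Ioo l 1)) (u := fun s => L1 s 0)
    (K := fun s θ => cUnion (M s (1 - θ)) (g0 s)) (A1.at i0)
    (CMap.cUnion (f := fun w : V × ℝ => M w.1 (1 - w.2)) (g := fun w : V × ℝ => g0 w.1)
      (CMap.comp M1 (g := fun w : V × ℝ => (w.1, 1 - w.2)) (by fun_prop) fun w hw =>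
        ⟨sp_sub hw.1, hflip _ hw.2⟩)
      (hg0.comp (by fun_prop) fun w hw => hw.1) hd s1 s2)
    (fun s hs => by simp only [sub_self, M2 s (sp_sub hs), u1 s hs])
  have u2 : ∀ s ∈ Sp V, L2 s 0 = g0 s := fun s hs => by
    rw [B3 s hs 0 i0, sub_zero, M3 s (sp_sub hs)]
    exact conf_ext fun x => by simp [mem_cUnion, mem_cEmpty]
  -- move everything above height `l'`
  set ρ := (1 - l') / (1 - l) with hρ
  have hρ0 : 0 < ρ := div_pos (by linarith) (by linarith)
  have hρ1 : ρ ≤ 1 := by rw [hρ, div_le_one (by linarith)]; linarith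
  have hq : ∀ θ ∈ Icc (0 : ℝ) 1, 1 - θ + θ * ρ ∈ Icc ρ 1 := fun θ h => by
    constructor <;> nlinarith [h.1, h.2]
  have muc : ∀ {A : Set V} {S : Set ℝ} {u : V → ConfSp n}, CMap A (ER j S) u →
      ContinuousOn (fun w : V × ℝ => mu j (1 - w.2 + w.2 * ρ) (u w.1)) (A ×ˢ Icc 0 1) := by
    intro A S u hu
    have h1 : ContinuousOn (fun w : V × ℝ => u w.1) (A ×ˢ Icc (0 : ℝ) 1) :=
      hu.1.comp continuousOn_fst fun w hw => hw.1
    intro w hw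
    refine tendsto_mu (h1 w hw)
      (((by fun_prop : Continuous fun w : V × ℝ => 1 - w.2 + w.2 * ρ).tendsto w).mono_left
        inf_le_left) hρ0 ?_ (hq _ hw.2).1
    filter_upwards [self_mem_nhdsWithin] with z hz using (hq _ hz.2).1
  have mum : ∀ a < 1, ∀ q ∈ Icc ρ 1, ∀ d ∈ ER j (Ioo a 1), mu j q d ∈ ER j (Ioo a 1) := by
    intro a ha q hq d hd
    refine ytr_mem_ER hd fun y hy _ => ?_
    have := mul_pos (sub_pos.2 hy.2) (hρ0.trans_le hq.1)
    have := mul_le_mul_of_nonneg_left hq.2 (sub_pos.2 hy.2).le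
    constructor <;> linarith [hy.1]
  have mum1 : ∀ d ∈ ER j (Ioo l 1), mu j ρ d ∈ ER j (Ioo l' 1) := by
    intro d hd
    refine ytr_mem_ER hd fun y hy _ => ?_
    have h1 := mul_pos (sub_pos.2 hy.2) hρ0
    have h2 : (1 - y) * ρ < (1 - l) * ρ := mul_lt_mul_of_pos_right (by linarith [hy.1]) hρ0
    have h3 : (1 - l) * ρ = 1 - l' := by
      rw [hρ]; exact mul_div_cancel₀ _ (by linarith)
    constructor <;> linarith
  have cu2 := B1.at i0
  obtain ⟨L3, C1, C2, C3⟩ := hep (V := V) (T := ER j (Ioo l' 1)) (u := fun s => mu j ρ (L2 s 0))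
    (K := fun s θ => mu j (1 - θ + θ * ρ) (g0 s))
    ⟨((muc cu2).comp (f := fun s : V => (s, (1 : ℝ))) (by fun_prop) fun s hs => ⟨hs, i1⟩).congr
      fun s _ => by simp, fun s hs => mum1 _ (cu2.2 s hs)⟩
    ⟨muc hg0, fun w hw => mum l' hl' _ (hq _ hw.2) _ (hg0.2 _ hw.1)⟩
    (fun s hs => by simp [u2 s hs])
  have cg := C1.at i0
  have hgb : ∀ s ∈ Sp V, L3 s 0 = g0 s := fun s hs => by
    rw [C3 s hs 0 i0]; simp [mu_one]
  have H1 : HRel (ER j (Ioo l 1)) (fun s => L3 s 0) (fun s => L2 s 0) := by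
    refine (cyl (b := L3) (t := fun s ψ => mu j (1 - ψ + ψ * ρ) (L2 s 0))
      (CMap.mono C1 le_rfl (ER.mono s2))
      ⟨muc cu2, fun w hw => mum l (hl.trans_lt hl') _ (hq _ hw.2) _ (cu2.2 _ hw.1)⟩
      (fun s hs ψ hψ => by simp only [C3 s hs ψ hψ, u2 s hs]) ?_).congr
      (fun _ _ => rfl) fun s _ => by simp [mu_one]
    exact (HRel.refl (CMap.mono (C1.at i1) le_rfl (ER.mono s2))).congr (fun _ _ => rfl)
      fun s hs => by simp [C2 s hs]
  have H2 : HRel (ER j (Ioo l 1)) (fun s => cUnion (m s) (L3 s 0)) (fun s => L1 s 0) := by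
    refine (cyl (b := fun s ψ => cUnion (M s ψ) (L3 s 0)) (t := fun s ψ => L2 s (1 - ψ))
      (CMap.cUnion (f := fun w : V × ℝ => M w.1 w.2) (g := fun w : V × ℝ => L3 w.1 0) M1
        (cg.comp (by fun_prop) fun w hw => hw.1) hd s1 s2)
      (CMap.comp B1 (g := fun w : V × ℝ => (w.1, 1 - w.2)) (by fun_prop) fun w hw =>
        ⟨hw.1, hflip _ hw.2⟩)
      (fun s hs ψ hψ => by
        simp only [B3 s hs _ (hflip ψ hψ), sub_sub_cancel, hgb s hs]) ?_).congr
      (fun s hs => by simp only [M2 s hs]) fun s hs => by simp only [sub_zero, B2 s hs]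
    refine H1.congr (fun s hs => ?_) fun s hs => by simp
    simp only [M3 s hs]
    exact conf_ext fun x => by simp [mem_cUnion, mem_cEmpty]
  obtain ⟨N, N1, N2, N3, N4⟩ := H2
  -- absorb the homotopy at the top
  have hcl : IsClosed (Icc (0 : ℝ) 1) := isClosed_Icc
  obtain ⟨K, K1, K2, K3⟩ := CMap.glue (T := ER j (Ioo l 1))
    (s := (Dk V ×ˢ {(1 : ℝ)}) ×ˢ Icc (0 : ℝ) 1) (t := Jset V ×ˢ Icc (0 : ℝ) 1)
    (f := fun w : (V × ℝ) × ℝ => N w.1.1 w.2) (g := fun w => c w.1)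
    ((isClosed_closedBall.prod isClosed_singleton).prod hcl) ((isClosed_Jset V).prod hcl)
    (CMap.comp N1 (g := fun w : (V × ℝ) × ℝ => (w.1.1, w.2)) (by fun_prop) fun w hw =>
      ⟨hw.1.1, hw.2⟩)
    (hc.comp (by fun_prop) fun w hw => hw.1)
    (by
      rintro ⟨⟨s, t⟩, ψ⟩ ⟨⟨hs, ht⟩, hψ⟩ ⟨hJ, -⟩
      have ht : t = 1 := ht
      subst ht
      have hs' : s ∈ Sp V := by
        rcases hJ.2.2 with h | h
        · norm_num at h
        · exact h
      simp only [N4 s hs' ψ hψ, hcm s hs', hgb s hs'])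
  have hhalf : ∀ t ∈ Icc (-1 : ℝ) 1, (1 - t) / 2 ∈ Icc (0 : ℝ) 1 := fun t h =>
    ⟨by linarith [h.2], by linarith [h.1]⟩
  have hL1J : ∀ w ∈ Jset V, L1 w.1 ((1 - w.2) / 2) = c w := by
    rintro ⟨s, t⟩ ⟨hs, ht, h | h⟩
    · simp only at h; subst h; norm_num [A2 s hs]
    · simp only [A3 s h _ (hhalf t ht)]
      congr 2; ring
  have hsp : ∀ w : V × ℝ, w ∈ Sp (V × ℝ) → w ∈ Dk V ×ˢ {(1 : ℝ)} ∨ w ∈ Jset V := by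
    rintro ⟨s, t⟩ h
    rcases mem_sp_prod.1 h with ⟨h1, rfl | rfl⟩ | ⟨h1, h2⟩
    · exact .inr ⟨h1, by norm_num, .inl rfl⟩
    · exact .inl ⟨h1, rfl⟩
    · exact .inr ⟨sp_sub h1, h2, .inr h1⟩
  obtain ⟨L, D1, D2, D3⟩ := hep (V := V × ℝ) (T := ER j (Ioo l 1))
    (u := fun w => L1 w.1 ((1 - w.2) / 2)) (K := fun w ψ => K (w, ψ))
    (CMap.comp A1 (g := fun w : V × ℝ => (w.1, (1 - w.2) / 2)) (by fun_prop) fun w hw =>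
      ⟨(mem_dk_prod.1 hw).1, hhalf _ (mem_dk_prod.1 hw).2⟩)
    (K1.mono (fun w hw => by
      rcases hsp w.1 hw.1 with h | h
      · exact .inl ⟨h, hw.2⟩
      · exact .inr ⟨h, hw.2⟩) le_rfl)
    (by
      intro w hw
      rcases hsp w hw with h | h
      · rw [K2 ⟨h, i1⟩]
        have h2 : w.2 = 1 := h.2
        simp only [h2, N3 _ h.1]; norm_num
      · rw [K3 ⟨h, i1⟩, hL1J w h])
  have hJsp : ∀ w ∈ Jset V, w ∈ Sp (V × ℝ) := by
    rintro ⟨s, t⟩ ⟨hs, ht, h | h⟩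
    · exact mem_sp_prod.2 (.inl ⟨hs, .inl h⟩)
    · exact mem_sp_prod.2 (.inr ⟨h, ht⟩)
  refine ⟨fun w => L w 0, fun s => L3 s 0, D1.at i0, fun w hw => ?_, cg, fun s hs => ?_⟩
  · simp only [D3 w (hJsp w hw) 0 i0]
    rw [K3 ⟨hw, i0⟩]
  · simp only [D3 (s, 1) (mem_sp_prod.2 (.inl ⟨hs, .inr rfl⟩)) 0 i0]
    rw [K2 (x := ((s, 1), 0)) ⟨⟨hs, mem_singleton _⟩, i0⟩]
    exact N2 s hs

/-! ### Extension over a cubical grid -/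

section Grid

variable {α Z : Type*} [TopologicalSpace α] [TopologicalSpace Z]

/-- Every continuous map on `A` all of whose values satisfy `G` extends to such a map on `B`. -/
def GExt (G : α → Z → Prop) (A B : Set α) : Prop :=
  ∀ c : α → Z, ContinuousOn c A → (∀ x ∈ A, G x (c x)) →
    ∃ c' : α → Z, ContinuousOn c' B ∧ (∀ x ∈ B, G x (c' x)) ∧ ∀ x ∈ A, c' x = c x

lemma GExt.trans {G : α → Z → Prop} {A B C : Set α} (hAB : A ⊆ B) (h : GExt G A B) (h' : GExt G B C) :
    GExt G A C := by
  intro c h1 h2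
  obtain ⟨c1, a1, a2, a3⟩ := h c h1 h2
  obtain ⟨c2, b1, b2, b3⟩ := h' c1 a1 a2
  exact ⟨c2, b1, b2, fun x hx => (b3 x (hAB hx)).trans (a3 x hx)⟩

/-- Attaching one piece `B'` along `A' = A ∩ B'`. -/
lemma GExt.step {G : α → Z → Prop} {A A' B' : Set α} (hA : IsClosed A) (hB : IsClosed B')
    (h1 : A' ⊆ A) (h2 : A ∩ B' ⊆ A') (h : GExt G A' B') : GExt G A (A ∪ B') := by
  intro c k1 k2
  obtain ⟨c1, a1, a2, a3⟩ := h c (k1.mono h1) fun x hx => k2 x (h1 hx)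
  obtain ⟨k, b1, b2, b3⟩ := ContinuousOn.glue hA hB k1 a1 fun x hx hx' => (a3 x (h2 ⟨hx, hx'⟩)).symm
  refine ⟨k, b1, ?_, b2⟩
  rintro x (hx | hx)
  · rw [b2 hx]; exact k2 x hx
  · rw [b3 hx]; exact a2 x hx

/-- The box with integral corners `(a, t₀)` and `(b, t₁)`. -/
def Box {m : ℕ} (a b : Fin m → ℕ) (t0 t1 : ℕ) : Set ((Fin m → ℝ) × ℝ) :=
  {w | (∀ i, (a i : ℝ) ≤ w.1 i ∧ w.1 i ≤ b i) ∧ (t0 : ℝ) ≤ w.2 ∧ w.2 ≤ t1}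

/-- The bottom and the sides of a box (in its nondegenerate directions). -/
def JBox {m : ℕ} (a b : Fin m → ℕ) (t0 t1 : ℕ) : Set ((Fin m → ℝ) × ℝ) :=
  Box a b t0 t1 ∩ ({w | w.2 = t0} ∪ ⋃ i, {w | a i < b i ∧ (w.1 i = a i ∨ w.1 i = b i)})

lemma mem_JBox {m : ℕ} {a b : Fin m → ℕ} {t0 t1 : ℕ} {w : (Fin m → ℝ) × ℝ} :
    w ∈ JBox a b t0 t1 ↔ w ∈ Box a b t0 t1 ∧
      (w.2 = t0 ∨ ∃ i, a i < b i ∧ (w.1 i = a i ∨ w.1 i = b i)) := by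
  simp [JBox]

lemma isClosed_Box {m : ℕ} (a b : Fin m → ℕ) (t0 t1 : ℕ) : IsClosed (Box a b t0 t1) := by
  have : Box a b t0 t1 = (⋂ i, {w : (Fin m → ℝ) × ℝ | (a i : ℝ) ≤ w.1 i}) ∩
      (⋂ i, {w : (Fin m → ℝ) × ℝ | w.1 i ≤ b i}) ∩ ({w | (t0 : ℝ) ≤ w.2} ∩ {w | w.2 ≤ t1}) := by
    ext w; simp [Box, forall_and]
  rw [this]
  refine .inter (.inter (isClosed_iInter fun i => ?_) (isClosed_iInter fun i => ?_)) (.inter ?_ ?_)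
  all_goals exact isClosed_le (by fun_prop) (by fun_prop)

lemma isClosed_JBox {m : ℕ} (a b : Fin m → ℕ) (t0 t1 : ℕ) : IsClosed (JBox a b t0 t1) := by
  refine (isClosed_Box a b t0 t1).inter (.union (isClosed_eq (by fun_prop) (by fun_prop))
    (isClosed_iUnion_of_finite fun i => ?_))
  by_cases h : a i < b i
  · simp only [h, true_and]
    exact .union (isClosed_eq (by fun_prop) (by fun_prop)) (isClosed_eq (by fun_prop) (by fun_prop))
  · simp [h]

/-- Cutting a box at a level `p` of the last coordinate. -/
lemma GExt.split_time {m : ℕ} {G : (Fin m → ℝ) × ℝ → Z → Prop} {a b : Fin m → ℕ} {t0 p t1 : ℕ}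
    (h0 : t0 < p) (h1 : p < t1) (hL : GExt G (JBox a b t0 p) (Box a b t0 p))
    (hU : GExt G (JBox a b p t1) (Box a b p t1)) : GExt G (JBox a b t0 t1) (Box a b t0 t1) := by
  have h0' : (t0 : ℝ) < p := by exact_mod_cast h0
  have h1' : (p : ℝ) < t1 := by exact_mod_cast h1
  have e1 := GExt.step (isClosed_JBox a b t0 t1) (isClosed_Box a b t0 p) (A' := JBox a b t0 p)
    (by
      rintro w hw
      rw [mem_JBox] at hw ⊢
      exact ⟨⟨hw.1.1, hw.1.2.1, hw.1.2.2.trans h1'.le⟩, hw.2⟩)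
    (by
      rintro w ⟨hw, hw'⟩
      rw [mem_JBox] at hw ⊢
      exact ⟨hw', hw.2⟩) hL
  have e2 := GExt.step ((isClosed_JBox a b t0 t1).union (isClosed_Box a b t0 p))
    (isClosed_Box a b p t1) (A' := JBox a b p t1)
    (by
      rintro w hw
      rw [mem_JBox] at hw
      rcases hw.2 with h | h
      · exact .inr ⟨hw.1.1, by rw [h]; exact h0'.le, h.le⟩
      · exact .inl (mem_JBox.2 ⟨⟨hw.1.1, h0'.le.trans hw.1.2.1, hw.1.2.2⟩, .inr h⟩))
    (by
      rintro w ⟨hw | hw, hw'⟩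
      · rw [mem_JBox] at hw ⊢
        refine ⟨hw', hw.2.imp_left fun h => ?_⟩
        have := hw'.2.1
        linarith
      · exact mem_JBox.2 ⟨hw', .inl (le_antisymm hw.2.2 hw'.2.1)⟩) hU
  refine (e1.trans subset_union_left e2).trans (subset_union_left.trans subset_union_left) ?_
  intro c k1 k2
  have : Box a b t0 t1 ⊆ JBox a b t0 t1 ∪ Box a b t0 p ∪ Box a b p t1 := by
    intro w hw
    rcases le_total w.2 p with h | h
    · exact .inl (.inr ⟨hw.1, hw.2.1, h⟩)
    · exact .inr ⟨hw.1, h, hw.2.2⟩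
  refine ⟨c, k1.mono this, fun x hx => k2 x (this hx), fun _ _ => rfl⟩

/-- Cutting a box at a level `p` of one of the first coordinates: extend over the wall first, then
over the two halves. -/
lemma GExt.split_space {m : ℕ} {G : (Fin m → ℝ) × ℝ → Z → Prop} {a b : Fin m → ℕ} {t0 t1 : ℕ}
    {i : Fin m} {p : ℕ} (h0 : a i < p) (h1 : p < b i) {a' b' : Fin m → ℕ} (ha : a' i = p)
    (ha' : ∀ k, k ≠ i → a' k = a k) (hb : b' i = p) (hb' : ∀ k, k ≠ i → b' k = b k)
    (hW : GExt G (JBox a' b' t0 t1) (Box a' b' t0 t1))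
    (hL : GExt G (JBox a b' t0 t1) (Box a b' t0 t1))
    (hU : GExt G (JBox a' b t0 t1) (Box a' b t0 t1)) :
    GExt G (JBox a b t0 t1) (Box a b t0 t1) := by
  have h0' : (a i : ℝ) < p := by exact_mod_cast h0
  have h1' : (p : ℝ) < b i := by exact_mod_cast h1
  have mW : ∀ w, w ∈ Box a' b' t0 t1 ↔ w ∈ Box a b t0 t1 ∧ w.1 i = p := by
    intro w
    constructor
    · refine fun h => ⟨⟨fun k => ?_, h.2⟩, ?_⟩
      · have := h.1 k
        by_cases hk : k = i
        · subst hk; rw [ha, hb] at this; constructor <;> linarith [this.1, this.2]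
        · rwa [ha' k hk, hb' k hk] at this
      · have := h.1 i
        rw [ha, hb] at this; exact le_antisymm this.2 this.1
    · refine fun h => ⟨fun k => ?_, h.1.2⟩
      by_cases hk : k = i
      · subst hk; rw [ha, hb, h.2]; exact ⟨le_rfl, le_rfl⟩
      · rw [ha' k hk, hb' k hk]; exact h.1.1 k
  have mL : ∀ w, w ∈ Box a b' t0 t1 ↔ w ∈ Box a b t0 t1 ∧ w.1 i ≤ p := by
    intro w
    constructor
    · refine fun h => ⟨⟨fun k => ?_, h.2⟩, ?_⟩
      · have := h.1 k
        by_cases hk : k = i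
        · subst hk; rw [hb] at this; constructor <;> linarith [this.1, this.2]
        · rwa [hb' k hk] at this
      · have := h.1 i
        rw [hb] at this; exact this.2
    · refine fun h => ⟨fun k => ?_, h.1.2⟩
      by_cases hk : k = i
      · subst hk; rw [hb]; exact ⟨(h.1.1 k).1, h.2⟩
      · rw [hb' k hk]; exact h.1.1 k
  have mU : ∀ w, w ∈ Box a' b t0 t1 ↔ w ∈ Box a b t0 t1 ∧ p ≤ w.1 i := by
    intro w
    constructor
    · refine fun h => ⟨⟨fun k => ?_, h.2⟩, ?_⟩
      · have := h.1 k
        by_cases hk : k = i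
        · subst hk; rw [ha] at this; constructor <;> linarith [this.1, this.2]
        · rwa [ha' k hk] at this
      · have := h.1 i
        rw [ha] at this; exact this.1
    · refine fun h => ⟨fun k => ?_, h.1.2⟩
      by_cases hk : k = i
      · subst hk; rw [ha]; exact ⟨h.2, (h.1.1 k).2⟩
      · rw [ha' k hk]; exact h.1.1 k
  have e1 := GExt.step (isClosed_JBox a b t0 t1) (isClosed_Box a' b' t0 t1) (A' := JBox a' b' t0 t1)
    (by
      rintro w hw
      rw [mem_JBox, mW] at hw
      refine mem_JBox.2 ⟨hw.1.1, hw.2.imp_right ?_⟩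
      rintro ⟨k, h2, h3⟩
      have hk : k ≠ i := by rintro rfl; omega
      rw [ha' k hk, hb' k hk] at h2 h3
      exact ⟨k, h2, h3⟩)
    (by
      rintro w ⟨hw, hw'⟩
      rw [mem_JBox] at hw ⊢
      refine ⟨hw', hw.2.imp_right ?_⟩
      rintro ⟨k, h2, h3⟩
      have hk : k ≠ i := by
        rintro rfl
        have := ((mW w).1 hw').2
        rcases h3 with h3 | h3 <;> linarith
      exact ⟨k, by rwa [ha' k hk, hb' k hk], by rwa [ha' k hk, hb' k hk]⟩) hW
  have e2 := GExt.step ((isClosed_JBox a b t0 t1).union (isClosed_Box a' b' t0 t1))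
    (isClosed_Box a b' t0 t1) (A' := JBox a b' t0 t1)
    (by
      rintro w hw
      rw [mem_JBox, mL] at hw
      obtain ⟨⟨g1, g2⟩, h | ⟨k, h2, h3⟩⟩ := hw
      · exact .inl (mem_JBox.2 ⟨g1, .inl h⟩)
      · by_cases hk : k = i
        · subst hk
          rcases h3 with h3 | h3
          · exact .inl (mem_JBox.2 ⟨g1, .inr ⟨k, by omega, .inl h3⟩⟩)
          · exact .inr ((mW w).2 ⟨g1, by rw [h3, hb]⟩)
        · rw [hb' k hk] at h2 h3
          exact .inl (mem_JBox.2 ⟨g1, .inr ⟨k, h2, h3⟩⟩))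
    (by
      rintro w ⟨hw | hw, hw'⟩
      · rw [mem_JBox] at hw ⊢
        refine ⟨hw', hw.2.imp_right ?_⟩
        rintro ⟨k, h2, h3⟩
        by_cases hk : k = i
        · subst hk
          have := ((mL w).1 hw').2
          rcases h3 with h3 | h3
          · exact ⟨k, by omega, .inl h3⟩
          · linarith
        · exact ⟨k, by rwa [hb' k hk], by rwa [hb' k hk]⟩
      · refine mem_JBox.2 ⟨hw', .inr ⟨i, by omega, .inr ?_⟩⟩
        rw [hb, ((mW w).1 hw).2]) hL
  have e3 := GExt.step (((isClosed_JBox a b t0 t1).union (isClosed_Box a' b' t0 t1)).union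
    (isClosed_Box a b' t0 t1)) (isClosed_Box a' b t0 t1) (A' := JBox a' b t0 t1)
    (by
      rintro w hw
      rw [mem_JBox, mU] at hw
      obtain ⟨⟨g1, g2⟩, h | ⟨k, h2, h3⟩⟩ := hw
      · exact .inl (.inl (mem_JBox.2 ⟨g1, .inl h⟩))
      · by_cases hk : k = i
        · subst hk
          rcases h3 with h3 | h3
          · exact .inl (.inr ((mW w).2 ⟨g1, by rw [h3, ha]⟩))
          · exact .inl (.inl (mem_JBox.2 ⟨g1, .inr ⟨k, by omega, .inr h3⟩⟩))
        · rw [ha' k hk] at h2 h3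
          exact .inl (.inl (mem_JBox.2 ⟨g1, .inr ⟨k, h2, h3⟩⟩)))
    (by
      have hp : ∀ w, w ∈ Box a' b t0 t1 → w.1 i = p → w ∈ JBox a' b t0 t1 := fun w hw h =>
        mem_JBox.2 ⟨hw, .inr ⟨i, by omega, .inl (by rw [ha, h])⟩⟩
      rintro w ⟨(hw | hw) | hw, hw'⟩
      · rw [mem_JBox] at hw ⊢
        refine ⟨hw', hw.2.imp_right ?_⟩
        rintro ⟨k, h2, h3⟩
        by_cases hk : k = i
        · subst hk
          have := ((mU w).1 hw').2
          rcases h3 with h3 | h3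
          · linarith
          · exact ⟨k, by omega, .inr h3⟩
        · exact ⟨k, by rwa [ha' k hk], by rwa [ha' k hk]⟩
      · exact hp w hw' ((mW w).1 hw).2
      · exact hp w hw' (le_antisymm ((mL w).1 hw).2 ((mU w).1 hw').2)) hU
  refine ((e1.trans subset_union_left e2).trans
    (subset_union_left.trans subset_union_left) e3).trans
    ((subset_union_left.trans subset_union_left).trans subset_union_left) ?_
  intro c k1 k2
  have : Box a b t0 t1 ⊆
      JBox a b t0 t1 ∪ Box a' b' t0 t1 ∪ Box a b' t0 t1 ∪ Box a' b t0 t1 := by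
    intro w hw
    rcases le_total (w.1 i) p with h | h
    · exact .inl (.inr ((mL w).2 ⟨hw, h⟩))
    · exact .inr ((mU w).2 ⟨hw, h⟩)
  exact ⟨c, k1.mono this, fun x hx => k2 x (this hx), fun _ _ => rfl⟩

/-- If the extension problem is solvable on all unit cells, of all dimensions, it is solvable on
every box. -/
theorem GExt.box {m : ℕ} {G : (Fin m → ℝ) × ℝ → Z → Prop} {N : ℕ}
    (hG : ∀ (a b : Fin m → ℕ) (t : ℕ), (∀ i, a i ≤ b i ∧ b i ≤ a i + 1 ∧ b i ≤ N) → t + 1 ≤ N →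
      GExt G (JBox a b t (t + 1)) (Box a b t (t + 1))) :
    ∀ (M : ℕ) (a b : Fin m → ℕ) (t0 t1 : ℕ), (∀ i, a i ≤ b i ∧ b i ≤ N) → t0 < t1 → t1 ≤ N →
      ∑ i, (b i - a i) + (t1 - t0) ≤ M → GExt G (JBox a b t0 t1) (Box a b t0 t1) := by
  classical
  intro M
  induction M with
  | zero => intro a b t0 t1 _ h _ hM; omega
  | succ M ih =>
    intro a b t0 t1 hab ht htN hM
    by_cases h1 : t0 + 1 < t1
    · refine GExt.split_time (Nat.lt_succ_self t0) h1 (ih _ _ _ _ hab (by omega) (by omega) ?_)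
        (ih _ _ _ _ hab (by omega) (by omega) ?_) <;> omega
    obtain rfl : t1 = t0 + 1 := by omega
    by_cases h2 : ∃ i, a i + 1 < b i
    · obtain ⟨i, hi⟩ := h2
      have key : ∀ a' b' : Fin m → ℕ, (∀ k, k ≠ i → b' k - a' k = b k - a k) →
          b' i - a' i < b i - a i → ∑ k, (b' k - a' k) < ∑ k, (b k - a k) := by
        intro a' b' h3 h4
        refine Finset.sum_lt_sum (fun k _ => ?_) ⟨i, Finset.mem_univ _, h4⟩
        by_cases hk : k = i
        · subst hk; exact h4.le
        · exact (h3 k hk).le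
      have ua : ∀ k, k ≠ i → Function.update a i (a i + 1) k = a k := fun k hk => by simp [hk]
      have ub : ∀ k, k ≠ i → Function.update b i (a i + 1) k = b k := fun k hk => by simp [hk]
      have va : Function.update a i (a i + 1) i = a i + 1 := by simp
      have vb : Function.update b i (a i + 1) i = a i + 1 := by simp
      refine GExt.split_space (Nat.lt_succ_self (a i)) hi (i := i) va ua vb ub
        (ih _ _ _ _ (fun k => ?_) ht htN ?_) (ih _ _ _ _ (fun k => ?_) ht htN ?_)
        (ih _ _ _ _ (fun k => ?_) ht htN ?_)
      · have := hab k; have := hab i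
        by_cases hk : k = i
        · subst hk; rw [va, vb]; omega
        · rwa [ua k hk, ub k hk]
      · have := key (Function.update a i (a i + 1))
          (Function.update b i (a i + 1)) (fun k hk => by rw [ua k hk, ub k hk]) (by rw [va, vb]; omega)
        omega
      · have := hab k; have := hab i
        by_cases hk : k = i
        · subst hk; rw [vb]; omega
        · rwa [ub k hk]
      · have := key a (Function.update b i (a i + 1)) (fun k hk => by rw [ub k hk]) (by rw [vb]; omega)
        omega
      · have := hab k; have := hab i
        by_cases hk : k = i
        · subst hk; rw [va]; omega
        · rwa [ua k hk]
      · have := key (Function.update a i (a i + 1)) b (fun k hk => by rw [ua k hk]) (by rw [va]; omega)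
        omega
    · push Not at h2
      exact hG a b t0 (fun i => ⟨(hab i).1, h2 i, (hab i).2⟩) htN

end Grid

/-! ### Solving the extension problem on one cell -/

/-- Up to height `ℓ`, the configuration `c` is the one whose sweep ends in `f`. -/
def Agree {n : ℕ} (j : Fin n) (c f : ConfSp n) (ℓ : ℝ) : Prop :=
  ∀ x : Euc n, x j ≤ ℓ → (x ∈ c.1 ↔ ∃ y ∈ f.1, setC j y (binv (y j)) = x)

lemma Agree.mono {n : ℕ} {j : Fin n} {c f : ConfSp n} {ℓ ℓ' : ℝ} (h : Agree j c f ℓ)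
    (hl : ℓ' ≤ ℓ) : Agree j c f ℓ' := fun x hx => h x (hx.trans hl)

lemma Agree.ne {n : ℕ} {j : Fin n} {c f : ConfSp n} {ℓ : ℝ} (h : Agree j c f ℓ)
    (hf : ∀ y ∈ f.1, binv (y j) ≠ ℓ) : ∀ x ∈ c.1, x j ≠ ℓ := by
  intro x hx e
  obtain ⟨y, hy, rfl⟩ := (h x e.le).1 hx
  exact hf y hy (by simpa using e)

lemma agree_Qc {n : ℕ} {j : Fin n} {c : ConfSp n} (hc : c ∈ ER j (Iio 1)) {ℓ : ℝ} (hl : ℓ < 0) :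
    Agree j c (Qc j c 1) ℓ := by
  intro x hx
  constructor
  · intro h
    refine ⟨setC j x (kinv (2 * 1 / (1 - x j) - 1)), ?_, ?_⟩
    · rw [mem_Qc_one hc, setC_same, setC_setC, binv_kinv (by linarith), setC_eq_self _ _ rfl]
      exact h
    · rw [setC_same, setC_setC, binv_kinv (by linarith), setC_eq_self _ _ rfl]
  · rintro ⟨y, hy, rfl⟩
    exact (mem_Qc_one hc).1 hy

lemma Agree.mem_iff {n : ℕ} {j : Fin n} {c f : ConfSp n} {u : ℝ} (h : Agree j c f (binv u))
    (hc : c ∈ ER j (Iio 1)) {x : Euc n} (hx : x j ≤ u) : x ∈ f.1 ↔ x ∈ (Qc j c 1).1 := by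
  rw [mem_Qc_one hc, h _ (by rw [setC_same]; exact binv_strictMono.monotone hx)]
  constructor
  · exact fun hx => ⟨x, hx, rfl⟩
  · rintro ⟨y, hy, e⟩
    have e1 : y j = x j := binv_strictMono.injective (by
      have := congrArg (fun z : Euc n => z j) e
      simpa using this)
    have : y = x := by
      apply euc_ext; intro i
      by_cases hi : i = j
      · rw [hi, e1]
      · have := congrArg (fun z : Euc n => z i) e
        simpa [hi] using this
    exact this ▸ hy

lemma frontier_Iio_sub (l y : ℝ) (h : y ≠ l) : y ∉ frontier (Iio l) := by
  rw [frontier_Iio]; exact h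

lemma frontier_Ioo_sub (l l' y : ℝ) (h : y ≠ l) (h' : y ≠ l') : y ∉ frontier (Ioo l l') := by
  intro hy
  rcases lt_or_ge l l' with hl | hl
  · rw [frontier_Ioo hl] at hy
    rcases hy with rfl | rfl
    · exact h rfl
    · exact h' rfl
  · rw [Ioo_eq_empty (by linarith), frontier_empty] at hy
    exact hy

/-- The extension problem on one cell, with a wall `ℓ` on the whole cell and a higher wall `ℓ'` on
its top face. -/
theorem cell_solve {n : ℕ} {i j : Fin n} (hij : i < j) {V : Type*} [NormedAddCommGroup V]
    [NormedSpace ℝ V] {F c : V × ℝ → ConfSp n} {ℓ ℓ' : ℝ} (hl : ℓ < 0) (hll : ℓ ≤ ℓ')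
    (hF : CMap (Dk (V × ℝ)) (ER j univ) F)
    (hw : ∀ w ∈ Dk (V × ℝ), ∀ y ∈ (F w).1, binv (y j) ≠ ℓ)
    (hw' : ∀ s ∈ Dk V, ∀ y ∈ (F (s, 1)).1, binv (y j) ≠ ℓ')
    (h0 : ℓ' < 0 ∨ (ℓ' = 0 ∧ ∀ s ∈ Dk V, F (s, 1) = cEmpty n))
    (hc : CMap (Jset V) (ER j (Iio 1)) c)
    (hcF : ∀ w ∈ Jset V, Agree j (c w) (F w) ℓ)
    (hcF' : ∀ s ∈ Sp V, Agree j (c (s, 1)) (F (s, 1)) ℓ') :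
    ∃ c' : V × ℝ → ConfSp n, CMap (Dk (V × ℝ)) (ER j (Iio 1)) c' ∧ (∀ w ∈ Jset V, c' w = c w) ∧
      (∀ w ∈ Dk (V × ℝ), Agree j (c' w) (F w) ℓ) ∧
      ∀ s ∈ Dk V, Agree j (c' (s, 1)) (F (s, 1)) ℓ' := by
  have l0 : ℓ' ≤ 0 := by rcases h0 with h | h <;> linarith [h]
  have hJD : Jset V ⊆ Dk (V × ℝ) := fun w hw => mem_dk_prod.2 ⟨hw.1, hw.2.1⟩
  have top : ∀ s ∈ Dk V, (s, (1 : ℝ)) ∈ Dk (V × ℝ) := fun s hs =>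
    mem_dk_prod.2 ⟨hs, by norm_num, le_rfl⟩
  have topJ : ∀ s ∈ Sp V, (s, (1 : ℝ)) ∈ Jset V := fun s hs =>
    ⟨sp_sub hs, ⟨by norm_num, le_rfl⟩, .inr hs⟩
  have hup : CMap (Jset V) (ER j (Ioo ℓ 1)) (fun w => cut j (Ioo ℓ 1) (c w)) := by
    refine ⟨fun w hw0 => tendsto_cut (hc.1 w hw0) fun p hp => frontier_Ioo_sub _ _ _ ?_ ?_,
      fun w hw0 x hx => ⟨hx.2, (hc.2 w hw0 x hx.1).2⟩⟩
    · exact (hcF w hw0).ne (hw w (hJD hw0)) p hp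
    · exact (hc.2 w hw0 p hp).1.ne
  have hg0 : CMap (Sp V) (ER j (Ioo ℓ' 1)) (fun s => cut j (Ioo ℓ' 1) (c (s, 1))) := by
    refine ⟨fun s hs => ?_, fun s hs x hx => ⟨hx.2, (hc.2 _ (topJ s hs) x hx.1).2⟩⟩
    have ht : Tendsto (fun s => c (s, 1)) (𝓝[Sp V] s) (𝓝 (c (s, 1))) :=
      (hc.1.comp (f := fun s : V => (s, (1 : ℝ))) (by fun_prop) fun s hs => topJ s hs) s hs
    refine tendsto_cut ht fun p hp => frontier_Ioo_sub _ _ _ ?_ ?_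
    · exact (hcF' s hs).ne (hw' s (sp_sub hs)) p hp
    · exact (hc.2 _ (topJ s hs) p hp).1.ne
  have hFt : ∀ s ∈ Dk V, Tendsto (fun s => F (s, 1)) (𝓝[Dk V] s) (𝓝 (F (s, 1))) := fun s hs =>
    (hF.1.comp (f := fun s : V => (s, (1 : ℝ))) (by fun_prop) fun s hs => top s hs) s hs
  have hm : CMap (Dk V) (ER j (Ioo ℓ ℓ')) (fun s => bicut j (Ioo ℓ ℓ') (F (s, 1))) := by
    rcases h0 with h0 | ⟨-, h0⟩
    · refine ⟨fun s hs => ?_, fun s hs => bicut_mem (hF.2 _ (top s hs))⟩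
      refine tendsto_bicut (hFt s hs) h0 (fun y hy => hy.2) fun p hp =>
        frontier_Ioo_sub _ _ _ (hw _ (top s hs) p hp) (hw' s hs p hp)
    · refine CMap.congr (u := fun _ => cEmpty n) ⟨continuousOn_const, fun _ _ => cEmpty_mem_ER _ _⟩ ?_
      intro s hs
      simp only [h0 s hs, bicut_empty]
  have hfl : CMap (Dk (V × ℝ)) (ER j (Iio ℓ)) (fun w => bicut j (Iio ℓ) (F w)) :=
    ⟨fun w hw0 => tendsto_bicut (hF.1 w hw0) hl subset_rfl fun p hp =>
      frontier_Iio_sub _ _ (hw w hw0 p hp), fun w hw0 => bicut_mem (hF.2 _ hw0)⟩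
  obtain ⟨W, g, W1, W2, g1, g2⟩ := cell_core hij hll (by linarith) hup hm hg0 (by
    intro s hs
    apply conf_ext; intro x
    simp only [mem_cUnion, mem_cut, mem_bicut]
    have hx1 : x ∈ (c (s, 1)).1 → x j ≠ ℓ' := (hcF' s hs).ne (hw' s (sp_sub hs)) x
    constructor
    · rintro ⟨k1, k2, k3⟩
      rcases lt_or_gt_of_ne (hx1 k1) with h | h
      · exact .inl ⟨⟨k2, h⟩, ((hcF' s hs) x h.le).1 k1⟩
      · exact .inr ⟨k1, h, k3⟩
    · rintro (⟨⟨k1, k2⟩, k3⟩ | ⟨k1, k2, k3⟩)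
      · exact ⟨((hcF' s hs) x k2.le).2 k3, k1, by linarith⟩
      · exact ⟨k1, by linarith, k3⟩)
  have hagree : ∀ w ∈ Dk (V × ℝ), Agree j (cUnion (bicut j (Iio ℓ) (F w)) (W w)) (F w) ℓ := by
    intro w hw0 x hx
    rw [mem_cUnion, mem_bicut]
    constructor
    · rintro (h | h)
      · exact h.2
      · exact absurd (W1.2 w hw0 x h).1.1 (not_lt.2 hx)
    · rintro ⟨y, hy, rfl⟩
      rw [setC_same] at hx
      exact .inl ⟨by rw [setC_same]; exact lt_of_le_of_ne hx (hw w hw0 y hy), y, hy, rfl⟩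
  refine ⟨fun w => cUnion (bicut j (Iio ℓ) (F w)) (W w), ?_, ?_, hagree, ?_⟩
  · refine CMap.cUnion hfl W1 (fun y hy hy' => ?_) ?_ ?_
    · exact lt_asymm hy hy'.1
    · exact Iio_subset_Iio (by linarith)
    · exact fun y hy => hy.2
  · intro w hw0
    apply conf_ext; intro x
    have hW := W2 w hw0
    simp only [mem_cUnion, hW, mem_cut, mem_bicut]
    constructor
    · rintro (⟨k1, k2⟩ | k)
      · exact (hcF w hw0 x (le_of_lt k1)).2 k2
      · exact k.1
    · intro hx
      have h1 := (hcF w hw0).ne (hw w (hJD hw0)) x hx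
      rcases lt_or_gt_of_ne h1 with h | h
      · exact .inl ⟨h, (hcF w hw0 x h.le).1 hx⟩
      · exact .inr ⟨hx, h, (hc.2 w hw0 x hx).1⟩
  · intro s hs x hx
    simp only [g2 s hs, mem_cUnion, mem_bicut]
    constructor
    · rintro (h | h | h)
      · exact h.2
      · exact h.2
      · exact absurd (g1.2 s hs x h).1.1 (not_lt.2 hx)
    · rintro ⟨y, hy, rfl⟩
      rw [setC_same] at hx ⊢
      rcases lt_or_gt_of_ne (hw _ (top s hs) y hy) with h | h
      · exact .inl ⟨h, y, hy, rfl⟩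
      · exact .inr (.inl ⟨⟨h, lt_of_le_of_ne hx (hw' s hs y hy)⟩, y, hy, rfl⟩)

/-! ### Solving the extension problem on a grid -/

/-- A unit cell is affinely a ball (of its own dimension, for the supremum norm). -/
lemma exists_param {m : ℕ} {a b : Fin m → ℕ} (t : ℕ) (hab : ∀ i, a i ≤ b i ∧ b i ≤ a i + 1) :
    ∃ (p : ({i // a i < b i} → ℝ) × ℝ → (Fin m → ℝ) × ℝ)
      (q : (Fin m → ℝ) × ℝ → ({i // a i < b i} → ℝ) × ℝ), Continuous p ∧ Continuous q ∧
      (∀ w ∈ Dk (({i // a i < b i} → ℝ) × ℝ), p w ∈ Box a b t (t + 1)) ∧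
      (∀ w ∈ Box a b t (t + 1), q w ∈ Dk (({i // a i < b i} → ℝ) × ℝ) ∧ p (q w) = w) ∧
      (∀ w ∈ Jset ({i // a i < b i} → ℝ), p w ∈ JBox a b t (t + 1)) ∧
      (∀ w ∈ JBox a b t (t + 1), q w ∈ Jset ({i // a i < b i} → ℝ)) ∧
      (∀ w, (p w).2 = t + (1 + w.2) / 2) ∧ ∀ w, (q w).2 = 2 * (w.2 - t) - 1 := by
  classical
  let p : ({i // a i < b i} → ℝ) × ℝ → (Fin m → ℝ) × ℝ := fun w =>
    (fun i => if h : a i < b i then a i + (1 + w.1 ⟨i, h⟩) / 2 else a i, t + (1 + w.2) / 2)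
  let q : (Fin m → ℝ) × ℝ → ({i // a i < b i} → ℝ) × ℝ := fun w =>
    (fun i => 2 * (w.1 i - a i) - 1, 2 * (w.2 - t) - 1)
  have hb : ∀ i, a i < b i → (b i : ℝ) = a i + 1 := fun i hi => by
    have : b i = a i + 1 := le_antisymm (hab i).2 hi
    rw [this]; push_cast; rfl
  have hb' : ∀ i, ¬ a i < b i → (b i : ℝ) = a i := fun i hi => by
    have := (hab i).1
    have : b i = a i := by omega
    rw [this]
  have hp : Continuous p := by
    refine .prodMk (continuous_pi fun i => ?_) (by fun_prop)
    by_cases h : a i < b i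
    · simp only [h, dif_pos]; fun_prop
    · simp only [h, dif_neg, not_false_eq_true]; fun_prop
  have hq : Continuous q := by fun_prop
  have p1 : ∀ w ∈ Dk (({i // a i < b i} → ℝ) × ℝ), p w ∈ Box a b t (t + 1) := by
    rintro ⟨u, θ⟩ hw
    obtain ⟨h1, h2⟩ := mem_dk_prod.1 hw
    rw [mem_dk_pi] at h1
    refine ⟨fun i => ?_, ?_⟩
    · by_cases h : a i < b i
      · have := abs_le.1 (h1 ⟨i, h⟩)
        simp only [p, h, dif_pos, hb i h]
        constructor <;> linarith [this.1, this.2]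
      · simp only [p, h, dif_neg, not_false_eq_true, hb' i h]
        exact ⟨le_rfl, le_rfl⟩
    · simp only [p]; push_cast
      constructor <;> linarith [h2.1, h2.2]
  have q1 : ∀ w ∈ Box a b t (t + 1), q w ∈ Dk (({i // a i < b i} → ℝ) × ℝ) := by
    rintro ⟨s, r⟩ ⟨h1, h2, h3⟩
    push_cast at h3
    refine mem_dk_prod.2 ⟨mem_dk_pi.2 fun i => ?_, ?_⟩
    · have := h1 i.1
      rw [hb i.1 i.2] at this
      rw [abs_le]
      constructor <;> linarith [this.1, this.2]
    · simp only at h2 h3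
      constructor <;> linarith
  have pq : ∀ w ∈ Box a b t (t + 1), p (q w) = w := by
    rintro ⟨s, r⟩ ⟨h1, h2, h3⟩
    refine Prod.ext (funext fun i => ?_) ?_
    · by_cases h : a i < b i
      · simp only [p, q, h, dif_pos]; ring
      · have := h1 i
        rw [hb' i h] at this
        simp only [p, h, dif_neg, not_false_eq_true]
        exact le_antisymm this.1 this.2
    · simp only [p, q]; ring
  refine ⟨p, q, hp, hq, p1, fun w hw => ⟨q1 w hw, pq w hw⟩, ?_, ?_, fun w => rfl, fun w => rfl⟩
  · rintro ⟨u, θ⟩ ⟨h1, h2, h3⟩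
    refine mem_JBox.2 ⟨p1 _ (mem_dk_prod.2 ⟨h1, h2⟩), ?_⟩
    rcases h3 with h3 | h3
    · left
      simp only at h3
      simp [p, h3]
    · right
      obtain ⟨-, ⟨i, hi⟩, h4⟩ := mem_sp_pi.1 h3
      refine ⟨i, hi, ?_⟩
      simp only [p, hi, dif_pos, hb i hi]
      simp only at h4
      rcases (abs_eq zero_le_one).1 h4 with h5 | h5
      · right; rw [h5]; norm_num
      · left; rw [h5]; norm_num
  · rintro ⟨s, r⟩ hw
    obtain ⟨h1, h2⟩ := mem_JBox.1 hw
    have := mem_dk_prod.1 (q1 _ h1)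
    refine ⟨this.1, this.2, ?_⟩
    rcases h2 with h2 | ⟨i, hi, h2⟩
    · left
      simp only at h2
      simp [q, h2]
    · right
      refine mem_sp_pi.2 ⟨mem_dk_pi.1 this.1, ⟨i, hi⟩, ?_⟩
      simp only [q]
      rw [hb i hi] at h2
      rcases h2 with h2 | h2 <;> simp only at h2 <;> rw [h2] <;> norm_num

/-- The cube with integral corners given by the four arguments. -/
def ZBox {m : ℕ} (lo hi : Fin m → ℤ) (tl th : ℤ) : Set ((Fin m → ℝ) × ℝ) :=
  {w | (∀ i, (lo i : ℝ) ≤ w.1 i ∧ w.1 i ≤ hi i) ∧ (tl : ℝ) ≤ w.2 ∧ w.2 ≤ th}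

/-- The condition on a value `c` at `w` of the map under construction: over each cube `B ι`, it
agrees with `F` up to the height `ℓ ι`, and over the top of the grid it lies above height `0`. -/
def Good {m n : ℕ} {I : Type*} (j : Fin n) (F : (Fin m → ℝ) × ℝ → ConfSp n) (N : ℕ)
    (B : I → Set ((Fin m → ℝ) × ℝ)) (ℓ : I → ℝ) (w : (Fin m → ℝ) × ℝ) (c : ConfSp n) : Prop :=
  c ∈ ER j (Iio 1) ∧ (∀ ι, w ∈ B ι → Agree j c (F w) (ℓ ι)) ∧ (w.2 = N → Agree j c (F w) 0)

/-- A point of an open cell lies in a cube with integral corners only if the whole cell does. -/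
lemma zbox_of_mem {m : ℕ} {a b : Fin m → ℕ} {t : ℕ} (hab : ∀ i, a i ≤ b i ∧ b i ≤ a i + 1)
    {lo hi : Fin m → ℤ} {tl th : ℤ} {w : (Fin m → ℝ) × ℝ} (hw : w ∈ Box a b t (t + 1))
    (hwJ : w ∉ JBox a b t (t + 1)) (hz : w ∈ ZBox lo hi tl th) {v : (Fin m → ℝ) × ℝ}
    (hv : v ∈ Box a b t (t + 1)) (hvw : w.2 < t + 1 ∨ v.2 = w.2) : v ∈ ZBox lo hi tl th := by
  have hJ : w.2 ≠ t ∧ ∀ i, a i < b i → w.1 i ≠ a i ∧ w.1 i ≠ b i := by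
    rw [mem_JBox] at hwJ
    push Not at hwJ
    exact hwJ hw
  have key : ∀ (x y : ℝ) (l h : ℤ) (a : ℕ), (l : ℝ) ≤ x → x ≤ h → (a : ℝ) < x → x < a + 1 →
      (a : ℝ) ≤ y → y ≤ a + 1 → (l : ℝ) ≤ y ∧ y ≤ h := by
    intro x y l h a h1 h2 h3 h4 h5 h6
    have k1 : l < (a : ℤ) + 1 := by
      have : (l : ℝ) < ((a : ℤ) + 1 : ℤ) := by push_cast; linarith
      exact_mod_cast this
    have k2 : (a : ℤ) < h := by
      have : ((a : ℤ) : ℝ) < h := by push_cast; linarith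
      exact_mod_cast this
    have k3 : (l : ℝ) ≤ a := by
      have : l ≤ (a : ℤ) := by omega
      exact_mod_cast this
    have k4 : (a : ℝ) + 1 ≤ h := by
      have : (a : ℤ) + 1 ≤ h := by omega
      exact_mod_cast this
    constructor <;> linarith
  refine ⟨fun i => ?_, ?_⟩
  · have h1 := hw.1 i
    have h2 := hv.1 i
    by_cases h : a i < b i
    · have hb : (b i : ℝ) = a i + 1 := by
        have : b i = a i + 1 := le_antisymm (hab i).2 h
        rw [this]; push_cast; rfl
      have h3 := hJ.2 i h
      rw [hb] at h1 h2 h3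
      exact key (w.1 i) (v.1 i) _ _ (a i) (hz.1 i).1 (hz.1 i).2
        (lt_of_le_of_ne h1.1 h3.1.symm) (lt_of_le_of_ne h1.2 h3.2) h2.1 h2.2
    · have hb : (b i : ℝ) = a i := by
        have := (hab i).1
        have : b i = a i := by omega
        rw [this]
      rw [hb] at h1 h2
      have : v.1 i = w.1 i := by linarith [h1.1, h1.2, h2.1, h2.2]
      rw [this]; exact hz.1 i
  · rcases hvw with h | h
    · have h2 := hv.2
      push_cast at h2
      exact key w.2 v.2 _ _ t hz.2.1 hz.2.2 (lt_of_le_of_ne hw.2.1 hJ.1.symm) h h2.1 h2.2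
    · rw [h]; exact hz.2

/-- The extension problem on a unit cell of the grid. The wall for the cell is the highest of the
walls `ℓ ι` whose cube contains the whole cell, and the wall for the top face is the highest of those
whose cube contains that face, or `0` if it lies over the top of the grid. -/
theorem good_cell {m n : ℕ} {I : Type*} [Finite I] {i j : Fin n} (hij : i < j)
    {F : (Fin m → ℝ) × ℝ → ConfSp n} {N : ℕ} {lo hi : I → Fin m → ℤ} {tl th : I → ℤ} {ℓ : I → ℝ}
    {D : Set ((Fin m → ℝ) × ℝ)} (hl : ∀ ι, ℓ ι < 0) (hF : CMap D (ER j univ) F)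
    (hw : ∀ ι, ∀ w ∈ D, w ∈ ZBox (lo ι) (hi ι) (tl ι) (th ι) → ∀ y ∈ (F w).1, binv (y j) ≠ ℓ ι)
    (hN : ∀ w ∈ D, w.2 = N → F w = cEmpty n) {a b : Fin m → ℕ} {t : ℕ}
    (hab : ∀ i, a i ≤ b i ∧ b i ≤ a i + 1) (ht : t + 1 ≤ N) (hD : Box a b t (t + 1) ⊆ D)
    (hcov : ∃ ι, Box a b t (t + 1) ⊆ ZBox (lo ι) (hi ι) (tl ι) (th ι)) :
    GExt (Good j F N (fun ι => ZBox (lo ι) (hi ι) (tl ι) (th ι)) ℓ) (JBox a b t (t + 1))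
      (Box a b t (t + 1)) := by
  classical
  intro c hc hcG
  obtain ⟨p, q, hp, hq, p1, q1, p2, q2, pt, qt⟩ := exists_param t hab
  -- the highest walls over the cell and over its top face
  obtain ⟨ι0, h0, hmax⟩ := Set.exists_max_image
    {ι | Box a b t (t + 1) ⊆ ZBox (lo ι) (hi ι) (tl ι) (th ι)} ℓ (Set.toFinite _) hcov
  have h0 : Box a b t (t + 1) ⊆ ZBox (lo ι0) (hi ι0) (tl ι0) (th ι0) := h0
  have htop : ∃ ℓ' : ℝ, ℓ ι0 ≤ ℓ' ∧ (t + 1 = N → ℓ' = 0) ∧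
      (∀ ι, (∀ v ∈ Box a b t (t + 1), v.2 = t + 1 → v ∈ ZBox (lo ι) (hi ι) (tl ι) (th ι)) →
        ℓ ι ≤ ℓ') ∧
      (∀ v ∈ Box a b t (t + 1), v.2 = t + 1 → ∀ y ∈ (F v).1, binv (y j) ≠ ℓ') ∧
      (∀ v ∈ Box a b t (t + 1), v.2 = t + 1 → ∀ d,
        Good j F N (fun ι => ZBox (lo ι) (hi ι) (tl ι) (th ι)) ℓ v d → Agree j d (F v) ℓ') ∧
      (ℓ' < 0 ∨ (ℓ' = 0 ∧ ∀ v ∈ Box a b t (t + 1), v.2 = t + 1 → F v = cEmpty n)) := by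
    by_cases htN : t + 1 = N
    · have hN' : ((t : ℝ) + 1) = N := by exact_mod_cast htN
      refine ⟨0, (hl _).le, fun _ => rfl, fun ι _ => (hl ι).le, fun v _ _ y _ => (binv_neg _).ne,
        fun v hv e d hd => hd.2.2 (by rw [e, hN']), .inr ⟨rfl, fun v hv e => ?_⟩⟩
      exact hN v (hD hv) (by rw [e, hN'])
    · obtain ⟨ι1, h1, hmax1⟩ := Set.exists_max_image
        {ι | ∀ v ∈ Box a b t (t + 1), v.2 = t + 1 → v ∈ ZBox (lo ι) (hi ι) (tl ι) (th ι)} ℓ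
        (Set.toFinite _) ⟨ι0, fun v hv _ => h0 hv⟩
      exact ⟨ℓ ι1, hmax1 ι0 fun v hv _ => h0 hv, fun h => absurd h htN, fun ι h => hmax1 ι h,
        fun v hv e => hw ι1 v (hD hv) (h1 v hv e), fun v hv e d hd => hd.2.1 ι1 (h1 v hv e),
        .inl (hl ι1)⟩
  obtain ⟨ℓ', k1, k2, k3, k4, k5, k6⟩ := htop
  have top : ∀ s ∈ Dk ({i // a i < b i} → ℝ), p (s, 1) ∈ Box a b t (t + 1) := fun s hs =>
    p1 _ (mem_dk_prod.2 ⟨hs, by norm_num, le_rfl⟩)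
  have top2 : ∀ s : {i // a i < b i} → ℝ, (p (s, 1)).2 = t + 1 := fun s => by
    rw [pt]; norm_num
  obtain ⟨c', c1, c2, c3, c4⟩ := cell_solve hij (F := fun w => F (p w)) (c := fun w => c (p w))
    (hl ι0) k1 (hF.comp hp.continuousOn fun w h => hD (p1 w h))
    (fun w h => hw ι0 _ (hD (p1 w h)) (h0 (p1 w h)))
    (fun s hs => k4 _ (top s hs) (top2 s))
    (k6.imp_right fun h => ⟨h.1, fun s hs => h.2 _ (top s hs) (top2 s)⟩)
    ⟨hc.comp hp.continuousOn p2, fun w h => (hcG _ (p2 w h)).1⟩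
    (fun w h => (hcG _ (p2 w h)).2.1 ι0 (h0 (p1 w (mem_dk_prod.2 ⟨h.1, h.2.1⟩))))
    (fun s hs => k5 _ (top s (sp_sub hs)) (top2 s) _
      (hcG _ (p2 _ ⟨sp_sub hs, ⟨by norm_num, le_rfl⟩, .inr hs⟩)))
  have hJ : ∀ w ∈ JBox a b t (t + 1), c' (q w) = c w := fun w h => by
    rw [c2 _ (q2 w h)]
    simp only [(q1 w (mem_JBox.1 h).1).2]
  refine ⟨fun w => c' (q w), c1.1.comp hq.continuousOn fun w h => (q1 w h).1, ?_, hJ⟩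
  intro w hwB
  by_cases hwJ : w ∈ JBox a b t (t + 1)
  · simp only [hJ w hwJ]; exact hcG w hwJ
  have hlt := hwB.2.2
  push_cast at hlt
  refine ⟨c1.2 _ (q1 w hwB).1, ?_⟩
  rcases lt_or_eq_of_le hlt with hlt | heq
  · have hA := c3 _ (q1 w hwB).1
    simp only [(q1 w hwB).2] at hA
    refine ⟨fun ι hι => hA.mono (hmax ι fun v hv => ?_), fun e => ?_⟩
    · exact zbox_of_mem hab hwB hwJ hι hv (.inl hlt)
    · have : (t : ℝ) + 1 ≤ N := by exact_mod_cast ht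
      linarith
  · have e1 : q w = ((q w).1, 1) := by
      refine Prod.ext rfl ?_
      rw [qt, heq]; ring
    have hA := c4 (q w).1 (mem_dk_prod.1 (show ((q w).1, (q w).2) ∈ _ from (q1 w hwB).1)).1
    rw [← e1] at hA
    simp only [(q1 w hwB).2] at hA
    refine ⟨fun ι hι => hA.mono (k3 ι fun v hv e => ?_), fun e => ?_⟩
    · exact zbox_of_mem hab hwB hwJ hι hv (.inr (e.trans heq.symm))
    · have : t + 1 = N := by
        have : (t : ℝ) + 1 = N := by rw [← heq, e]
        exact_mod_cast this
      rwa [k2 this] at hA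

/-! ### Families that agree below walls are homotopic -/

section Push

variable {V : Type*} [NormedAddCommGroup V] [NormedSpace ℝ V] {n : ℕ} {I : Type*} [Fintype I]

/-- The total weight of the walls lying below height `y`. -/
def wallSum (φ : I → V → ℝ) (a : I → ℝ) (x : V) (y : ℝ) : ℝ :=
  ∑ ι, φ ι x * (if a ι < y then 1 else 0)

/-- The compressed height to which a point of height `y` is moved when the points above the walls
are pushed upwards by the amount `ψ`. -/
def pushV (φ : I → V → ℝ) (a : I → ℝ) (x : V) (ψ y : ℝ) : ℝ :=
  kap y + (1 - kap y) * (ψ * min 1 (wallSum φ a x y))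

lemma wallSum_nonneg {φ : I → V → ℝ} (h0 : ∀ ι x, 0 ≤ φ ι x) (a : I → ℝ) (x : V) (y : ℝ) :
    0 ≤ wallSum φ a x y :=
  Finset.sum_nonneg fun ι _ => mul_nonneg (h0 ι x) (by split_ifs <;> norm_num)

lemma wallSum_mono {φ : I → V → ℝ} (h0 : ∀ ι x, 0 ≤ φ ι x) (a : I → ℝ) (x : V) {y y' : ℝ}
    (h : y ≤ y') : wallSum φ a x y ≤ wallSum φ a x y' := by
  refine Finset.sum_le_sum fun ι _ => mul_le_mul_of_nonneg_left ?_ (h0 ι x)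
  split_ifs with h1 h2
  · exact le_rfl
  · exact absurd (h1.trans_le h) h2
  · norm_num
  · exact le_rfl

lemma tendsto_wallSum {φ : I → V → ℝ} (hφ : ∀ ι, Continuous (φ ι)) (h0 : ∀ ι x, 0 ≤ φ ι x)
    {a : I → ℝ} {x : V} {y : ℝ} (h : ∀ ι, φ ι x ≠ 0 → y ≠ a ι) :
    Tendsto (fun w : V × ℝ => wallSum φ a w.1 w.2) (𝓝 (x, y)) (𝓝 (wallSum φ a x y)) := by
  refine tendsto_finsetSum _ fun ι _ => ?_
  have hc : Tendsto (fun w : V × ℝ => φ ι w.1) (𝓝 (x, y)) (𝓝 (φ ι x)) :=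
    ((hφ ι).comp continuous_fst).tendsto (x, y)
  by_cases hι : φ ι x = 0
  · rw [hι, zero_mul]
    rw [hι] at hc
    refine squeeze_zero (fun w => mul_nonneg (h0 ι _) (by split_ifs <;> norm_num)) (fun w => ?_) hc
    refine mul_le_of_le_one_right (h0 ι _) (by split_ifs <;> norm_num)
  · refine hc.mul ?_
    have hs : Tendsto (fun w : V × ℝ => w.2) (𝓝 (x, y)) (𝓝 y) := continuous_snd.tendsto (x, y)
    rcases lt_or_gt_of_ne (h ι hι) with hy | hy
    · rw [if_neg (not_lt.2 hy.le)]
      refine tendsto_const_nhds.congr' ?_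
      filter_upwards [hs.eventually (Iio_mem_nhds hy)] with w hw
      rw [if_neg (not_lt.2 (le_of_lt hw))]
    · rw [if_pos hy]
      refine tendsto_const_nhds.congr' ?_
      filter_upwards [hs.eventually (Ioi_mem_nhds hy)] with w hw
      rw [if_pos hw]

lemma one_sub_pushV (φ : I → V → ℝ) (a : I → ℝ) (x : V) (ψ y : ℝ) :
    1 - pushV φ a x ψ y = (1 - kap y) * (1 - ψ * min 1 (wallSum φ a x y)) := by
  unfold pushV; ring

lemma pushAmount_mem {φ : I → V → ℝ} (h0 : ∀ ι x, 0 ≤ φ ι x) (a : I → ℝ) (x : V) {ψ : ℝ}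
    (hψ : ψ ∈ Icc (0 : ℝ) 1) (y : ℝ) : ψ * min 1 (wallSum φ a x y) ∈ Icc (0 : ℝ) 1 := by
  have h1 : 0 ≤ min 1 (wallSum φ a x y) := le_min zero_le_one (wallSum_nonneg h0 a x y)
  exact ⟨mul_nonneg hψ.1 h1, mul_le_one₀ hψ.2 h1 (min_le_left _ _)⟩

lemma pushV_family {j : Fin n} {F : V → ConfSp n} (hF : CMap (Dk V) (ER j univ) F)
    {φ : I → V → ℝ} (hφ : ∀ ι, Continuous (φ ι)) (h0 : ∀ ι x, 0 ≤ φ ι x) {a : I → ℝ}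
    (hw : ∀ ι, ∀ x ∈ Dk V, φ ι x ≠ 0 → ∀ y ∈ (F x).1, y j ≠ a ι) :
    CFam (Dk V) (ER j univ) (fun x ψ => vtr j (pushV φ a x ψ) (F x)) := by
  refine ⟨?_, fun w hw => vtr_mem_ER (hF.2 _ hw.1)⟩
  rintro ⟨x0, ψ0⟩ ⟨hx0, hψ0⟩
  have hk : ∀ y, 0 < 1 - kap y := fun y => by linarith [(abs_lt.1 (abs_kap_lt y)).2]
  have hev : ∀ᶠ z in 𝓝[Dk V ×ˢ Icc (0 : ℝ) 1] (x0, ψ0), z ∈ Dk V ×ˢ Icc (0 : ℝ) 1 :=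
    eventually_mem_nhdsWithin
  refine tendsto_vtr (Φ := fun z : V × ℝ => F z.1) (v := fun z => pushV φ a z.1 z.2)
    (v0 := pushV φ a x0 ψ0) ?_ ?_ ?_ ?_
  · exact (hF.1.comp continuousOn_fst fun z hz => hz.1) (x0, ψ0) ⟨hx0, hψ0⟩
  · intro p hp
    have hle : 𝓝[Dk V ×ˢ Icc (0 : ℝ) 1] (x0, ψ0) ×ˢ 𝓝 (p j) ≤ 𝓝 ((x0, ψ0), p j) := by
      rw [nhds_prod_eq]; exact Filter.prod_mono nhdsWithin_le_nhds le_rfl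
    refine Tendsto.mono_left ?_ hle
    have c1 : Tendsto (fun w : (V × ℝ) × ℝ => kap w.2) (𝓝 ((x0, ψ0), p j)) (𝓝 (kap (p j))) :=
      (continuous_kap.comp continuous_snd).tendsto _
    have c2 : Tendsto (fun w : (V × ℝ) × ℝ => w.1.2) (𝓝 ((x0, ψ0), p j)) (𝓝 ψ0) :=
      (continuous_snd.comp continuous_fst).tendsto ((x0, ψ0), p j)
    have c3 : Tendsto (fun w : (V × ℝ) × ℝ => (w.1.1, w.2)) (𝓝 ((x0, ψ0), p j))
        (𝓝 (x0, p j)) := by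
      have : Continuous (fun w : (V × ℝ) × ℝ => (w.1.1, w.2)) := by fun_prop
      exact this.tendsto ((x0, ψ0), p j)
    have c4 := (tendsto_wallSum hφ h0 fun ι hι => hw ι x0 hx0 hι p hp).comp c3
    exact c1.add ((tendsto_const_nhds.sub c1).mul (c2.mul (tendsto_const_nhds.min c4)))
  · intro δ hδ
    obtain ⟨M, hM1, hM2⟩ := exists_kap_gt hδ
    refine ⟨|M| + ∑ ι, |a ι|, ?_⟩
    filter_upwards [hev] with z hz x hx hR
    have hs := pushAmount_mem h0 a z.1 hz.2 (x j)
    have hsum : 0 ≤ ∑ ι, |a ι| := Finset.sum_nonneg fun ι _ => abs_nonneg _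
    rcases le_total 0 (x j) with h | h
    · rw [abs_of_nonneg h] at hR
      have : kap M < kap (x j) := kap_strictMono (by linarith [le_abs_self M])
      refine lt_of_lt_of_le ?_ (le_abs_self _)
      have h2 : 0 ≤ (1 - kap (x j)) * (z.2 * min 1 (wallSum φ a z.1 (x j))) :=
        mul_nonneg (hk _).le hs.1
      unfold pushV; linarith
    · rw [abs_of_nonpos h] at hR
      have : kap (x j) < kap (-M) := kap_strictMono (by linarith [le_abs_self M])
      have hz0 : wallSum φ a z.1 (x j) = 0 := by
        refine Finset.sum_eq_zero fun ι _ => ?_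
        have := Finset.single_le_sum (f := fun ι => |a ι|) (fun ι _ => abs_nonneg (a ι))
          (Finset.mem_univ ι)
        rw [if_neg (by linarith [neg_abs_le (a ι), abs_nonneg M]), mul_zero]
      refine lt_of_lt_of_le ?_ (neg_le_abs _)
      unfold pushV
      rw [hz0, min_eq_right zero_le_one]
      linarith
  · -- `1 - pushV` is strictly decreasing as long as it is positive
    have key : ∀ y y' : ℝ, y < y' → |pushV φ a x0 ψ0 y| < 1 →
        pushV φ a x0 ψ0 y ≠ pushV φ a x0 ψ0 y' := by
      intro y y' h h1 e
      have e1 := one_sub_pushV φ a x0 ψ0 y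
      have e2 := one_sub_pushV φ a x0 ψ0 y'
      have hpos : 0 < 1 - pushV φ a x0 ψ0 y := by linarith [(abs_lt.1 h1).2]
      rw [e1] at hpos
      have hA : 0 < 1 - ψ0 * min 1 (wallSum φ a x0 y) := pos_of_mul_pos_right hpos (hk y).le
      have hB : ψ0 * min 1 (wallSum φ a x0 y) ≤ ψ0 * min 1 (wallSum φ a x0 y') :=
        mul_le_mul_of_nonneg_left (min_le_min le_rfl (wallSum_mono h0 a x0 h.le)) hψ0.1
      have hC := kap_strictMono h
      have : (1 - kap y') * (1 - ψ0 * min 1 (wallSum φ a x0 y')) <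
          (1 - kap y) * (1 - ψ0 * min 1 (wallSum φ a x0 y)) := by
        have u1 : (1 - kap y') * (1 - ψ0 * min 1 (wallSum φ a x0 y')) ≤
            (1 - kap y') * (1 - ψ0 * min 1 (wallSum φ a x0 y)) :=
          mul_le_mul_of_nonneg_left (by linarith) (hk y').le
        have u2 : (1 - kap y') * (1 - ψ0 * min 1 (wallSum φ a x0 y)) <
            (1 - kap y) * (1 - ψ0 * min 1 (wallSum φ a x0 y)) :=
          mul_lt_mul_of_pos_right (by linarith) hA
        linarith
      rw [← e1, ← e2, e] at this
      exact lt_irrefl _ this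
    intro p _ p' _ h1 h2 e
    by_contra hne
    rcases lt_or_gt_of_ne hne with h | h
    · exact key _ _ h h1 e
    · exact key _ _ h h2 e.symm

/-- Two families that agree on the sphere, and that agree below the walls `a ι` wherever
`φ ι ≠ 0`, are homotopic relative to the sphere: pushing everything above the walls off to
infinity makes them equal. -/
theorem push_hrel {j : Fin n} {F F' : V → ConfSp n} (hF : CMap (Dk V) (ER j univ) F)
    (hF' : CMap (Dk V) (ER j univ) F') {φ : I → V → ℝ} (hφ : ∀ ι, Continuous (φ ι))
    (h0 : ∀ ι x, 0 ≤ φ ι x) (hsum : ∀ x ∈ Dk V, 1 ≤ ∑ ι, φ ι x) {a : I → ℝ}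
    (hw : ∀ ι, ∀ x ∈ Dk V, φ ι x ≠ 0 → ∀ y ∈ (F x).1, y j ≠ a ι)
    (hag : ∀ ι, ∀ x ∈ Dk V, φ ι x ≠ 0 → ∀ y : Euc n, y j ≤ a ι → (y ∈ (F x).1 ↔ y ∈ (F' x).1))
    (hS : ∀ x ∈ Sp V, F x = F' x) : HRel (ER j univ) F F' := by
  have hw' : ∀ ι, ∀ x ∈ Dk V, φ ι x ≠ 0 → ∀ y ∈ (F' x).1, y j ≠ a ι := fun ι x hx hι y hy e =>
    hw ι x hx hι y ((hag ι x hx hι y e.le).2 hy) e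
  have b1 := pushV_family hF hφ h0 hw
  have b2 := pushV_family hF' hφ h0 hw'
  have heq : ∀ x ∈ Dk V, vtr j (pushV φ a x 1) (F' x) = vtr j (pushV φ a x 1) (F x) := by
    intro x hx
    have key : ∀ y : Euc n, |pushV φ a x 1 (y j)| < 1 → (y ∈ (F x).1 ↔ y ∈ (F' x).1) := by
      intro y hy
      have h1 : wallSum φ a x (y j) < 1 := by
        by_contra! h
        have := one_sub_pushV φ a x 1 (y j)
        rw [min_eq_left h] at this
        linarith [(abs_lt.1 hy).2]
      have : ∃ ι, φ ι x ≠ 0 ∧ y j ≤ a ι := by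
        by_contra! h
        refine absurd h1 (not_lt.2 ((hsum x hx).trans (Finset.sum_le_sum fun ι _ => ?_)))
        by_cases hι : φ ι x = 0
        · simp [hι]
        · rw [if_pos (h ι hι), mul_one]
      obtain ⟨ι, hι, hy'⟩ := this
      exact hag ι x hx hι y hy'
    apply conf_ext; intro w
    simp only [mem_vtr]
    constructor
    · rintro ⟨y, h1, h2, h3⟩; exact ⟨y, (key y h2).2 h1, h2, h3⟩
    · rintro ⟨y, h1, h2, h3⟩; exact ⟨y, (key y h2).1 h1, h2, h3⟩
  have := cyl b1 b2 (fun x hx ψ _ => by rw [hS x hx])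
    ((HRel.refl (b1.at (by simp))).congr (fun x _ => rfl) heq)
  refine this.congr (fun x _ => ?_) (fun x _ => ?_)
  · exact (vtr_kap j _ fun y _ => by simp [pushV]).symm
  · exact (vtr_kap j _ fun y _ => by simp [pushV]).symm

end Push

/-! ### Lifting a walled family -/

/-- By compactness, the local walls work on balls of a uniform radius. -/
lemma Walled.uniform {α : Type*} [PseudoMetricSpace α] {n : ℕ} {j : Fin n} {A : Set α}
    {F : α → ConfSp n} (hA : IsCompact A) (h : Walled j A F) :
    ∃ δ > 0, ∀ x ∈ A, ∃ a : ℝ, ∀ z ∈ A, dist z x < δ → ∀ y ∈ (F z).1, y j ≠ a := by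
  have h' : ∀ z0 : A, ∃ (a : ℝ) (U : Set α), IsOpen U ∧ z0.1 ∈ U ∧
      ∀ z ∈ U, z ∈ A → ∀ y ∈ (F z).1, y j ≠ a := by
    rintro ⟨z0, hz0⟩
    obtain ⟨a, ha⟩ := h z0 hz0
    obtain ⟨U, U1, U2, U3⟩ := mem_nhdsWithin.1 ha
    exact ⟨a, U, U1, U2, fun z hz hzA => U3 ⟨hz, hzA⟩⟩
  choose a U U1 U2 U3 using h'
  obtain ⟨δ, hδ, hL⟩ := lebesgue_number_lemma_of_metric hA U1
    fun z hz => mem_iUnion.2 ⟨⟨z, hz⟩, U2 ⟨z, hz⟩⟩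
  refine ⟨δ, hδ, fun x hx => ?_⟩
  obtain ⟨i, hi⟩ := hL x hx
  exact ⟨a i, fun z hz hd => U3 i z (hi hd) hz⟩

/-- The main lifting step: a walled family `b` that is empty at the end of the time interval, and
over the bottom and the sides is given by the sweeps at time `1` of `c0`, is up to homotopy given by
the sweeps at time `1` of an extension of `c0` whose final slice has heights in `(0,1)`. -/
theorem walled_lift {m n : ℕ} {i j : Fin n} (hij : i < j) {b : (Fin m → ℝ) × ℝ → ConfSp n}
    (hb : CMap (Dk ((Fin m → ℝ) × ℝ)) (ER j univ) b) (hwall : Walled j (Dk ((Fin m → ℝ) × ℝ)) b)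
    (htop : ∀ s ∈ Dk (Fin m → ℝ), b (s, 1) = cEmpty n) {c0 : (Fin m → ℝ) × ℝ → ConfSp n}
    (hc0 : CMap (Jset (Fin m → ℝ)) (ER j (Iio 1)) c0)
    (hQ : ∀ w ∈ Jset (Fin m → ℝ), b w = Qc j (c0 w) 1)
    (h1 : ∀ s ∈ Sp (Fin m → ℝ), c0 (s, 1) ∈ ER j (Ioo 0 1)) :
    ∃ c' : (Fin m → ℝ) × ℝ → ConfSp n, CMap (Dk ((Fin m → ℝ) × ℝ)) (ER j (Iio 1)) c' ∧
      (∀ w ∈ Jset (Fin m → ℝ), c' w = c0 w) ∧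
      (∀ s ∈ Dk (Fin m → ℝ), c' (s, 1) ∈ ER j (Ioo 0 1)) ∧
      HRel (ER j univ) (fun w => Qc j (c' w) 1) b := by
  classical
  obtain ⟨δ, hδ, hL⟩ := hwall.uniform (isCompact_closedBall _ _)
  obtain ⟨N, hN⟩ := exists_nat_gt (max 1 (3 / δ))
  have hN1 : (1 : ℝ) < N := (le_max_left _ _).trans_lt hN
  have hN0 : (0 : ℝ) < N := by linarith
  have hNp : 0 < N := by exact_mod_cast hN0
  have hN3 : 3 / (N : ℝ) < δ := by
    rw [div_lt_iff₀ hN0, mul_comm, ← div_lt_iff₀ hδ]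
    exact (le_max_right _ _).trans_lt hN
  -- grid coordinates on the ball, and back
  let ρ : (Fin m → ℝ) × ℝ → (Fin m → ℝ) × ℝ := fun w =>
    (fun i => N * (1 + w.1 i) / 2, N * (1 + w.2) / 2)
  let σ : (Fin m → ℝ) × ℝ → (Fin m → ℝ) × ℝ := fun w =>
    (fun i => 2 * w.1 i / N - 1, 2 * w.2 / N - 1)
  have hρ : Continuous ρ := by fun_prop
  have hσ : Continuous σ := by fun_prop
  have σρ : ∀ w, σ (ρ w) = w := by
    intro w
    refine Prod.ext (funext fun i => ?_) ?_
    · simp only [σ, ρ]; field_simp; ring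
    · simp only [σ, ρ]; field_simp; ring
  have ρσ : ∀ w, ρ (σ w) = w := by
    intro w
    refine Prod.ext (funext fun i => ?_) ?_
    · simp only [σ, ρ]; field_simp; ring
    · simp only [σ, ρ]; field_simp; ring
  let D : Set ((Fin m → ℝ) × ℝ) := Box (fun _ => 0) (fun _ => N) 0 N
  have aux : ∀ x : ℝ, 0 ≤ x → x ≤ N → -1 ≤ 2 * x / N - 1 ∧ 2 * x / N - 1 ≤ 1 := by
    intro x h1 h2
    have h3 : 0 ≤ 2 * x / N := by positivity
    have h4 : 2 * x / N ≤ 2 := by rw [div_le_iff₀ hN0]; linarith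
    constructor <;> linarith
  have aux' : ∀ x : ℝ, -1 ≤ x → x ≤ 1 → 0 ≤ N * (1 + x) / 2 ∧ N * (1 + x) / 2 ≤ N := by
    intro x h1 h2
    constructor
    · have : 0 ≤ N * (1 + x) := mul_nonneg hN0.le (by linarith)
      linarith
    · nlinarith
  have σD : ∀ w ∈ D, σ w ∈ Dk ((Fin m → ℝ) × ℝ) := by
    rintro ⟨s, t⟩ ⟨k1, k2⟩
    refine mem_dk_prod.2 ⟨mem_dk_pi.2 fun i => abs_le.2 ?_, ?_⟩
    · have := k1 i
      push_cast at this
      exact aux _ this.1 this.2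
    · push_cast at k2
      exact aux _ k2.1 k2.2
  have ρD : ∀ w ∈ Dk ((Fin m → ℝ) × ℝ), ρ w ∈ D := by
    rintro ⟨s, t⟩ hw
    obtain ⟨k1, k2⟩ := mem_dk_prod.1 hw
    rw [mem_dk_pi] at k1
    refine ⟨fun i => ?_, ?_⟩
    · push_cast
      exact aux' _ (abs_le.1 (k1 i)).1 (abs_le.1 (k1 i)).2
    · push_cast
      exact aux' _ k2.1 k2.2
  have σJ : ∀ w ∈ JBox (fun _ => 0) (fun _ => N) 0 N, σ w ∈ Jset (Fin m → ℝ) := by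
    rintro ⟨s, t⟩ hw
    obtain ⟨k1, k2⟩ := mem_JBox.1 hw
    have k3 := mem_dk_prod.1 (σD _ k1)
    refine ⟨k3.1, k3.2, ?_⟩
    rcases k2 with k2 | ⟨i, -, k2⟩
    · left
      simp only at k2
      simp [σ, k2]
    · right
      refine mem_sp_pi.2 ⟨mem_dk_pi.1 k3.1, i, ?_⟩
      simp only [σ]
      simp only at k2
      rcases k2 with k2 | k2
      · rw [k2]; norm_num
      · rw [k2, mul_div_assoc, div_self hN0.ne']; norm_num
  have ρJ : ∀ w ∈ Jset (Fin m → ℝ), ρ w ∈ JBox (fun _ => 0) (fun _ => N) 0 N := by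
    rintro ⟨s, t⟩ ⟨k1, k2, k3⟩
    refine mem_JBox.2 ⟨ρD _ (mem_dk_prod.2 ⟨k1, k2⟩), ?_⟩
    rcases k3 with k3 | k3
    · left
      simp only at k3
      simp [ρ, k3]
    · right
      obtain ⟨-, i, k4⟩ := mem_sp_pi.1 k3
      refine ⟨i, hNp, ?_⟩
      simp only [ρ]
      simp only at k4
      rcases (abs_eq zero_le_one).1 k4 with k5 | k5
      · right; rw [k5]; ring
      · left; rw [k5]; simp
  -- the cubes of the cover, their centres and their walls
  let I := (Fin m → Fin N) × Fin N
  let ctr : I → (Fin m → ℝ) × ℝ := fun ι => (fun i => (ι.1 i : ℝ) + 1 / 2, (ι.2 : ℝ) + 1 / 2)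
  let lo : I → Fin m → ℤ := fun ι i => (ι.1 i : ℤ) - 1
  let hi : I → Fin m → ℤ := fun ι i => (ι.1 i : ℤ) + 2
  let tl : I → ℤ := fun ι => (ι.2 : ℤ) - 1
  let th : I → ℤ := fun ι => (ι.2 : ℤ) + 2
  have hfin : ∀ k : Fin N, 0 ≤ (k : ℝ) + 1 / 2 ∧ (k : ℝ) + 1 / 2 ≤ N := by
    intro k
    have : (k : ℝ) + 1 ≤ N := by exact_mod_cast k.2
    exact ⟨by positivity, by linarith⟩
  have hctr : ∀ ι, ctr ι ∈ D := fun ι =>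
    ⟨fun i => by push_cast; exact hfin _, by push_cast; exact hfin _⟩
  have hwa : ∀ ι : I, ∃ a : ℝ, ∀ z ∈ Dk ((Fin m → ℝ) × ℝ), dist z (σ (ctr ι)) < δ →
      ∀ y ∈ (b z).1, y j ≠ a := fun ι => hL _ (σD _ (hctr ι))
  choose a ha using hwa
  have hdist : ∀ ι w, w ∈ ZBox (lo ι) (hi ι) (tl ι) (th ι) → dist (σ w) (σ (ctr ι)) < δ := by
    have h1d : ∀ (x k : ℝ), k - 1 ≤ x → x ≤ k + 2 →
        dist (2 * x / N - 1) (2 * (k + 1 / 2) / N - 1) ≤ 3 / N := by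
      intro x k k1 k2
      have : 2 * x / N - 1 - (2 * (k + 1 / 2) / N - 1) = (2 * x - 2 * k - 1) / N := by
        field_simp; ring
      rw [Real.dist_eq, this, abs_div, abs_of_pos hN0]
      gcongr
      rw [abs_le]; constructor <;> linarith
    intro ι w ⟨k1, k2⟩
    refine lt_of_le_of_lt ?_ hN3
    rw [Prod.dist_eq]
    refine max_le ((dist_pi_le_iff (by positivity)).2 fun i => ?_) ?_
    · have := k1 i
      simp only [lo, hi] at this
      push_cast at this
      exact h1d _ _ this.1 this.2
    · simp only [tl, th] at k2
      push_cast at k2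
      exact h1d _ _ k2.1 k2.2
  have σtop : ∀ w : (Fin m → ℝ) × ℝ, w.2 = N → σ w = ((σ w).1, 1) := by
    intro w e
    refine Prod.ext rfl ?_
    simp only [σ]
    rw [e, mul_div_assoc, div_self hN0.ne']
    norm_num
  have hcell : ∀ (a' b' : Fin m → ℕ) (t : ℕ), (∀ i, a' i ≤ b' i ∧ b' i ≤ a' i + 1 ∧ b' i ≤ N) →
      t + 1 ≤ N → GExt (Good j (fun w => b (σ w)) N (fun ι => ZBox (lo ι) (hi ι) (tl ι) (th ι))
        (fun ι => binv (a ι))) (JBox a' b' t (t + 1)) (Box a' b' t (t + 1)) := by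
    intro a' b' t hab ht
    refine good_cell (D := D) hij (fun ι => binv_neg _) ?_ ?_ ?_ (fun i => ⟨(hab i).1, (hab i).2.1⟩)
      ht ?_ ?_
    · exact hb.comp hσ.continuousOn σD
    · intro ι w hw hz y hy e
      exact ha ι _ (σD w hw) (hdist ι w hz) y hy (binv_strictMono.injective e)
    · intro w hw e
      rw [σtop w e]
      exact htop _ (mem_dk_prod.1 (show ((σ w).1, (σ w).2) ∈ _ from σD w hw)).1
    · rintro w ⟨k1, k2⟩
      refine ⟨fun i => ⟨?_, ?_⟩, ?_, ?_⟩
      · push_cast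
        exact (Nat.cast_nonneg _).trans (k1 i).1
      · exact (k1 i).2.trans (by exact_mod_cast (hab i).2.2)
      · push_cast
        exact (Nat.cast_nonneg _).trans k2.1
      · exact k2.2.trans (by exact_mod_cast ht)
    · refine ⟨(fun i => ⟨min (a' i) (N - 1), by omega⟩, ⟨t, by omega⟩), ?_⟩
      rintro w ⟨k1, k2⟩
      refine ⟨fun i => ?_, ?_⟩
      · obtain ⟨u1, u2, u3⟩ := hab i
        have k3 : ((min (a' i) (N - 1) : ℕ) : ℤ) - 1 ≤ (a' i : ℤ) := by omega
        have k4 : (b' i : ℤ) ≤ ((min (a' i) (N - 1) : ℕ) : ℤ) + 2 := by omega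
        exact ⟨le_trans (by rw [← Int.cast_natCast]; exact Int.cast_le.2 k3) (k1 i).1,
          (k1 i).2.trans (by rw [← Int.cast_natCast]; exact Int.cast_le.2 k4)⟩
      · simp only [tl, th]
        push_cast at k2 ⊢
        exact ⟨by linarith [k2.1], by linarith [k2.2]⟩
  have hext := GExt.box hcell _ (fun _ => 0) (fun _ => N) 0 N (fun _ => ⟨Nat.zero_le _, le_rfl⟩)
    hNp le_rfl le_rfl
  obtain ⟨c, hcc, hcG, hcJ⟩ := hext (fun w => c0 (σ w)) (hc0.1.comp hσ.continuousOn σJ) (by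
    intro w hw
    have hs := σJ w hw
    refine ⟨hc0.2 _ hs, fun ι _ => ?_, fun e => ?_⟩
    · simp only
      rw [hQ _ hs]
      exact agree_Qc (hc0.2 _ hs) (binv_neg _)
    · have hs' := hs
      change Agree j (c0 (σ w)) (b (σ w)) 0
      rw [σtop w e] at hs' ⊢
      have hsp : (σ w).1 ∈ Sp (Fin m → ℝ) := by
        rcases hs'.2.2 with h | h
        · norm_num at h
        · exact h
      intro x hx
      have hb0 : b ((σ w).1, 1) = cEmpty n := htop _ hs'.1
      rw [hb0]
      refine ⟨fun h => absurd ((h1 _ hsp) x h).1.1 (not_lt.2 hx), ?_⟩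
      rintro ⟨y, hy, -⟩
      exact absurd hy (by simp [mem_cEmpty]))
  have hc' : CMap (Dk ((Fin m → ℝ) × ℝ)) (ER j (Iio 1)) (fun w => c (ρ w)) :=
    ⟨hcc.comp hρ.continuousOn ρD, fun w hw => (hcG _ (ρD w hw)).1⟩
  have hctop : ∀ s ∈ Dk (Fin m → ℝ), c (ρ (s, 1)) ∈ ER j (Ioo 0 1) := by
    intro s hs x hx
    have hD : (s, (1 : ℝ)) ∈ Dk ((Fin m → ℝ) × ℝ) := mem_dk_prod.2 ⟨hs, by norm_num⟩
    obtain ⟨g1, -, g3⟩ := hcG _ (ρD _ hD)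
    refine ⟨⟨?_, (g1 x hx).1⟩, (g1 x hx).2⟩
    by_contra hle
    have := (g3 (by simp only [ρ]; ring) x (not_lt.1 hle)).1 hx
    simp only [σρ, htop s hs] at this
    obtain ⟨y, hy, -⟩ := this
    exact absurd hy (by simp [mem_cEmpty])
  have hcQ : ∀ w ∈ Jset (Fin m → ℝ), c (ρ w) = c0 w := by
    intro w hw
    rw [hcJ _ (ρJ w hw), σρ]
  refine ⟨fun w => c (ρ w), hc', hcQ, hctop, ?_⟩
  have hag : ∀ ι, ∀ w ∈ Dk ((Fin m → ℝ) × ℝ), ρ w ∈ ZBox (lo ι) (hi ι) (tl ι) (th ι) →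
      ∀ y : Euc n, y j ≤ a ι → (y ∈ (Qc j (c (ρ w)) 1).1 ↔ y ∈ (b w).1) := by
    intro ι w hw hz y hy
    have := (hcG _ (ρD w hw)).2.1 ι hz
    simp only [σρ] at this
    exact (this.mem_iff (hc'.2 _ hw) hy).symm
  have hz : ∀ ι w, max 0 (3 / 2 - dist (ρ w) (ctr ι)) ≠ 0 →
      ρ w ∈ ZBox (lo ι) (hi ι) (tl ι) (th ι) := by
    intro ι w h
    have hd : dist (ρ w) (ctr ι) < 3 / 2 := by
      by_contra hle
      exact h (max_eq_left (by linarith))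
    rw [Prod.dist_eq, max_lt_iff] at hd
    refine ⟨fun i => ?_, ?_⟩
    · have := (dist_le_pi_dist _ _ i).trans_lt hd.1
      rw [Real.dist_eq, abs_lt] at this
      simp only [lo, hi, ctr] at this ⊢
      push_cast
      exact ⟨by linarith [this.1], by linarith [this.2]⟩
    · have := hd.2
      rw [Real.dist_eq, abs_lt] at this
      simp only [tl, th, ctr] at this ⊢
      push_cast
      exact ⟨by linarith [this.1], by linarith [this.2]⟩
  have hnear : ∀ x : ℝ, 0 ≤ x → x ≤ N → ∃ k : Fin N, dist x ((k : ℝ) + 1 / 2) ≤ 1 / 2 := by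
    intro x h0 hxN
    refine ⟨⟨min ⌊x⌋₊ (N - 1), by omega⟩, ?_⟩
    rw [Real.dist_eq, abs_le]
    have f1 := Nat.floor_le h0
    have f2 := Nat.lt_floor_add_one x
    simp only
    rcases le_total ⌊x⌋₊ (N - 1) with h | h
    · rw [min_eq_left h]
      constructor <;> linarith
    · rw [min_eq_right h]
      have e : ((N - 1 : ℕ) : ℝ) = N - 1 := by push_cast [Nat.cast_sub (show 1 ≤ N from hNp)]; ring
      have : ((N - 1 : ℕ) : ℝ) ≤ ⌊x⌋₊ := by exact_mod_cast h
      rw [e] at this ⊢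
      constructor <;> linarith
  refine push_hrel (I := I) (φ := fun ι w => max 0 (3 / 2 - dist (ρ w) (ctr ι))) (a := a) ?_ hb
    (fun ι => by fun_prop) (fun ι x => le_max_left _ _) ?_ ?_ ?_ ?_
  · refine ⟨fun w hw => ?_, fun w hw => Qc_mem (hc'.2 _ hw) 1⟩
    exact tendsto_Qc (hc'.1 w hw) (.inl tendsto_const_nhds) (Eventually.of_forall fun _ => by simp)
      (eventually_mem_nhdsWithin.mono fun z hz => hc'.2 _ hz) (hc'.2 _ hw)
  · intro w hw
    obtain ⟨k1, k2⟩ := ρD w hw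
    push_cast at k1 k2
    choose p hp using fun i => hnear _ (k1 i).1 (k1 i).2
    obtain ⟨q, hq⟩ := hnear _ k2.1 k2.2
    have hd : dist (ρ w) (ctr (p, q)) ≤ 1 / 2 := by
      rw [Prod.dist_eq]
      exact max_le ((dist_pi_le_iff (by norm_num)).2 hp) hq
    refine le_trans ?_ (Finset.single_le_sum (f := fun ι => max 0 (3 / 2 - dist (ρ w) (ctr ι)))
      (fun ι _ => le_max_left _ _) (Finset.mem_univ (p, q)))
    exact le_trans (by linarith) (le_max_right _ _)
  · intro ι w hw hι y hy e
    have hzz := hz ι w hι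
    have := hdist ι _ hzz
    rw [σρ] at this
    exact ha ι w hw this y ((hag ι w hw hzz y e.le).1 hy) e
  · exact fun ι w hw hι => hag ι w hw (hz ι w hι)
  · rintro ⟨s, t⟩ hw
    have hJ : (s, t) ∈ Jset (Fin m → ℝ) → Qc j (c (ρ (s, t))) 1 = b (s, t) := fun h => by
      rw [hcQ _ h, hQ _ h]
    rcases mem_sp_prod.1 hw with ⟨hs, ht | ht⟩ | ⟨hs, ht⟩
    · subst ht
      exact hJ ⟨hs, by norm_num, .inl rfl⟩
    · subst ht
      rw [htop s hs]
      exact Qc_one (hctop s hs)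
    · exact hJ ⟨sp_sub hs, ht, .inr hs⟩

/-! ### The compression property of the sweep -/

/-- The sweep of the top slice `c (s, 1)` of a family that is empty over the bottom and scales
linearly over the sides is homotopic to the family of the configurations `Qc j (c (s, t)) 1`:
cut `c (s, max t (2θ - 1))` at the fraction `r / max r θ` of the full sweep, `r = (1 + t) / 2`, while `θ`
runs from `1` to `0`. -/
theorem sweep_hrel {V : Type*} [NormedAddCommGroup V] [NormedSpace ℝ V] {n : ℕ} {j : Fin n}
    {c : V × ℝ → ConfSp n} {a : V → ConfSp n} (hc : CMap (Dk (V × ℝ)) (ER j (Iio 1)) c)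
    (hbot : ∀ s ∈ Dk V, c (s, -1) = cEmpty n) (ha : ∀ s ∈ Sp V, a s ∈ ER j (Iio 1))
    (hside : ∀ s ∈ Sp V, ∀ t ∈ Icc (-1 : ℝ) 1, c (s, t) = sc j (a s) ((1 + t) / 2)) :
    HRel (ER j univ) (fun w : V × ℝ => Qc j (c (w.1, 1)) ((1 + w.2) / 2))
      (fun w => Qc j (c w) 1) := by
  let f : (V × ℝ) × ℝ → V × ℝ := fun x => (x.1.1, max x.1.2 (2 * (1 - x.2) - 1))
  let q : (V × ℝ) × ℝ → ℝ := fun x => max ((1 + x.1.2) / 2) (1 - x.2)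
  have hf : Continuous f := by fun_prop
  have hq : Continuous q := by fun_prop
  have hfD : ∀ x ∈ Dk (V × ℝ) ×ˢ Icc (0 : ℝ) 1, f x ∈ Dk (V × ℝ) := by
    rintro ⟨⟨s, t⟩, θ⟩ ⟨h1, h2, h3⟩
    obtain ⟨k1, k2, k3⟩ := mem_dk_prod.1 h1
    simp only at h2 h3
    exact mem_dk_prod.2 ⟨k1, le_max_of_le_left k2, max_le k3 (by linarith)⟩
  have hfq : ∀ x, (1 + (f x).2) / 2 = q x := by
    intro x
    simp only [f, q]
    rcases le_total x.1.2 (2 * (1 - x.2) - 1) with h | h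
    · rw [max_eq_right h, max_eq_right (by linarith)]; ring
    · rw [max_eq_left h, max_eq_left (by linarith)]
  have hq0 : ∀ x ∈ Dk (V × ℝ) ×ˢ Icc (0 : ℝ) 1, 0 ≤ (1 + x.1.2) / 2 := by
    rintro ⟨⟨s, t⟩, θ⟩ ⟨h1, -⟩
    linarith [(mem_dk_prod.1 h1).2.1]
  have hcD : ∀ x ∈ Dk (V × ℝ) ×ˢ Icc (0 : ℝ) 1, c (f x) ∈ ER j (Iio 1) :=
    fun x hx => hc.2 _ (hfD x hx)
  refine ⟨fun w θ => Qc j (c (f (w, θ))) ((1 + w.2) / 2 / q (w, θ)), ⟨?_, ?_⟩, ?_, ?_, ?_⟩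
  · intro x hx
    refine tendsto_Qc (Φ := fun x => c (f x)) (r := fun x => (1 + x.1.2) / 2 / q x)
      ((hc.1.comp hf.continuousOn hfD) x hx) ?_
      (eventually_mem_nhdsWithin.mono fun z hz => ?_)
      (eventually_mem_nhdsWithin.mono hcD) (hcD x hx)
    · by_cases h : q x = 0
      · right
        have e : f x = (x.1.1, -1) := Prod.ext rfl (by linarith [hfq x])
        have hx1 : (x.1.1, x.1.2) ∈ Dk (V × ℝ) := hx.1
        rw [e, hbot _ (mem_dk_prod.1 hx1).1]
      · left
        have : Continuous fun x : (V × ℝ) × ℝ => (1 + x.1.2) / 2 := by fun_prop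
        exact (this.continuousAt.div hq.continuousAt h).continuousWithinAt
    · have h1 := hq0 z hz
      have h2 : (1 + z.1.2) / 2 ≤ q z := le_max_left _ _
      exact ⟨div_nonneg h1 (h1.trans h2), div_le_one_of_le₀ h2 (h1.trans h2)⟩
  · exact fun x hx => Qc_mem (hcD x hx) _
  · rintro ⟨s, t⟩ hw
    obtain ⟨-, k2, k3⟩ := mem_dk_prod.1 hw
    have e1 : f ((s, t), 0) = (s, 1) := Prod.ext rfl (by
      simp only [f]; rw [max_eq_right (by linarith)]; norm_num)
    have e2 : q ((s, t), 0) = 1 := by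
      simp only [q]; rw [max_eq_right (by linarith)]; norm_num
    simp only [e1, e2, div_one]
  · rintro ⟨s, t⟩ hw
    obtain ⟨k1, k2, k3⟩ := mem_dk_prod.1 hw
    have e1 : f ((s, t), 1) = (s, t) := Prod.ext rfl (by
      simp only [f]; rw [max_eq_left (by linarith)])
    have e2 : q ((s, t), 1) = (1 + t) / 2 := by
      simp only [q]; rw [max_eq_left (by linarith)]
    simp only [e1, e2]
    rcases k2.eq_or_lt with rfl | h
    · rw [hbot s k1, Qc_empty, Qc_empty]
    · rw [div_self (by linarith)]
  · rintro ⟨s, t⟩ hw θ hθ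
    rcases mem_sp_prod.1 hw with ⟨hs, ht | ht⟩ | ⟨hs, ht⟩
    · subst ht
      norm_num [Qc_zero]
    · subst ht
      have e1 : f ((s, 1), θ) = (s, 1) := Prod.ext rfl (by
        simp only [f]; rw [max_eq_left (by linarith [hθ.1])])
      have e2 : q ((s, 1), θ) = 1 := by
        simp only [q]; rw [max_eq_left (by linarith [hθ.1])]; norm_num
      simp only [e1, e2, div_one]
    · have hx : ((s, t), θ) ∈ Dk (V × ℝ) ×ˢ Icc (0 : ℝ) 1 := ⟨sp_sub hw, hθ⟩
      have hfx : (s, (f ((s, t), θ)).2) ∈ Dk (V × ℝ) := hfD _ hx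
      have e1 : c (f ((s, t), θ)) = sc j (a s) (q ((s, t), θ)) := by
        rw [← hfq]
        exact hside s hs _ (mem_dk_prod.1 hfx).2
      have e2 : c (s, 1) = a s := by
        rw [hside s hs 1 (by norm_num)]
        norm_num [sc_one]
      have h1 : (1 + t) / 2 ≤ q ((s, t), θ) := le_max_left _ _
      have h0 : 0 ≤ (1 + t) / 2 := hq0 _ hx
      have e3 : q ((s, t), θ) * ((1 + t) / 2 / q ((s, t), θ)) = (1 + t) / 2 := by
        by_cases h : q ((s, t), θ) = 0
        · rw [h, zero_mul]; linarith
        · field_simp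
      simp only [e1, e2]
      rw [Qc_sc j (h0.trans h1) _ (ha s hs), e3]

/-- The sweep has the compression property, if there is a coordinate before the height `j`. Over the
sides of the cylinder the lift of the family is prescribed by `sc`, and over the bottom it is
empty. -/
theorem CP_sweep (m : ℕ) {n : ℕ} {i j : Fin n} (hij : i < j) :
    CP (Fin m → ℝ) (cEmpty n) (ER j (Ioo 0 1)) (ER j univ) (fun c t => Qc j c ((1 + t) / 2)) := by
  refine CP_of_walled j fun a b ha hb hwall hab hbe => ?_
  have hIoo : ER j (Ioo (0 : ℝ) 1) ⊆ ER j (Iio 1) := ER.mono fun _ h => h.2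
  have hsr : Continuous fun w : (Fin m → ℝ) × ℝ => (1 + w.2) / 2 := by fun_prop
  obtain ⟨c0, k1, k2, k3⟩ := CMap.glue (T := ER j (Iio 1))
    (s := Dk (Fin m → ℝ) ×ˢ {(-1 : ℝ)}) (t := Sp (Fin m → ℝ) ×ˢ Icc (-1 : ℝ) 1)
    (f := fun _ => cEmpty n) (g := fun w => sc j (a w.1) ((1 + w.2) / 2))
    (isClosed_closedBall.prod isClosed_singleton) (isClosed_sphere.prod isClosed_Icc)
    ⟨continuousOn_const, fun _ _ => cEmpty_mem_ER j _⟩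
    ⟨fun w hw => tendsto_sc (Φ := fun w : (Fin m → ℝ) × ℝ => a w.1)
        ((ha.1.comp continuousOn_fst fun _ h => h.1) w hw) hsr.continuousWithinAt
        (by linarith [hw.2.1])
        (eventually_mem_nhdsWithin.mono fun z hz => ha.2 _ hz.1) (ha.2 _ hw.1),
      fun w hw => sc_mem (hIoo (ha.2 _ hw.1)) _⟩
    (by
      rintro ⟨s, t⟩ ⟨-, h⟩ -
      have h : t = -1 := h
      subst h
      norm_num [sc_zero])
  have hbot : ∀ s ∈ Dk (Fin m → ℝ), c0 (s, -1) = cEmpty n := fun s hs =>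
    k2 (x := (s, -1)) ⟨hs, mem_singleton _⟩
  have hside : ∀ s ∈ Sp (Fin m → ℝ), ∀ t ∈ Icc (-1 : ℝ) 1, c0 (s, t) = sc j (a s) ((1 + t) / 2) :=
    fun s hs t ht => k3 (x := (s, t)) ⟨hs, ht⟩
  obtain ⟨c, c1, c2, c3, c4⟩ := walled_lift hij hb hwall (fun s hs => (hbe s hs).2) (c0 := c0)
    (k1.mono (by
      rintro ⟨s, t⟩ ⟨h1, h2, h3 | h3⟩
      · exact .inl ⟨h1, h3⟩
      · exact .inr ⟨h3, h2⟩) Subset.rfl) (by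
      rintro ⟨s, t⟩ ⟨h1, h2, h3⟩
      simp only at h1 h2 h3
      rcases h3 with rfl | h3
      · rw [hbot s h1, Qc_empty, (hbe s h1).1]
      · rw [hside s h3 t h2, Qc_sc j (by linarith [h2.1]) _ (hIoo (ha.2 _ h3)), mul_one,
          hab s h3 t h2]) (by
      intro s hs
      rw [hside s hs 1 (by norm_num)]
      norm_num [sc_one]
      exact ha.2 s hs)
  have cside : ∀ s ∈ Sp (Fin m → ℝ), ∀ t ∈ Icc (-1 : ℝ) 1, c (s, t) = sc j (a s) ((1 + t) / 2) :=
    fun s hs t ht => (c2 (s, t) ⟨sp_sub hs, ht, .inr hs⟩).trans (hside s hs t ht)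
  refine ⟨fun s => c (s, 1), ⟨?_, c3⟩, fun s hs => ?_, ?_⟩
  · exact c1.1.comp (f := fun s : Fin m → ℝ => (s, (1 : ℝ))) (by fun_prop) fun s hs =>
      mem_dk_prod.2 ⟨hs, by norm_num⟩
  · simp only
    rw [cside s hs 1 (by norm_num)]
    norm_num [sc_one]
  · exact (sweep_hrel c1 (fun s hs => (c2 (s, -1) ⟨hs, by norm_num, .inl rfl⟩).trans (hbot s hs))
      (fun s hs => hIoo (ha.2 s hs)) cside).trans c4

/-! ### The loop map -/

lemma mem_ER_Ioo_iff {n k : ℕ} (hkn : k < n) {c : ConfSp n} :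
    c ∈ ER (⟨k, hkn⟩ : Fin n) (Ioo 0 1) ↔ c.1 ⊆ BoxRegion n k := by
  constructor
  · intro h x hx i hi
    obtain ⟨h1, h2⟩ := h x hx
    rcases hi.eq_or_lt with e | e
    · have : i = ⟨k, hkn⟩ := Fin.ext e.symm
      rw [this]; exact h1
    · exact h2 i e
  · exact fun h x hx => ⟨h hx _ le_rfl, fun i hi => h hx i (le_of_lt hi)⟩

lemma mem_ER_univ_iff {n k : ℕ} (hkn : k < n) {c : ConfSp n} :
    c ∈ ER (⟨k, hkn⟩ : Fin n) univ ↔ c.1 ⊆ BoxRegion n (k + 1) :=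
  ⟨fun h x hx i hi => (h x hx).2 i hi, fun h _ hx => ⟨mem_univ _, fun i hi => h hx i hi⟩⟩

lemma rawLoop_eq {n k : ℕ} (hkn : k < n) (τ : (Ioo (0 : ℝ) 1) ≃ₜ ℝ) (c : ConfSpk n k)
    (t : unitInterval) : (rawLoop n k hkn τ c t).1 = Lh τ ⟨k, hkn⟩ 0 c.1 (2 * t - 1) := by
  have hc : c.1 ∈ ER (⟨k, hkn⟩ : Fin n) (Ioo 0 1) := (mem_ER_Ioo_iff hkn).2 c.2
  by_cases h : (t : ℝ) ∈ Ioo (0 : ℝ) 1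
  · apply conf_ext
    intro w
    rw [rawLoop, dif_pos h, Lh, mem_vtr]
    have hr : (1 + (2 * (t : ℝ) - 1)) / 2 = t := by ring
    have hA : ∀ y, Av τ t y = kap (y + τ ⟨t, h⟩) := fun y => by rw [Av, dif_pos h]
    have hs : ∀ x : Euc n, setC ⟨k, hkn⟩ x (x ⟨k, hkn⟩ + τ ⟨t, h⟩) =
        x + EuclideanSpace.single (⟨k, hkn⟩ : Fin n) (τ ⟨t, h⟩) := by
      intro x
      apply euc_ext
      intro i
      by_cases hi : i = ⟨k, hkn⟩
      · subst hi; simp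
      · rw [setC_ne hi]; simp [hi]
    simp only [hr, hA, sub_zero, one_mul, zero_mul, add_zero, kinv_kap, abs_kap_lt, true_and, hs]
    rfl
  · rw [rawLoop, dif_neg h]
    have ht : (t : ℝ) = 0 ∨ (t : ℝ) = 1 := by
      rcases t.2.1.eq_or_lt with e | e
      · exact .inl e.symm
      · exact .inr (le_antisymm t.2.2 (not_lt.1 fun h' => h ⟨e, h'⟩))
    rcases ht with e | e
    · rw [e, show (2 * (0 : ℝ) - 1) = -1 by norm_num, (Lh_ends τ _ 0 hc).1]; rfl
    · rw [e, show (2 * (1 : ℝ) - 1) = 1 by norm_num, (Lh_ends τ _ 0 hc).2]; rfl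

lemma continuous_rawLoop {n k : ℕ} (hkn : k < n) {τ : (Ioo (0 : ℝ) 1) ≃ₜ ℝ} (hτ : StrictMono τ) :
    Continuous fun w : ConfSpk n k × unitInterval => rawLoop n k hkn τ w.1 w.2 := by
  refine continuous_induced_rng.2 ?_
  have h := (continuous_Lh hτ (⟨k, hkn⟩ : Fin n)).1
  have hf : Continuous fun w : ConfSpk n k × unitInterval =>
      ((0 : ℝ), (w.1.1 : ConfSp n), 2 * (w.2 : ℝ) - 1) := by
    have : Continuous fun c : ConfSpk n k => (c.1 : ConfSp n) := continuous_subtype_val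
    fun_prop
  refine (h.comp_continuous hf fun w => ?_).congr fun w => (rawLoop_eq hkn τ w.1 w.2).symm
  exact ⟨by simp, (mem_ER_Ioo_iff hkn).2 w.1.2,
    by linarith [w.2.2.1], by linarith [w.2.2.2]⟩

/-- The continuous map `c ↦ λ_c`. -/
def loopMap {n k : ℕ} (hkn : k < n) {τ : (Ioo (0 : ℝ) 1) ≃ₜ ℝ} (hτ : StrictMono τ) :
    C(ConfSpk n k, Path (emptyConf n (k + 1)) (emptyConf n (k + 1))) where
  toFun c :=
    { toFun := rawLoop n k hkn τ c
      continuous_toFun := (continuous_rawLoop hkn hτ).comp (by fun_prop : Continuous fun t => (c, t))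
      source' := by simp [rawLoop]
      target' := by simp [rawLoop] }
  continuous_toFun := Path.continuous_uncurry_iff.1 (continuous_rawLoop hkn hτ)

/-- The compression property of the loop map, obtained from that of the sweep by deforming `Lh` and
passing to adjoints. -/
theorem CPa_loopMap (m : ℕ) {n k : ℕ} (hk : 0 < k) (hkn : k < n) {τ : (Ioo (0 : ℝ) 1) ≃ₜ ℝ}
    (hτ : StrictMono τ) : CPa m (loopMap hkn hτ) := by
  have hij : (⟨0, by omega⟩ : Fin n) < ⟨k, hkn⟩ := hk
  have hCP : CP (Fin m → ℝ) (cEmpty n) (ER (⟨k, hkn⟩ : Fin n) (Ioo 0 1)) (ER ⟨k, hkn⟩ univ)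
      (Lh τ ⟨k, hkn⟩ 0) := by
    refine CP.of_homotopy (continuous_Lh hτ _) (fun h _ c hc => Lh_ends τ _ h hc)
      (cEmpty_mem_ER _ _) ?_
    rw [Lh_one]
    exact CP_sweep m hij
  intro a b ha hb hab
  have hp : ∀ t ∈ Icc (-1 : ℝ) 1, (1 + t) / 2 ∈ unitInterval := fun t ht =>
    ⟨by linarith [ht.1], by linarith [ht.2]⟩
  have val : ∀ l, Continuous fun c : ConfSpk n l => (c.1 : ConfSp n) := fun l =>
    continuous_subtype_val
  obtain ⟨g, g1, g2, H, ⟨H1, H1'⟩, H2, H3, H4⟩ := hCP (fun s => (a s).1)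
    (fun w => (b w.1 (projIcc 0 1 zero_le_one ((1 + w.2) / 2))).1)
    ⟨(val _).comp_continuousOn ha, fun s _ => (mem_ER_Ioo_iff hkn).2 (a s).2⟩
    ⟨(val _).comp_continuousOn (ContinuousOn.eval (hb.comp continuousOn_fst fun w hw =>
        (mem_dk_prod.1 (show (w.1, w.2) ∈ _ from hw)).1)
        (continuous_projIcc.comp (by fun_prop)).continuousOn),
      fun w _ => (mem_ER_univ_iff hkn).2
        (b w.1 (projIcc 0 1 zero_le_one ((1 + w.2) / 2))).2⟩
    (by
      intro s hs t ht
      simp only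
      rw [hab s hs, projIcc_of_mem _ (hp t ht)]
      refine (rawLoop_eq hkn τ (a s) _).trans ?_
      congr 1
      simp only; ring)
    (by
      intro s _
      constructor
      · norm_num; rfl
      · norm_num; rfl)
  have hI : ∀ t : unitInterval, 2 * (t : ℝ) - 1 ∈ Icc (-1 : ℝ) 1 := fun t =>
    ⟨by linarith [t.2.1], by linarith [t.2.2]⟩
  have hW : ∀ (w : ↥(Dk (Fin m → ℝ) ×ˢ Icc (0 : ℝ) 1)) (t : unitInterval),
      ((w.1.1, 2 * (t : ℝ) - 1), w.1.2) ∈ Dk ((Fin m → ℝ) × ℝ) ×ˢ Icc (0 : ℝ) 1 :=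
    fun w t => ⟨mem_dk_prod.2 ⟨w.2.1, hI t⟩, w.2.2⟩
  -- the homotopy of families of loops adjoint to `H`
  let f : ↥(Dk (Fin m → ℝ) ×ˢ Icc (0 : ℝ) 1) × unitInterval → ConfSpk n (k + 1) := fun w =>
    ⟨H (w.1.1.1, 2 * (w.2 : ℝ) - 1) w.1.1.2, (mem_ER_univ_iff hkn).1 (H1' _ (hW w.1 w.2))⟩
  have hf : Continuous f := continuous_induced_rng.2
    (H1.comp_continuous (f := fun w : ↥(Dk (Fin m → ℝ) ×ˢ Icc (0 : ℝ) 1) × unitInterval =>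
      ((w.1.1.1, 2 * (w.2 : ℝ) - 1), w.1.1.2)) (by fun_prop) fun w => hW w.1 w.2)
  have hends : ∀ w : ↥(Dk (Fin m → ℝ) ×ˢ Icc (0 : ℝ) 1),
      f (w, 0) = emptyConf n (k + 1) ∧ f (w, 1) = emptyConf n (k + 1) := by
    intro w
    have hL := Lh_ends τ ⟨k, hkn⟩ 0 (g1.2 _ w.2.1)
    constructor
    · refine Subtype.ext ?_
      refine Eq.trans ?_ ((H4 (w.1.1, -1) (mem_sp_prod.2 (.inl ⟨w.2.1, .inl rfl⟩)) _ w.2.2).trans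
        hL.1)
      simp [f]
    · refine Subtype.ext ?_
      refine Eq.trans ?_ ((H4 (w.1.1, 1) (mem_sp_prod.2 (.inl ⟨w.2.1, .inr rfl⟩)) _ w.2.2).trans
        hL.2)
      simp only [f]; norm_num
  let K : ↥(Dk (Fin m → ℝ) ×ˢ Icc (0 : ℝ) 1) → Path (emptyConf n (k + 1)) (emptyConf n (k + 1)) :=
    fun w =>
      { toFun := fun t => f (w, t)
        continuous_toFun := hf.comp (by fun_prop)
        source' := (hends w).1
        target' := (hends w).2 }
  have hK : Continuous K := Path.continuous_uncurry_iff.1 hf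
  have hKval : ∀ w t, ((K w) t).1 = H (w.1.1, 2 * (t : ℝ) - 1) w.1.2 := fun _ _ => rfl
  classical
  let g' : (Fin m → ℝ) → ConfSpk n k := fun s =>
    if h : s ∈ Dk (Fin m → ℝ) then ⟨g s, (mem_ER_Ioo_iff hkn).1 (g1.2 s h)⟩ else emptyConf n k
  have hg' : ∀ s ∈ Dk (Fin m → ℝ), (g' s).1 = g s := fun s hs =>
    congrArg Subtype.val (dif_pos hs)
  let K' : (Fin m → ℝ) → ℝ → Path (emptyConf n (k + 1)) (emptyConf n (k + 1)) := fun s θ =>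
    if h : (s, θ) ∈ Dk (Fin m → ℝ) ×ˢ Icc (0 : ℝ) 1 then K ⟨(s, θ), h⟩ else Path.refl _
  have hK' : ∀ s θ (h : (s, θ) ∈ Dk (Fin m → ℝ) ×ˢ Icc (0 : ℝ) 1), K' s θ = K ⟨(s, θ), h⟩ :=
    fun s θ h => dif_pos h
  have hloop : ∀ s ∈ Dk (Fin m → ℝ), ∀ t, ((loopMap hkn hτ (g' s)) t).1 =
      Lh τ ⟨k, hkn⟩ 0 (g s) (2 * t - 1) := fun s hs t => by
    rw [← hg' s hs]; exact rawLoop_eq hkn τ (g' s) t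
  refine ⟨g', ?_, fun s hs => Subtype.ext ((hg' s (sp_sub hs)).trans (g2 s hs)), K',
    ⟨?_, fun _ _ => mem_univ _⟩, ?_, ?_, ?_⟩
  · rw [continuousOn_iff_continuous_domRestrict]
    refine continuous_induced_rng.2 ?_
    refine (continuousOn_iff_continuous_domRestrict.1 g1.1).congr fun s => ?_
    exact (hg' s.1 s.2).symm
  · rw [continuousOn_iff_continuous_domRestrict]
    exact hK.congr fun w => (hK' w.1.1 w.1.2 w.2).symm
  · intro s hs
    rw [hK' s 0 ⟨hs, by simp⟩]
    refine Path.ext (funext fun t => Subtype.ext ?_)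
    rw [hKval, hloop s hs]
    exact H2 _ (mem_dk_prod.2 ⟨hs, hI t⟩)
  · intro s hs
    rw [hK' s 1 ⟨hs, by simp⟩]
    refine Path.ext (funext fun t => Subtype.ext ?_)
    rw [hKval]
    refine (H3 _ (mem_dk_prod.2 ⟨hs, hI t⟩)).trans ?_
    have e : (1 + (2 * (t : ℝ) - 1)) / 2 = t := by ring
    simp only [e, projIcc_val]
  · intro s hs θ hθ
    rw [hK' s θ ⟨sp_sub hs, hθ⟩]
    refine Path.ext (funext fun t => Subtype.ext ?_)
    rw [hKval, hloop s (sp_sub hs)]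
    exact H4 _ (mem_sp_prod.2 (.inr ⟨hs, hI t⟩)) θ hθ

/-- For `0 < k < n` and an increasing homeomorphism `τ : (0,1) → ℝ`, each `λ_c` is a
continuous loop in `𝒞ⁿ'ᵏ⁺¹` based at the empty configuration, the assignment `c ↦ λ_c`
is a continuous map from `𝒞ⁿ'ᵏ` to the loop space `Ω𝒞ⁿ'ᵏ⁺¹`, and this map is a weak
homotopy equivalence, inducing isomorphisms on all homotopy groups. -/
theorem statement3 (n k : ℕ) (hk : 0 < k) (hkn : k < n)
    (τ : (Set.Ioo (0 : ℝ) 1) ≃ₜ ℝ) (hτ : StrictMono ⇑τ) :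
    ∃ Λ : C(ConfSpk n k, Path (emptyConf n (k + 1)) (emptyConf n (k + 1))),
      (∀ (c : ConfSpk n k) (t : unitInterval), (Λ c) t = rawLoop n k hkn τ c t) ∧
      Function.Bijective (Pi0Map Λ) ∧
      ∀ (i : ℕ) (c : ConfSpk n k),
        Function.Bijective (HomotopyGroupMap (Fin i) Λ c) := by
  have : Nonempty (ConfSpk n k) := ⟨emptyConf n k⟩
  exact ⟨loopMap hkn hτ, fun _ _ => rfl,
    (CPa_loopMap 0 hk hkn hτ).pi0_bijective (CPa_loopMap 1 hk hkn hτ),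
    fun i c => (CPa_loopMap i hk hkn hτ).homotopyGroup_bijective (CPa_loopMap (i + 1) hk hkn hτ) c⟩
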